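/- arXiv:math-ph/0001013 — 5 statements merged into one kernel-verified Lean document; each statement's English description precedes it below -/
import Mathlib

section
/- Let q₁, q₂ : [0,1] → ℝ be continuous. For i = 1,2 let μ⁽ⁱ⁾ : ℕ → ℝ be a strictly increasing sequence enumerating all eigenvalues of the Dirichlet–Neumann problem for qᵢ (i.e., each μ⁽ⁱ⁾ⱼ is an eigenvalue and every eigenvalue of the problem for qᵢ occurs in the sequence), let ψ⁽ⁱ⁾ⱼ be a normalized eigenfunction for μ⁽ⁱ⁾ⱼ, and suppose there is a constant C with |μ⁽ⁱ⁾ⱼ − π²(j + 1/2)²| ≤ C for all j ∈ ℕ and i = 1,2. If for every real λ > 0 such that λ² + μ⁽ⁱ⁾ⱼ ≠ 0 for all j and i one has ∑_{j=0}^∞ ψ⁽¹⁾ⱼ(1)²/(λ² + μ⁽¹⁾ⱼ) = ∑_{j=0}^∞ ψ⁽²⁾ⱼ(1)²/(λ² + μ⁽²⁾ⱼ), then q₁(z) = q₂(z) for all z ∈ [0,1]. -/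
open MeasureTheory Real

/-- `ψ` is an eigenfunction of the Dirichlet–Neumann problem
`ψ'' + (μ + q) ψ = 0` on `[0,1]`, `ψ(0) = 0`, `ψ'(1) = 0`, for the potential `q`
and the eigenvalue `μ`: it is twice continuously differentiable on `[0,1]`,
satisfies the equation and the boundary conditions, and is not identically zero. -/
def IsDNEigenfun (q : ℝ → ℝ) (μ : ℝ) (ψ : ℝ → ℝ) : Prop :=
  ∃ ψ' ψ'' : ℝ → ℝ,
    (∀ z ∈ Set.Icc (0:ℝ) 1, HasDerivAt ψ (ψ' z) z) ∧
    (∀ z ∈ Set.Icc (0:ℝ) 1, HasDerivAt ψ' (ψ'' z) z) ∧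
    ContinuousOn ψ'' (Set.Icc (0:ℝ) 1) ∧
    (∀ z ∈ Set.Icc (0:ℝ) 1, ψ'' z + (μ + q z) * ψ z = 0) ∧
    ψ 0 = 0 ∧ ψ' 1 = 0 ∧ (∃ z ∈ Set.Icc (0:ℝ) 1, ψ z ≠ 0)

/-- `μ` is an eigenvalue of the Dirichlet–Neumann problem for `q`. -/
def IsDNEigenvalue (q : ℝ → ℝ) (μ : ℝ) : Prop :=
  ∃ ψ : ℝ → ℝ, IsDNEigenfun q μ ψ

/-- `ψ` is normalized in `L²(0,1)`. -/
def DNNormalized (ψ : ℝ → ℝ) : Prop :=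
  ∫ z in (0:ℝ)..1, (ψ z) ^ 2 = 1

namespace DN

/-- complex continuous functions on `[0,1]` -/
abbrev CI := C(Set.Icc (0:ℝ) 1, ℂ)

/-- continuous extension to the line -/
noncomputable def ext (f : CI) : ℝ → ℂ := Set.IccExtend (zero_le_one (α := ℝ)) f

lemma ext_cont (f : CI) : Continuous (ext f) := f.continuous.Icc_extend'

lemma ext_of_mem (f : CI) {x : ℝ} (hx : x ∈ Set.Icc (0:ℝ) 1) : ext f x = f ⟨x, hx⟩ :=
  Set.IccExtend_of_mem _ _ hx

lemma ext_norm_le (f : CI) (x : ℝ) : ‖ext f x‖ ≤ ‖f‖ := f.norm_coe_le_norm _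

lemma ext_int (f : CI) (a b : ℝ) : IntervalIntegrable (ext f) volume a b :=
  (ext_cont f).intervalIntegrable a b

/-- integration from `0` -/
noncomputable def Jlin : CI →ₗ[ℂ] CI where
  toFun f := ⟨fun x => ∫ t in (0:ℝ)..x, ext f t,
    (intervalIntegral.continuous_primitive (fun a b => ext_int f a b) 0).comp
      continuous_subtype_val⟩
  map_add' f g := by
    ext x
    simp only [ContinuousMap.coe_mk, ContinuousMap.add_apply]
    rw [← intervalIntegral.integral_add (ext_int f _ _) (ext_int g _ _)]
    rfl
  map_smul' c f := by
    ext x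
    simp only [ContinuousMap.coe_mk, ContinuousMap.smul_apply, RingHom.id_apply]
    rw [← intervalIntegral.integral_smul]
    rfl

lemma Jlin_bound (f : CI) (n : ℕ) (c : ℝ)
    (h : ∀ x : Set.Icc (0:ℝ) 1, ‖f x‖ ≤ c * ((x:ℝ) ^ n / n.factorial)) (x : Set.Icc (0:ℝ) 1) :
    ‖Jlin f x‖ ≤ c * ((x:ℝ) ^ (n+1) / (n+1).factorial) := by
  have h1 : ‖∫ t in (0:ℝ)..x, ext f t‖ ≤ ∫ t in (0:ℝ)..x, c * (t ^ n / n.factorial) := by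
    apply intervalIntegral.norm_integral_le_of_norm_le x.2.1
    · refine Filter.Eventually.of_forall fun t ht => ?_
      have ht' : t ∈ Set.Icc (0:ℝ) 1 := ⟨ht.1.le, ht.2.trans x.2.2⟩
      rw [ext_of_mem f ht']
      exact h ⟨t, ht'⟩
    · exact (by fun_prop : Continuous fun t : ℝ => c * (t ^ n / n.factorial)).intervalIntegrable _ _
  refine h1.trans (le_of_eq ?_)
  rw [intervalIntegral.integral_const_mul, intervalIntegral.integral_div, integral_pow]
  rw [Nat.factorial_succ]
  have : (n.factorial : ℝ) ≠ 0 := by positivity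
  push_cast
  field_simp
  simp

noncomputable def J : CI →L[ℂ] CI := Jlin.mkContinuous 1 (fun f => by
  rw [ContinuousMap.norm_le _ (by positivity)]
  intro x
  have := Jlin_bound f 0 ‖f‖ (fun x => by simpa using f.norm_coe_le_norm x) x
  refine this.trans ?_
  have h2 := x.2.2
  have := norm_nonneg f
  simp
  nlinarith)

lemma J_apply (f : CI) (x : Set.Icc (0:ℝ) 1) : J f x = ∫ t in (0:ℝ)..x, ext f t := rfl

lemma J_bound (f : CI) (n : ℕ) (c : ℝ)
    (h : ∀ x : Set.Icc (0:ℝ) 1, ‖f x‖ ≤ c * ((x:ℝ) ^ n / n.factorial)) (x : Set.Icc (0:ℝ) 1) :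
    ‖J f x‖ ≤ c * ((x:ℝ) ^ (n+1) / (n+1).factorial) := Jlin_bound f n c h x

/-- the Volterra operator -/
noncomputable def T (g : CI) : CI →L[ℂ] CI := J ∘L J ∘L (ContinuousLinearMap.mul ℂ CI g)

lemma T_apply (g f : CI) : T g f = J (J (g * f)) := rfl

lemma T_pow_bound (g f : CI) (n : ℕ) : ∀ x : Set.Icc (0:ℝ) 1,
    ‖((T g) ^ n) f x‖ ≤ (‖g‖ ^ n * ‖f‖) * ((x:ℝ) ^ (2*n) / (2*n).factorial) := by
  induction n with
  | zero => intro x; simpa using f.norm_coe_le_norm x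
  | succ n ih =>
    intro x
    rw [pow_succ' (T g), mul_apply_eq_comp, T_apply]
    refine J_bound _ (2*n+1) _ (fun x => J_bound _ (2*n) _ (fun x => ?_) x) x
    rw [ContinuousMap.mul_apply, norm_mul, pow_succ']
    have := mul_le_mul (g.norm_coe_le_norm x) (ih x) (norm_nonneg _) (norm_nonneg _)
    refine this.trans (le_of_eq (by ring))

lemma unit_abs {E : Type*} [NormedAddCommGroup E] [NormedSpace ℂ E] [CompleteSpace E]
    (A : E →L[ℂ] E) (n : ℕ) (hn : ‖A ^ n‖ < 1) : IsUnit (1 + A) := by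
  have hn' : ‖(-A) ^ n‖ < 1 := by
    rw [neg_pow A n]
    rcases neg_one_pow_eq_or (E →L[ℂ] E) n with h | h <;> simpa [h] using hn
  have h2 : IsUnit (1 - (-A)^n) := isUnit_one_sub_of_norm_lt_one hn'
  have h4 := mul_neg_geom_sum (-A) n
  have h5 := geom_sum_mul_neg (-A) n
  rw [sub_neg_eq_add] at h4 h5
  have hc : Commute (1 + A) (∑ i ∈ Finset.range n, (-A) ^ i) := by
    rw [Commute, SemiconjBy, h4, h5]
  rw [← h4] at h2
  exact ((hc.isUnit_mul_iff).1 h2).1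

lemma inv_abs {E : Type*} [NormedAddCommGroup E] [NormedSpace ℂ E] [CompleteSpace E]
    (A B : E →L[ℂ] E) (hu : ∀ k : ℂ, IsUnit (1 + (k^2 • A + B))) (f : E) :
    Differentiable ℂ (fun k : ℂ => (Ring.inverse (1 + (k^2 • A + B)) : E →L[ℂ] E) f) := by
  have h1 : Differentiable ℂ (fun k : ℂ => (1 + (k^2 • A + B) : E →L[ℂ] E)) := by
    fun_prop
  intro k
  have h2 : DifferentiableAt ℂ (Ring.inverse : (E →L[ℂ] E) → _) (1 + (k^2 • A + B)) :=
    differentiableAt_inverse (𝕜 := ℂ) (hu k)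
  have h3 : DifferentiableAt ℂ
    (fun k : ℂ => (Ring.inverse (1 + (k^2 • A + B)) : E →L[ℂ] E)) k :=
    DifferentiableAt.comp (g := (Ring.inverse : (E →L[ℂ] E) → _)) k h2 (h1 k)
  exact h3.clm_apply (differentiableAt_const f)

lemma T_unit (g : CI) : IsUnit (1 + T g) := by
  have := (FloorSemiring.tendsto_pow_div_factorial_atTop ‖g‖)
  obtain ⟨n, hn⟩ := (this.eventually (gt_mem_nhds (show (0:ℝ) < 1 by norm_num))).exists
  refine unit_abs (T g) n (lt_of_le_of_lt ?_ hn)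
  apply ContinuousLinearMap.opNorm_le_bound _ (by positivity)
  intro f
  rw [ContinuousMap.norm_le _ (by positivity)]
  intro x
  refine (T_pow_bound g f n x).trans ?_
  have h2 : (x:ℝ)^(2*n) ≤ 1 := pow_le_one₀ x.2.1 x.2.2
  have h3 : (n.factorial : ℝ) ≤ (2*n).factorial := by
    exact_mod_cast Nat.factorial_le (by omega)
  have h4 : (0:ℝ) < n.factorial := by positivity
  have h5 : (x:ℝ)^(2*n) / (2*n).factorial ≤ 1 / n.factorial := by
    gcongr
  calc _ ≤ (‖g‖^n * ‖f‖) * (1 / n.factorial) := by gcongr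
    _ = _ := by ring

/-- resolvent -/
noncomputable def R (g : CI) : CI →L[ℂ] CI := Ring.inverse (1 + T g)

lemma R_eq (g f : CI) : R g f + J (J (g * R g f)) = f := by
  have := Ring.mul_inverse_cancel _ (T_unit g)
  have := congrArg (fun A : CI →L[ℂ] CI => A f) this
  simpa [R, T_apply] using this

lemma R_unique (g f : CI) (h : f + J (J (g * f)) = 0) : f = 0 := by
  have := Ring.inverse_mul_cancel _ (T_unit g)
  have := congrArg (fun A : CI →L[ℂ] CI => A f) this
  have h' : (1 + T g) f = 0 := by simpa [T_apply] using h
  simpa [h'] using this.symm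

noncomputable def gk (p : CI) (k : ℂ) : CI := (k^2) • (1:CI) + p

lemma T_gk (p : CI) (k : ℂ) : T (gk p k) = k^2 • T 1 + T p := by
  ext f x
  simp [T_apply, gk, add_mul]

lemma R_diff (p f : CI) : Differentiable ℂ (fun k => R (gk p k) f) := by
  have h := inv_abs (T 1) (T p) (fun k => by rw [← T_gk]; exact T_unit _) f
  simp only [← T_gk] at h
  exact h

/-- `u` solves `u'' + (m + p) u = 0` on `[0,1]`, with given derivative. -/
def IsSol (p : ℝ → ℂ) (m : ℂ) (u u' : ℝ → ℂ) : Prop :=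
  ∀ x ∈ Set.Icc (0:ℝ) 1, HasDerivAt u (u' x) x ∧ HasDerivAt u' (-((m + p x) * u x)) x

lemma exists_sol (p : ℝ → ℂ) (hp : ContinuousOn p (Set.Icc 0 1)) (a b : ℂ) :
    ∃ (F : ℂ → CI) (Y Y' : ℂ → ℝ → ℂ), Differentiable ℂ F ∧
      (∀ k, ∀ x : Set.Icc (0:ℝ) 1, Y k x = F k x) ∧
      (∀ k, IsSol p (k^2) (Y k) (Y' k)) ∧ (∀ k, Y k 0 = a) ∧ (∀ k, Y' k 0 = b) := by
  let P : CI := ⟨fun x => p x, hp.domRestrict⟩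
  let f0 : CI := ⟨fun x => a + b * ((x:ℝ):ℂ), by fun_prop⟩
  let F : ℂ → CI := fun k => R (gk P k) f0
  refine ⟨F, fun k x => a + b * (x:ℂ) - ∫ t in (0:ℝ)..x, ext (J (gk P k * F k)) t,
    fun k x => b - ∫ t in (0:ℝ)..x, ext (gk P k * F k) t, R_diff P f0, ?_, ?_, ?_, ?_⟩
  · intro k x
    have := congrArg (fun f : CI => f x) (R_eq (gk P k) f0)
    simp only [ContinuousMap.add_apply, J_apply (J _)] at this
    change _ = a + b * ((x:ℝ):ℂ) at this
    change a + b * ((x:ℝ):ℂ) - _ = _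
    rw [← this]
    simp [F]
  · intro k x hx
    constructor
    · have h1 : HasDerivAt (fun x : ℝ => ∫ t in (0:ℝ)..x, ext (J (gk P k * F k)) t)
          (ext (J (gk P k * F k)) x) x :=
        ((ext_cont _).integral_hasStrictDerivAt 0 x).hasDerivAt
      have h2 : HasDerivAt (fun x : ℝ => a + b * (x:ℂ)) b x := by
        simpa using ((Complex.ofRealCLM.hasDerivAt (x := x)).const_mul b).const_add a
      have h3 := h2.sub h1
      rw [ext_of_mem _ hx, J_apply] at h3
      exact h3
    · have h1 : HasDerivAt (fun x : ℝ => ∫ t in (0:ℝ)..x, ext (gk P k * F k) t)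
          (ext (gk P k * F k) x) x :=
        ((ext_cont _).integral_hasStrictDerivAt 0 x).hasDerivAt
      have h3 := h1.const_sub b
      rw [ext_of_mem _ hx] at h3
      have := congrArg (fun f : CI => f ⟨x, hx⟩) (R_eq (gk P k) f0)
      simp only [ContinuousMap.add_apply, J_apply (J _)] at this
      change _ = a + b * (x:ℂ) at this
      refine h3.congr_deriv ?_
      change _ = -((k ^ 2 + p x) * (a + b * (x:ℂ) - _))
      rw [← this]
      simp [gk, P, F]
      exact Or.inl rfl
  · intro k; simp
  · intro k; simp

lemma sol_zero (p : ℝ → ℂ) (hp : ContinuousOn p (Set.Icc 0 1)) (m : ℂ) (u u' : ℝ → ℂ)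
    (h : IsSol p m u u') (h0 : u 0 = 0) (h0' : u' 0 = 0) :
    ∀ x ∈ Set.Icc (0:ℝ) 1, u x = 0 := by
  have hu : ContinuousOn u (Set.Icc 0 1) := fun x hx =>
    ((h x hx).1.continuousAt).continuousWithinAt
  have hu' : ContinuousOn u' (Set.Icc 0 1) := fun x hx =>
    ((h x hx).2.continuousAt).continuousWithinAt
  let U : CI := ⟨fun x => u x, hu.domRestrict⟩
  let G : CI := ⟨fun x => m + p x, (continuousOn_const.add hp).domRestrict⟩
  have key1 : ∀ x : Set.Icc (0:ℝ) 1, J (G * U) x = - u' x := by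
    intro x
    rw [J_apply]
    have : ∀ t ∈ Set.uIcc (0:ℝ) x, HasDerivAt (fun t => - u' t) (ext (G * U) t) t := by
      intro t ht
      rw [Set.uIcc_of_le x.2.1] at ht
      have ht' : t ∈ Set.Icc (0:ℝ) 1 := ⟨ht.1, ht.2.trans x.2.2⟩
      rw [ext_of_mem _ ht']
      have := (h t ht').2.neg
      rw [neg_neg] at this
      exact this
    rw [intervalIntegral.integral_eq_sub_of_hasDerivAt this (ext_int _ _ _)]
    simp [h0']
  have key2 : ∀ x : Set.Icc (0:ℝ) 1, J (J (G * U)) x = - u x := by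
    intro x
    rw [J_apply]
    have : ∀ t ∈ Set.uIcc (0:ℝ) x, HasDerivAt (fun t => - u t) (ext (J (G * U)) t) t := by
      intro t ht
      rw [Set.uIcc_of_le x.2.1] at ht
      have ht' : t ∈ Set.Icc (0:ℝ) 1 := ⟨ht.1, ht.2.trans x.2.2⟩
      rw [ext_of_mem _ ht', key1]
      exact (h t ht').1.neg
    rw [intervalIntegral.integral_eq_sub_of_hasDerivAt this (ext_int _ _ _)]
    simp [h0]
  have : U = 0 := by
    apply R_unique G
    ext x
    rw [ContinuousMap.add_apply, key2 x]
    exact add_neg_cancel (u x)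
  intro x hx
  exact congrArg (fun f : CI => f ⟨x, hx⟩) this

end DN

namespace DN

lemma norm_exp_I_le (z : ℂ) : ‖Complex.exp (z * Complex.I)‖ ≤ Real.exp |z.im| := by
  rw [Complex.norm_exp]; apply Real.exp_le_exp.2; simp; exact neg_le_abs _

lemma norm_exp_neg_I_le (z : ℂ) : ‖Complex.exp (-z * Complex.I)‖ ≤ Real.exp |z.im| := by
  simpa using norm_exp_I_le (-z)

lemma norm_cos_le (z : ℂ) : ‖Complex.cos z‖ ≤ Real.exp |z.im| := by
  rw [Complex.cos, norm_div]
  have := norm_add_le (Complex.exp (z * Complex.I)) (Complex.exp (-z * Complex.I))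
  have h1 := norm_exp_I_le z
  have h2 := norm_exp_neg_I_le z
  simp only [Complex.norm_ofNat]
  linarith

lemma norm_sin_le (z : ℂ) : ‖Complex.sin z‖ ≤ Real.exp |z.im| := by
  rw [Complex.sin, norm_div, norm_mul]
  have := norm_sub_le (Complex.exp (-z * Complex.I)) (Complex.exp (z * Complex.I))
  have h1 := norm_exp_I_le z
  have h2 := norm_exp_neg_I_le z
  simp only [Complex.norm_ofNat, Complex.norm_I]
  linarith

lemma im_mul_real (k : ℂ) (x : ℝ) (hx : 0 ≤ x) : |(k * x).im| = |k.im| * x := by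
  simp [abs_mul, abs_of_nonneg hx]

lemma IsSol.cont {p : ℝ → ℂ} {m : ℂ} {u u' : ℝ → ℂ} (h : IsSol p m u u') :
    ContinuousOn u (Set.Icc 0 1) := fun x hx => ((h x hx).1.continuousAt).continuousWithinAt

lemma var_param {p : ℝ → ℂ} (hp : ContinuousOn p (Set.Icc 0 1)) {k : ℂ} (hk : k ≠ 0)
    {u u' : ℝ → ℂ} (h : IsSol p (k^2) u u') {x : ℝ} (hx : x ∈ Set.Icc (0:ℝ) 1) :
    u x - (u 0 * Complex.cos (k * x) + u' 0 * Complex.sin (k * x) / k) =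
      ∫ t in (0:ℝ)..x, -(p t * u t * (Complex.sin (k * ((x - t : ℝ):ℂ)) / k)) := by
  have hsub : Set.uIcc (0:ℝ) x ⊆ Set.Icc 0 1 := by
    rw [Set.uIcc_of_le hx.1]; exact Set.Icc_subset_Icc_right hx.2
  have hd : ∀ t ∈ Set.uIcc (0:ℝ) x, HasDerivAt
      (fun t : ℝ => u t * Complex.cos (k * ((x - t : ℝ):ℂ)) +
        u' t * (Complex.sin (k * ((x - t : ℝ):ℂ)) / k))
      (-(p t * u t * (Complex.sin (k * ((x - t : ℝ):ℂ)) / k))) t := by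
    intro t ht
    obtain ⟨h1, h2⟩ := h t (hsub ht)
    have hlin : HasDerivAt (fun t : ℝ => k * ((x - t : ℝ):ℂ)) (-k) t := by
      have := (((hasDerivAt_id t).const_sub x).ofReal_comp).const_mul k
      simpa using this
    have hc : HasDerivAt (fun t : ℝ => Complex.cos (k * ((x - t : ℝ):ℂ)))
        (-Complex.sin (k * ((x - t : ℝ):ℂ)) * (-k)) t := by
      have := (Complex.hasDerivAt_cos (k * ((x - t : ℝ):ℂ))).comp t hlin
      exact this
    have hs : HasDerivAt (fun t : ℝ => Complex.sin (k * ((x - t : ℝ):ℂ)) / k)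
        (Complex.cos (k * ((x - t : ℝ):ℂ)) * (-k) / k) t := by
      have := ((Complex.hasDerivAt_sin (k * ((x - t : ℝ):ℂ))).comp t hlin).div_const k
      exact this
    refine ((h1.mul hc).add (h2.mul hs)).congr_deriv ?_
    field_simp
    ring
  have hcont : ContinuousOn (fun t : ℝ => -(p t * u t * (Complex.sin (k * ((x - t : ℝ):ℂ)) / k)))
      (Set.uIcc 0 x) := by
    have := (hp.mul h.cont).mono hsub
    apply ContinuousOn.neg
    apply this.mul
    fun_prop
  rw [intervalIntegral.integral_eq_sub_of_hasDerivAt hd hcont.intervalIntegrable]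
  simp
  ring

lemma sol_bound {p : ℝ → ℂ} (hp : ContinuousOn p (Set.Icc 0 1)) {Q : ℝ}
    (hQ : ∀ x ∈ Set.Icc (0:ℝ) 1, ‖p x‖ ≤ Q) {k : ℂ} (hk : k ≠ 0) (hkQ : 2 * Q ≤ ‖k‖)
    {u u' : ℝ → ℂ} (h : IsSol p (k^2) u u') :
    ∀ x ∈ Set.Icc (0:ℝ) 1, ‖u x‖ ≤ 2 * (‖u 0‖ + ‖u' 0‖ / ‖k‖) * Real.exp (|k.im| * x) ∧
      ‖u x - (u 0 * Complex.cos (k * x) + u' 0 * Complex.sin (k * x) / k)‖ ≤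
        2 * Q / ‖k‖ * (‖u 0‖ + ‖u' 0‖ / ‖k‖) * Real.exp (|k.im| * x) := by
  have hkpos : 0 < ‖k‖ := norm_pos_iff.2 hk
  have hQ0 : 0 ≤ Q := (norm_nonneg _).trans (hQ 0 (by simp))
  set A := ‖u 0‖ + ‖u' 0‖ / ‖k‖ with hA
  have hcont : ContinuousOn (fun x : ℝ => ‖u x‖ * Real.exp (-(|k.im| * x))) (Set.Icc 0 1) := by
    apply h.cont.norm.mul; fun_prop
  obtain ⟨x0, hx0, hmax⟩ := isCompact_Icc.exists_isMaxOn (Set.nonempty_Icc.2 zero_le_one) hcont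
  set M := ‖u x0‖ * Real.exp (-(|k.im| * x0)) with hM
  have hM0 : 0 ≤ M := by positivity
  have hle : ∀ x ∈ Set.Icc (0:ℝ) 1, ‖u x‖ ≤ M * Real.exp (|k.im| * x) := by
    intro x hx
    have := hmax hx
    simp only [Set.mem_ofPred_eq] at this
    rw [Real.exp_neg, ← div_eq_mul_inv, div_le_iff₀ (Real.exp_pos _)] at this
    exact this
  have hdiff : ∀ x ∈ Set.Icc (0:ℝ) 1,
      ‖u x - (u 0 * Complex.cos (k * x) + u' 0 * Complex.sin (k * x) / k)‖ ≤
        Q / ‖k‖ * M * Real.exp (|k.im| * x) := by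
    intro x hx
    rw [var_param hp hk h hx]
    have := intervalIntegral.norm_integral_le_of_norm_le_const (a := 0) (b := x)
      (f := fun t : ℝ => -(p t * u t * (Complex.sin (k * ((x - t : ℝ):ℂ)) / k)))
      (C := Q / ‖k‖ * M * Real.exp (|k.im| * x)) (by
        intro t ht
        rw [Set.uIoc_of_le hx.1] at ht
        have ht' : t ∈ Set.Icc (0:ℝ) 1 := ⟨ht.1.le, ht.2.trans hx.2⟩
        rw [norm_neg, norm_mul, norm_mul, norm_div]
        have h1 := hQ t ht'
        have h2 := hle t ht'
        have h3 := norm_sin_le (k * ((x - t : ℝ):ℂ))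
        rw [im_mul_real k _ (by linarith [ht.2])] at h3
        calc ‖p t‖ * ‖u t‖ * (‖Complex.sin (k * ((x - t : ℝ):ℂ))‖ / ‖k‖)
            ≤ Q * (M * Real.exp (|k.im| * t)) * (Real.exp (|k.im| * (x - t)) / ‖k‖) := by gcongr
          _ = Q / ‖k‖ * M * (Real.exp (|k.im| * t) * Real.exp (|k.im| * (x - t))) := by ring
          _ = _ := by rw [← Real.exp_add]; congr 2; ring)
    refine this.trans ?_
    rw [sub_zero, abs_of_nonneg hx.1]
    have : 0 ≤ Q / ‖k‖ * M * Real.exp (|k.im| * x) := by positivity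
    nlinarith [hx.2]
  have hfree : ∀ x ∈ Set.Icc (0:ℝ) 1,
      ‖u 0 * Complex.cos (k * x) + u' 0 * Complex.sin (k * x) / k‖ ≤ A * Real.exp (|k.im| * x) := by
    intro x hx
    have h1 := norm_cos_le (k * x)
    have h2 := norm_sin_le (k * x)
    rw [im_mul_real k x hx.1] at h1 h2
    refine (norm_add_le _ _).trans ?_
    rw [norm_mul, norm_div, norm_mul, hA]
    calc _ ≤ ‖u 0‖ * Real.exp (|k.im| * x) + ‖u' 0‖ * Real.exp (|k.im| * x) / ‖k‖ := by gcongr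
      _ = _ := by ring
  have hMA : M ≤ 2 * A := by
    have h1 := hdiff x0 hx0
    have h2 := hfree x0 hx0
    have h3 : ‖u x0‖ ≤ Q / ‖k‖ * M * Real.exp (|k.im| * x0) + A * Real.exp (|k.im| * x0) := by
      have := norm_add_le (u x0 - (u 0 * Complex.cos (k * x0) + u' 0 * Complex.sin (k * x0) / k))
        (u 0 * Complex.cos (k * x0) + u' 0 * Complex.sin (k * x0) / k)
      rw [sub_add_cancel] at this
      linarith
    have h4 : M ≤ Q / ‖k‖ * M + A := by
      have hE := Real.exp_pos (|k.im| * x0)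
      have h6 : ‖u x0‖ = M * Real.exp (|k.im| * x0) := by
        rw [hM, mul_assoc, ← Real.exp_add]; simp
      refine le_of_mul_le_mul_right ?_ hE
      rw [← h6]
      linarith
    have h5 : Q / ‖k‖ ≤ 1 / 2 := by
      rw [div_le_iff₀ hkpos]; linarith
    nlinarith
  intro x hx
  constructor
  · refine (hle x hx).trans ?_
    gcongr
  · refine (hdiff x hx).trans ?_
    calc _ ≤ Q / ‖k‖ * (2 * A) * Real.exp (|k.im| * x) := by gcongr
      _ = _ := by ring

lemma cos_lower (n : ℕ) (hn : 1 ≤ n) (k : ℂ) (hk : ‖k‖ = n * π) :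
    Real.exp |k.im| / 4 ≤ ‖Complex.cos k‖ := by
  obtain ⟨a, b⟩ := k
  have hnpi : 3 ≤ n * π := by
    have : (1:ℝ) ≤ n := by exact_mod_cast hn
    nlinarith [Real.pi_gt_three]
  have hsq : ‖Complex.cos ⟨a, b⟩‖ ^ 2 = Real.cos a ^ 2 + Real.sinh b ^ 2 := by
    have : (⟨a, b⟩ : ℂ) = a + b * Complex.I := Complex.mk_eq_add_mul_I a b
    rw [this, Complex.cos_add_mul_I, ← Complex.normSq_eq_norm_sq, Complex.normSq_apply]
    rw [← Complex.ofReal_cos, ← Complex.ofReal_sin, ← Complex.ofReal_cosh, ← Complex.ofReal_sinh]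
    have h1 := Real.cosh_sq b
    have h2 := Real.sin_sq_add_cos_sq a
    have h3 : Real.sin a ^ 2 = 1 - Real.cos a ^ 2 := by linarith
    simp only [Complex.sub_re, Complex.sub_im, Complex.mul_re, Complex.mul_im, Complex.ofReal_re,
      Complex.ofReal_im, Complex.I_re, Complex.I_im]
    ring_nf
    rw [h1, h3]; ring
  have hab : a ^ 2 + b ^ 2 = (n * π) ^ 2 := by
    rw [← hk, ← Complex.normSq_eq_norm_sq, Complex.normSq_apply]; ring
  simp only
  have hexp : Real.exp |b| ≤ 2 * Real.cosh b := by
    rw [← Real.cosh_abs, Real.cosh_eq]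
    have := Real.exp_pos (-|b|)
    linarith
  have hcs := Real.cosh_sq b
  have hfin : 1 / 4 ≤ Real.cos a ^ 2 + 3 / 4 * Real.sinh b ^ 2 := by
    rcases le_total 1 |b| with hb | hb
    · have h1 : 1 ≤ |Real.sinh b| := by
        rw [Real.abs_sinh]
        exact hb.trans (Real.self_le_sinh_iff.2 (abs_nonneg b))
      have : 1 ≤ Real.sinh b ^ 2 := by rw [← sq_abs]; nlinarith
      nlinarith [sq_nonneg (Real.cos a)]
    · have hb2 : b ^ 2 ≤ 1 := by rw [← sq_abs]; nlinarith [abs_nonneg b]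
      have ha0 := abs_nonneg a
      have ha2 : |a| ^ 2 = (n * π) ^ 2 - b ^ 2 := by rw [sq_abs]; linarith
      have hd0 : 0 ≤ n * π - |a| := by nlinarith [sq_nonneg b]
      have hd1 : n * π - |a| ≤ 1 / 3 := by nlinarith
      have hcos : Real.cos a ^ 2 = Real.cos (n * π - |a|) ^ 2 := by
        rw [Real.cos_nat_mul_pi_sub, Real.cos_abs, mul_pow, ← pow_mul, mul_comm n 2, pow_mul]
        simp
      have h1 := Real.one_sub_sq_div_two_le_cos (x := n * π - |a|)
      rw [hcos]
      have h2 : 1 / 2 ≤ Real.cos (n * π - |a|) := by nlinarith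
      nlinarith [sq_nonneg (Real.sinh b)]
  have h5 : (Real.exp |b| / 4) ^ 2 ≤ ‖Complex.cos ⟨a, b⟩‖ ^ 2 := by
    rw [hsq]
    have := Real.exp_pos |b|
    nlinarith
  exact (pow_le_pow_iff_left₀ (by positivity) (norm_nonneg _) two_ne_zero).1 h5

end DN

namespace DN

lemma core {N1 N2 D1 D2 : ℂ → ℂ} (hN1 : Differentiable ℂ N1) (hN2 : Differentiable ℂ N2)
    (hD1 : Differentiable ℂ D1) (hD2 : Differentiable ℂ D2)
    (hres : ∀ κ, D1 κ = 0 ∨ D2 κ = 0 → Filter.Tendsto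
      (fun k => (k - κ) * (N1 k / D2 k - N2 k / D1 k)) (nhdsWithin κ {κ}ᶜ) (nhds 0))
    (C : ℝ) (n0 : ℕ) (hcirc : ∀ n : ℕ, n0 ≤ n → ∀ k : ℂ, ‖k‖ = n * π → D1 k ≠ 0 ∧ D2 k ≠ 0 ∧
      ‖N1 k / D2 k - N2 k / D1 k‖ ≤ C / n) :
    ∀ k, D1 k ≠ 0 → D2 k ≠ 0 → N1 k / D2 k - N2 k / D1 k = 0 := by
  set H : ℂ → ℂ := fun k => N1 k / D2 k - N2 k / D1 k with hH
  have hex : ∃ k, D1 k ≠ 0 ∧ D2 k ≠ 0 := by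
    refine ⟨((n0 * π : ℝ) : ℂ), ?_⟩
    have := hcirc n0 le_rfl ((n0 * π : ℝ) : ℂ) (by
      rw [Complex.norm_real, Real.norm_of_nonneg (by positivity)])
    exact ⟨this.1, this.2.1⟩
  obtain ⟨kk, hkk1, hkk2⟩ := hex
  have hiso : ∀ κ, ∀ᶠ k in nhdsWithin κ {κ}ᶜ, D1 k * D2 k ≠ 0 := by
    intro κ
    by_contra hcon
    rw [Filter.not_eventually] at hcon
    have han : AnalyticOnNhd ℂ (fun k => D1 k * D2 k) Set.univ :=
      (hD1.mul hD2).differentiableOn.analyticOnNhd isOpen_univ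
    have := han.eqOn_zero_of_preconnected_of_frequently_eq_zero isPreconnected_univ
      (Set.mem_univ κ) (by simpa only [ne_eq, not_not] using hcon)
    exact mul_ne_zero hkk1 hkk2 (this (Set.mem_univ kk))
  have hHd : ∀ k, D1 k * D2 k ≠ 0 → DifferentiableAt ℂ H k := by
    intro k hk
    have h1 := left_ne_zero_of_mul hk
    have h2 := right_ne_zero_of_mul hk
    exact ((hN1 k).div (hD2 k) h2).sub ((hN2 k).div (hD1 k) h1)
  set E : ℂ → ℂ := fun κ => Filter.limUnder (nhdsWithin κ {κ}ᶜ) H with hE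
  have hEH : ∀ k, D1 k * D2 k ≠ 0 → E k = H k := by
    intro k hk
    exact ((hHd k hk).continuousAt.tendsto.mono_left nhdsWithin_le_nhds).limUnder_eq
  have hEd : Differentiable ℂ E := by
    intro κ
    have h1 := hiso κ
    rw [eventually_nhdsWithin_iff] at h1
    set s : Set ℂ := {k | k ∈ ({κ}ᶜ : Set ℂ) → D1 k * D2 k ≠ 0} with hs
    have hs1 : s ∈ nhds κ := h1
    have hd : DifferentiableOn ℂ H (s \ {κ}) := fun k hk =>
      (hHd k (hk.1 hk.2)).differentiableWithinAt
    have ho : (fun z => H z - H κ) =o[nhdsWithin κ {κ}ᶜ] fun z => (z - κ)⁻¹ := by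
      have ht : Filter.Tendsto (fun k => (k - κ) * H k) (nhdsWithin κ {κ}ᶜ) (nhds 0) := by
        by_cases hz : D1 κ * D2 κ = 0
        · exact hres κ (mul_eq_zero.1 hz)
        · have : ContinuousAt (fun k => (k - κ) * H k) κ :=
            (continuousAt_id.sub continuousAt_const).mul (hHd κ hz).continuousAt
          have := this.tendsto.mono_left (nhdsWithin_le_nhds (s := {κ}ᶜ))
          simpa using this
      have ht2 : Filter.Tendsto (fun k => (k - κ) * (H k - H κ)) (nhdsWithin κ {κ}ᶜ)
          (nhds 0) := by
        have h3 : Filter.Tendsto (fun k => (k - κ) * H κ) (nhdsWithin κ {κ}ᶜ) (nhds 0) := by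
          have : ContinuousAt (fun k => (k - κ) * H κ) κ := by fun_prop
          have := this.tendsto.mono_left (nhdsWithin_le_nhds (s := {κ}ᶜ))
          simpa using this
        have := ht.sub h3
        simpa [mul_sub] using this
      rw [Asymptotics.isLittleO_iff_tendsto']
      · refine ht2.congr fun z => ?_
        rw [div_inv_eq_mul, mul_comm]
      · filter_upwards [self_mem_nhdsWithin] with z hz h0
        exact absurd (sub_eq_zero.1 (inv_eq_zero.1 h0)) hz
    have hup := Complex.differentiableOn_update_limUnder_of_isLittleO hs1 hd ho
    have hEs : Set.EqOn E (Function.update H κ (Filter.limUnder (nhdsWithin κ {κ}ᶜ) H)) s := by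
      intro k hk
      by_cases hkκ : k = κ
      · subst hkκ; simp [hE]
      · rw [Function.update_of_ne hkκ]
        exact hEH k (hk hkκ)
    exact (hup.congr hEs).differentiableAt hs1
  have hbound : ∀ n : ℕ, n0 ≤ n → 1 ≤ n → ∀ z, ‖z‖ ≤ n * π → ‖E z‖ ≤ C / n := by
    intro n hn hn1 z hz
    have hpos : (0:ℝ) < n * π := by
      have : (0:ℝ) < n := by exact_mod_cast hn1
      positivity
    refine Complex.norm_le_of_forall_mem_frontier_norm_le (U := Metric.ball 0 (n * π))
      Metric.isBounded_ball hEd.diffContOnCl ?_ ?_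
    · intro k hk
      rw [frontier_ball _ hpos.ne', mem_sphere_zero_iff_norm] at hk
      obtain ⟨h1, h2, h3⟩ := hcirc n hn k hk
      rw [hEH k (mul_ne_zero h1 h2)]
      exact h3
    · rw [closure_ball _ hpos.ne']
      simpa using hz
  intro k hk1 hk2
  change H k = 0
  rw [← hEH k (mul_ne_zero hk1 hk2)]
  have hlim : Filter.Tendsto (fun n : ℕ => C / (n:ℝ)) Filter.atTop (nhds 0) :=
    tendsto_const_div_atTop_nhds_zero_nat C
  have : ‖E k‖ ≤ 0 := by
    refine ge_of_tendsto hlim ?_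
    obtain ⟨m, hm⟩ := exists_nat_ge ‖k‖
    filter_upwards [Filter.eventually_ge_atTop n0, Filter.eventually_ge_atTop 1,
      Filter.eventually_ge_atTop m] with n h1 h2 h3
    refine hbound n h1 h2 k (hm.trans ?_)
    have : (m:ℝ) ≤ n := by exact_mod_cast h3
    have : (0:ℝ) ≤ n := by positivity
    nlinarith [Real.pi_gt_three]
  simpa using this

lemma wronsk {p : ℝ → ℂ} {m n : ℂ} {u u' v v' : ℝ → ℂ} (hu : IsSol p m u u')
    (hv : IsSol p n v v') {x : ℝ} (hx : x ∈ Set.Icc (0:ℝ) 1) :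
    (m - n) * ∫ t in (0:ℝ)..x, u t * v t =
      (u x * v' x - u' x * v x) - (u 0 * v' 0 - u' 0 * v 0) := by
  have hsub : Set.uIcc (0:ℝ) x ⊆ Set.Icc 0 1 := by
    rw [Set.uIcc_of_le hx.1]; exact Set.Icc_subset_Icc_right hx.2
  have hd : ∀ t ∈ Set.uIcc (0:ℝ) x, HasDerivAt (fun t => u t * v' t - u' t * v t)
      ((m - n) * (u t * v t)) t := by
    intro t ht
    obtain ⟨h1, h2⟩ := hu t (hsub ht)
    obtain ⟨h3, h4⟩ := hv t (hsub ht)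
    refine ((h1.mul h4).sub (h2.mul h3)).congr_deriv ?_
    ring
  have hc : ContinuousOn (fun t => (m - n) * (u t * v t)) (Set.uIcc 0 x) :=
    continuousOn_const.mul ((hu.cont.mul hv.cont).mono hsub)
  rw [← intervalIntegral.integral_const_mul,
    intervalIntegral.integral_eq_sub_of_hasDerivAt hd hc.intervalIntegrable]

lemma IsSol.reflect {p : ℝ → ℂ} {m : ℂ} {u u' : ℝ → ℂ} (h : IsSol (fun x => p (1 - x)) m u u') :
    IsSol p m (fun x => u (1 - x)) (fun x => - u' (1 - x)) := by
  intro x hx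
  have hx' : 1 - x ∈ Set.Icc (0:ℝ) 1 := ⟨by linarith [hx.2], by linarith [hx.1]⟩
  obtain ⟨h1, h2⟩ := h (1 - x) hx'
  have hl : HasDerivAt (fun x : ℝ => 1 - x) (-1) x := by
    simpa using (hasDerivAt_id x).const_sub 1
  constructor
  · have := HasDerivAt.scomp x h1 hl
    exact this.congr_deriv (by simp)
  · have := (HasDerivAt.scomp x h2 hl).neg
    exact this.congr_deriv (by simp)

/-- a system of solutions -/
structure Sys (p : ℝ → ℂ) where
  φ : ℂ → ℝ → ℂ
  φ' : ℂ → ℝ → ℂ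
  χ : ℂ → ℝ → ℂ
  χ' : ℂ → ℝ → ℂ
  F : ℂ → CI
  hF : Differentiable ℂ F
  hφF : ∀ k, ∀ x : Set.Icc (0:ℝ) 1, φ k x = F k x
  hχd : ∀ x ∈ Set.Icc (0:ℝ) 1, Differentiable ℂ (fun k => χ k x)
  hφ : ∀ k, IsSol p (k^2) (φ k) (φ' k)
  hχ : ∀ k, IsSol p (k^2) (χ k) (χ' k)
  φ0 : ∀ k, φ k 0 = 1
  φ0' : ∀ k, φ' k 0 = 0
  χ1 : ∀ k, χ k 1 = 0
  χ1' : ∀ k, χ' k 1 = -1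
  hp : ContinuousOn p (Set.Icc 0 1)
  bχ : ∀ Q : ℝ, (∀ x ∈ Set.Icc (0:ℝ) 1, ‖p x‖ ≤ Q) → ∀ k : ℂ, k ≠ 0 → 2 * Q ≤ ‖k‖ →
    ∀ x ∈ Set.Icc (0:ℝ) 1, ‖χ k x‖ ≤ 2 / ‖k‖ * Real.exp (|k.im| * (1 - x))

lemma eval_diff {F : ℂ → CI} (hF : Differentiable ℂ F) (x : Set.Icc (0:ℝ) 1) :
    Differentiable ℂ (fun k => F k x) :=
  fun k => by
    have := ((ContinuousMap.evalCLM ℂ x).differentiableAt (x := F k)).comp k (hF k)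
    exact this

lemma one_sub_mem {x : ℝ} (hx : x ∈ Set.Icc (0:ℝ) 1) : 1 - x ∈ Set.Icc (0:ℝ) 1 :=
  ⟨by linarith [hx.2], by linarith [hx.1]⟩

lemma exists_sys (p : ℝ → ℂ) (hp : ContinuousOn p (Set.Icc 0 1)) : Nonempty (Sys p) := by
  obtain ⟨F, φ, φ', hF, hφF, hφ, h0, h0'⟩ := exists_sol p hp 1 0
  have hp' : ContinuousOn (fun x => p (1 - x)) (Set.Icc 0 1) :=
    hp.comp (by fun_prop) (fun x hx => one_sub_mem hx)
  obtain ⟨G, S, S', hG, hSG, hS, hS0, hS0'⟩ := exists_sol (fun x => p (1 - x)) hp' 0 1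
  refine ⟨⟨φ, φ', fun k x => S k (1 - x), fun k x => - S' k (1 - x), F, hF, hφF, ?_, hφ,
    fun k => (hS k).reflect, h0, h0', ?_, ?_, hp, ?_⟩⟩
  · intro x hx
    have : (fun k => S k (1 - x)) = fun k => G k ⟨1 - x, one_sub_mem hx⟩ := by
      funext k; exact hSG k ⟨1 - x, one_sub_mem hx⟩
    rw [this]
    exact eval_diff hG _
  · intro k; simp [hS0]
  · intro k; simp [hS0']
  · intro Q hQ k hk hkQ x hx
    have := (sol_bound hp' (fun x hx => hQ _ (one_sub_mem hx)) hk hkQ (hS k) (1 - x)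
      (one_sub_mem hx)).1
    simp only [hS0, hS0', norm_zero, norm_one, zero_add] at this
    refine this.trans (le_of_eq (by ring))

namespace Sys
variable {p : ℝ → ℂ} (s : Sys p)

noncomputable def D (k : ℂ) : ℂ := s.φ k 1

lemma φd {x : ℝ} (hx : x ∈ Set.Icc (0:ℝ) 1) : Differentiable ℂ (fun k => s.φ k x) := by
  have : (fun k => s.φ k x) = fun k => s.F k ⟨x, hx⟩ := by
    funext k; exact s.hφF k ⟨x, hx⟩
  rw [this]; exact eval_diff s.hF _

lemma Dd : Differentiable ℂ s.D := s.φd (x := 1) (by simp)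

lemma W (k : ℂ) {x : ℝ} (hx : x ∈ Set.Icc (0:ℝ) 1) :
    s.φ k x * s.χ' k x - s.φ' k x * s.χ k x = - s.D k := by
  have h1 := wronsk (s.hφ k) (s.hχ k) hx
  have h2 := wronsk (s.hφ k) (s.hχ k) (x := 1) (by simp)
  simp only [sub_self, zero_mul] at h1 h2
  rw [s.χ1, s.χ1'] at h2
  simp only [D]
  linear_combination h2 - h1

lemma unique {m : ℂ} {u u' v v' : ℝ → ℂ} (hu : IsSol p m u u') (hv : IsSol p m v v') (c : ℂ)
    (hp : ContinuousOn p (Set.Icc 0 1))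
    (h0 : u 0 = c * v 0) (h0' : u' 0 = c * v' 0) : ∀ x ∈ Set.Icc (0:ℝ) 1, u x = c * v x := by
  have h : IsSol p m (fun x => u x - c * v x) (fun x => u' x - c * v' x) := by
    intro x hx
    obtain ⟨h1, h2⟩ := hu x hx
    obtain ⟨h3, h4⟩ := hv x hx
    refine ⟨h1.sub (h3.const_mul c), (h2.sub (h4.const_mul c)).congr_deriv (by ring)⟩
  intro x hx
  have := sol_zero p hp m _ _ h (by simp [h0]) (by simp [h0']) x hx
  exact sub_eq_zero.1 this

lemma at_zero {κ : ℂ} (h : s.D κ = 0) :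
    s.φ' κ 1 ≠ 0 ∧ ∀ x ∈ Set.Icc (0:ℝ) 1, s.χ κ x * s.φ' κ 1 = - s.φ κ x := by
  have h0 := s.W κ (x := 0) (by simp)
  rw [s.φ0, s.φ0', h] at h0
  have h1 := unique (s.hχ κ) (s.hφ κ) (s.χ κ 0) s.hp (by simp [s.φ0])
    (by rw [s.φ0']; simpa using h0)
  have h2 := s.W κ (x := 1) (by simp)
  -- derivative at 1: use uniqueness of the derivative through the Wronskian of `χ` at `0`
  have hd : s.χ' κ 1 = s.χ κ 0 * s.φ' κ 1 := by
    have hu : UniqueDiffWithinAt ℝ (Set.Icc (0:ℝ) 1) 1 :=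
      uniqueDiffOn_Icc zero_lt_one 1 (by simp)
    have e1 := ((s.hχ κ 1 (by simp)).1).hasDerivWithinAt (s := Set.Icc (0:ℝ) 1)
    have e2 := (((s.hφ κ 1 (by simp)).1).const_mul (s.χ κ 0)).hasDerivWithinAt
      (s := Set.Icc (0:ℝ) 1)
    exact hu.eq_deriv _ e1 (e2.congr h1 (h1 1 (by simp)))
  rw [s.χ1'] at hd
  have hne : s.φ' κ 1 ≠ 0 := by
    intro h; rw [h] at hd; simp at hd
  refine ⟨hne, fun x hx => ?_⟩
  rw [h1 x hx]
  linear_combination (- s.φ κ x) * hd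

lemma int_cont (v : ℝ → ℂ) (hv : ContinuousOn v (Set.Icc 0 1)) :
    Continuous (fun k => ∫ t in (0:ℝ)..1, s.φ k t * v t) := by
  let V : CI := ⟨fun x => v x, hv.domRestrict⟩
  have : (fun k => ∫ t in (0:ℝ)..1, s.φ k t * v t) = fun k => J (s.F k * V) ⟨1, by simp⟩ := by
    funext k
    rw [J_apply]
    apply intervalIntegral.integral_congr
    intro t ht
    rw [Set.uIcc_of_le zero_le_one] at ht
    rw [ext_of_mem _ ht]
    exact congrArg (· * v t) (s.hφF k ⟨t, ht⟩)
  rw [this]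
  have h1 : Continuous (fun k => J (s.F k * V)) :=
    J.continuous.comp (s.hF.continuous.mul continuous_const)
  exact (ContinuousMap.evalCLM ℂ (⟨1, by simp⟩ : Set.Icc (0:ℝ) 1)).continuous.comp h1

lemma res {κ α : ℂ} (hκ : κ ≠ 0) (h : s.D κ = 0)
    (hα : ∫ t in (0:ℝ)..1, s.φ κ t * s.φ κ t = α) (hα0 : α ≠ 0) {x : ℝ}
    (hx : x ∈ Set.Icc (0:ℝ) 1) :
    Filter.Tendsto (fun k => (k - κ) * (s.χ k x / s.D k)) (nhdsWithin κ {κ}ᶜ)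
      (nhds (- s.φ κ x / α / (2 * κ))) := by
  obtain ⟨hne, hχφ⟩ := s.at_zero h
  have h1 : ∀ k, (k^2 - κ^2) * ∫ t in (0:ℝ)..1, s.φ k t * s.φ κ t = s.D k * s.φ' κ 1 := by
    intro k
    have := wronsk (s.hφ k) (s.hφ κ) (x := 1) (by simp)
    rw [show s.φ κ 1 = 0 from h] at this
    rw [this, s.φ0, s.φ0, s.φ0', s.φ0', D]; ring
  have hI : Filter.Tendsto (fun k => ∫ t in (0:ℝ)..1, s.φ k t * s.φ κ t) (nhds κ) (nhds α) := by
    have := (s.int_cont (s.φ κ) (s.hφ κ).cont).tendsto κ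
    rwa [hα] at this
  have hx1 : Filter.Tendsto (fun k => s.χ k x) (nhds κ) (nhds (s.χ κ x)) :=
    (s.hχd x hx).continuous.tendsto κ
  have hk2 : Filter.Tendsto (fun k : ℂ => k + κ) (nhds κ) (nhds (2 * κ)) := by
    have : Continuous (fun k : ℂ => k + κ) := by fun_prop
    simpa [two_mul] using this.tendsto κ
  have h2 : (2 * κ) ≠ 0 := by simpa using hκ
  have hlim := (((hx1.mul_const (s.φ' κ 1)).div hI hα0).div hk2 h2).mono_left
    (nhdsWithin_le_nhds (s := {κ}ᶜ))
  rw [hχφ x hx] at hlim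
  refine hlim.congr' ?_
  have e1 : ∀ᶠ k in nhdsWithin κ {κ}ᶜ, (∫ t in (0:ℝ)..1, s.φ k t * s.φ κ t) ≠ 0 :=
    (hI.mono_left nhdsWithin_le_nhds).eventually_ne hα0
  have e2 : ∀ᶠ k in nhdsWithin κ {κ}ᶜ, k + κ ≠ 0 :=
    (hk2.mono_left nhdsWithin_le_nhds).eventually_ne h2
  filter_upwards [e1, e2, self_mem_nhdsWithin] with k hk1 hk2 hk3
  have hk3' : k - κ ≠ 0 := sub_ne_zero.2 hk3
  have hDk : s.D k ≠ 0 := by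
    intro h0
    have := h1 k
    rw [h0, zero_mul, show k^2 - κ^2 = (k - κ) * (k + κ) by ring] at this
    exact mul_ne_zero (mul_ne_zero hk3' hk2) hk1 this
  have := h1 k
  simp only [Pi.div_apply]
  field_simp
  linear_combination (- s.χ k x) * this

lemma zero_real {q : ℝ → ℝ} (hq : ∀ x ∈ Set.Icc (0:ℝ) 1, p x = q x) {κ : ℂ} (h : s.D κ = 0) :
    (κ^2).im = 0 := by
  have hc : IsSol p (starRingEnd ℂ (κ^2)) (fun x => starRingEnd ℂ (s.φ κ x))
      (fun x => starRingEnd ℂ (s.φ' κ x)) := by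
    intro x hx
    obtain ⟨h1, h2⟩ := s.hφ κ x hx
    refine ⟨?_, ?_⟩
    · have := Complex.conjCLE.toContinuousLinearMap.hasFDerivAt.comp_hasDerivAt x h1
      exact this.congr_deriv (by simp)
    · have := Complex.conjCLE.toContinuousLinearMap.hasFDerivAt.comp_hasDerivAt x h2
      exact this.congr_deriv (by simp [hq x hx])
  have hw := wronsk (s.hφ κ) hc (x := 1) (by simp)
  simp only [show s.φ κ 1 = 0 from h, s.φ0, s.φ0', map_zero, zero_mul, mul_zero, sub_self] at hw
  rcases mul_eq_zero.1 hw with h1 | h1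
  · have := congrArg Complex.im h1
    simp only [Complex.sub_im, Complex.conj_im, Complex.zero_im] at this
    linarith
  · exfalso
    have hcont : ContinuousOn (fun t => Complex.normSq (s.φ κ t)) (Set.Icc 0 1) :=
      Complex.continuous_normSq.comp_continuousOn (s.hφ κ).cont
    have h2 : ∫ t in (0:ℝ)..1, Complex.normSq (s.φ κ t) = 0 := by
      have : ∀ t, s.φ κ t * starRingEnd ℂ (s.φ κ t) = ((Complex.normSq (s.φ κ t) : ℝ) : ℂ) :=
        fun t => Complex.mul_conj _
      simp only [this, intervalIntegral.integral_ofReal] at h1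
      exact_mod_cast h1
    have h3 := intervalIntegral.integral_pos zero_lt_one hcont
      (fun x _ => Complex.normSq_nonneg _) ⟨0, by simp, by simp [s.φ0]⟩
    linarith

end Sys
end DN

namespace DN
namespace Sys
variable {p : ℝ → ℂ} (s : Sys p)

lemma bφ {Q : ℝ} (hQ : ∀ x ∈ Set.Icc (0:ℝ) 1, ‖p x‖ ≤ Q) {k : ℂ} (hk : 1 ≤ ‖k‖)
    (hkQ : 16 * Q ≤ ‖k‖) : ∀ x ∈ Set.Icc (0:ℝ) 1,
      ‖s.φ k x‖ ≤ 2 * Real.exp (|k.im| * x) ∧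
      ‖s.φ k x - Complex.cos (k * x)‖ ≤ 2 * Q / ‖k‖ * Real.exp (|k.im| * x) ∧
      ‖s.φ k x - Complex.cos (k * x)‖ ≤ Real.exp (|k.im| * x) / 8 := by
  intro x hx
  have hQ0 : 0 ≤ Q := (norm_nonneg _).trans (hQ 0 (by simp))
  have hk0 : k ≠ 0 := by rintro rfl; norm_num at hk
  obtain ⟨h1, h2⟩ := sol_bound s.hp hQ hk0 (by linarith) (s.hφ k) x hx
  simp only [s.φ0, s.φ0', norm_one, norm_zero, zero_div, add_zero, mul_one, one_mul, zero_mul]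
    at h1 h2
  refine ⟨h1, h2, h2.trans ?_⟩
  have : 2 * Q / ‖k‖ ≤ 1 / 8 := by
    rw [div_le_iff₀ (by linarith)]; linarith
  have := mul_le_mul_of_nonneg_right this (Real.exp_pos (|k.im| * x)).le
  linarith

lemma D_lower {Q : ℝ} (hQ : ∀ x ∈ Set.Icc (0:ℝ) 1, ‖p x‖ ≤ Q) {k : ℂ} {n : ℕ} (hn : 1 ≤ n)
    (hk : ‖k‖ = n * π) (hkQ : 16 * Q ≤ ‖k‖) : Real.exp |k.im| / 8 ≤ ‖s.D k‖ := by
  have hnpi : 1 ≤ ‖k‖ := by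
    have : (1:ℝ) ≤ n := by exact_mod_cast hn
    rw [hk]
    nlinarith [Real.pi_gt_three]
  have h1 := (s.bφ hQ hnpi hkQ 1 (by simp)).2.2
  have h2 := cos_lower n hn k hk
  simp only [Complex.ofReal_one, mul_one] at h1
  have h3 := norm_sub_norm_le (Complex.cos k) (s.φ k 1)
  rw [norm_sub_rev] at h3
  rw [D]
  linarith

lemma quot_bound {p' : ℝ → ℂ} (s' : Sys p') {Q : ℝ} (hQ : ∀ x ∈ Set.Icc (0:ℝ) 1, ‖p x‖ ≤ Q)
    (hQ' : ∀ x ∈ Set.Icc (0:ℝ) 1, ‖p' x‖ ≤ Q) {k : ℂ} {n : ℕ} (hn : 1 ≤ n)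
    (hk : ‖k‖ = n * π) (hkQ : 16 * Q ≤ ‖k‖) {x : ℝ} (hx : x ∈ Set.Icc (0:ℝ) 1) :
    ‖s.φ k x * s'.χ k x / s'.D k‖ ≤ 32 / n := by
  have hn' : (1:ℝ) ≤ n := by exact_mod_cast hn
  have hnpi : (n:ℝ) ≤ ‖k‖ := by
    rw [hk]
    nlinarith [Real.pi_gt_three]
  have hk0 : k ≠ 0 := by
    rintro rfl; rw [norm_zero] at hnpi; linarith
  have hQ0 : 0 ≤ Q := (norm_nonneg _).trans (hQ 0 (by simp))
  have h1 := (s.bφ hQ (by linarith) hkQ x hx).1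
  have h2 := s'.bχ Q hQ' k hk0 (by linarith) x hx
  have h3 := s'.D_lower hQ' hn hk hkQ
  have he := Real.exp_pos |k.im|
  rw [norm_div, norm_mul, div_le_iff₀ (by linarith)]
  have hsplit : Real.exp (|k.im| * x) * Real.exp (|k.im| * (1 - x)) = Real.exp |k.im| := by
    rw [← Real.exp_add]; congr 1; ring
  have hkp : 0 < ‖k‖ := norm_pos_iff.2 hk0
  calc ‖s.φ k x‖ * ‖s'.χ k x‖
      ≤ (2 * Real.exp (|k.im| * x)) * (2 / ‖k‖ * Real.exp (|k.im| * (1 - x))) := by gcongr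
    _ = 4 / ‖k‖ * Real.exp |k.im| := by rw [← hsplit]; ring
    _ ≤ 4 / n * Real.exp |k.im| := by gcongr
    _ = 32 / n * (Real.exp |k.im| / 8) := by ring
    _ ≤ _ := by gcongr

lemma φ_ne {Q : ℝ} (hQ : ∀ x ∈ Set.Icc (0:ℝ) 1, ‖p x‖ ≤ Q) {τ : ℝ} (hτ : 1 ≤ τ)
    (hτQ : 16 * Q ≤ τ) {x : ℝ} (hx : x ∈ Set.Icc (0:ℝ) 1) : s.φ (τ * Complex.I) x ≠ 0 := by
  have hn : ‖(τ * Complex.I : ℂ)‖ = τ := by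
    rw [norm_mul, Complex.norm_I, mul_one, Complex.norm_real, Real.norm_of_nonneg (by linarith)]
  intro h0
  have h1 := (s.bφ hQ (k := τ * Complex.I) (by rw [hn]; exact hτ) (by rw [hn]; exact hτQ) x hx).2.2
  have him : (τ * Complex.I : ℂ).im = τ := by simp
  rw [h0, zero_sub, norm_neg, him, abs_of_nonneg (by linarith)] at h1
  have hc : Complex.cos (τ * Complex.I * x) = ((Real.cosh (τ * x) : ℝ) : ℂ) := by
    rw [show (τ * Complex.I * x : ℂ) = ((τ * x : ℝ) : ℂ) * Complex.I by push_cast; ring,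
      Complex.cos_mul_I, Complex.ofReal_cosh]
  rw [hc, Complex.norm_real, Real.norm_of_nonneg (Real.cosh_pos _).le, Real.cosh_eq] at h1
  have := Real.exp_pos (τ * x)
  have := Real.exp_pos (-(τ * x))
  linarith

end Sys

theorem main_sys {p₁ p₂ : ℝ → ℂ} (s₁ : Sys p₁) (s₂ : Sys p₂)
    (hz : ∀ κ, s₁.D κ = 0 ∨ s₂.D κ = 0 → κ ≠ 0 ∧ s₁.D κ = 0 ∧ s₂.D κ = 0 ∧
      ∃ α : ℂ, α ≠ 0 ∧ (∫ t in (0:ℝ)..1, s₁.φ κ t * s₁.φ κ t) = α ∧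
        (∫ t in (0:ℝ)..1, s₂.φ κ t * s₂.φ κ t) = α) :
    ∀ x ∈ Set.Icc (0:ℝ) 1, p₁ x = p₂ x := by
  obtain ⟨Q₁, hQ₁⟩ := isCompact_Icc.exists_bound_of_continuousOn s₁.hp
  obtain ⟨Q₂, hQ₂⟩ := isCompact_Icc.exists_bound_of_continuousOn s₂.hp
  set Q := max Q₁ Q₂
  replace hQ₁ : ∀ x ∈ Set.Icc (0:ℝ) 1, ‖p₁ x‖ ≤ Q := fun x hx => (hQ₁ x hx).trans (le_max_left _ _)
  replace hQ₂ : ∀ x ∈ Set.Icc (0:ℝ) 1, ‖p₂ x‖ ≤ Q := fun x hx => (hQ₂ x hx).trans (le_max_right _ _)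
  obtain ⟨n1, hn1⟩ := exists_nat_ge (16 * Q)
  have key : ∀ x ∈ Set.Icc (0:ℝ) 1, ∀ k, s₁.D k ≠ 0 → s₂.D k ≠ 0 →
      s₁.φ k x * s₂.χ k x / s₂.D k - s₂.φ k x * s₁.χ k x / s₁.D k = 0 := by
    intro x hx
    refine core (N1 := fun k => s₁.φ k x * s₂.χ k x) (N2 := fun k => s₂.φ k x * s₁.χ k x)
      ((s₁.φd hx).mul (s₂.hχd x hx)) ((s₂.φd hx).mul (s₁.hχd x hx)) s₁.Dd s₂.Dd ?_ 64
      (n1 + 1) ?_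
    · intro κ hκ
      obtain ⟨hκ0, hD1, hD2, α, hα0, hα1, hα2⟩ := hz κ hκ
      have r1 := s₁.res hκ0 hD1 hα1 hα0 hx
      have r2 := s₂.res hκ0 hD2 hα2 hα0 hx
      have c1 := ((s₁.φd hx).continuous.tendsto κ).mono_left (nhdsWithin_le_nhds (s := {κ}ᶜ))
      have c2 := ((s₂.φd hx).continuous.tendsto κ).mono_left (nhdsWithin_le_nhds (s := {κ}ᶜ))
      have := (c1.mul r2).sub (c2.mul r1)
      have e : s₁.φ κ x * (-s₂.φ κ x / α / (2 * κ)) - s₂.φ κ x * (-s₁.φ κ x / α / (2 * κ)) = 0 := by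
        ring
      rw [e] at this
      refine this.congr fun k => ?_
      ring
    · intro n hn k hk
      have hn' : 1 ≤ n := by omega
      have hkQ : 16 * Q ≤ ‖k‖ := by
        rw [hk]
        have : (n1:ℝ) ≤ n := by exact_mod_cast (by omega : n1 ≤ n)
        have h0 : (0:ℝ) ≤ n := by positivity
        nlinarith [Real.pi_gt_three]
      have d1 := s₁.D_lower hQ₁ hn' hk hkQ
      have d2 := s₂.D_lower hQ₂ hn' hk hkQ
      have he := Real.exp_pos |k.im|
      refine ⟨norm_pos_iff.1 (by linarith), norm_pos_iff.1 (by linarith), ?_⟩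
      have b1 := s₁.quot_bound s₂ hQ₁ hQ₂ hn' hk hkQ hx
      have b2 := s₂.quot_bound s₁ hQ₂ hQ₁ hn' hk hkQ hx
      refine (norm_sub_le _ _).trans ((add_le_add b1 b2).trans (le_of_eq (by ring)))
  set τ : ℝ := max 1 (16 * Q) with hτ
  set k : ℂ := τ * Complex.I
  have f1 : ∀ x ∈ Set.Icc (0:ℝ) 1, s₁.φ k x ≠ 0 := fun x hx =>
    s₁.φ_ne hQ₁ (le_max_left _ _) (le_max_right _ _) hx
  have f2 : ∀ x ∈ Set.Icc (0:ℝ) 1, s₂.φ k x ≠ 0 := fun x hx =>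
    s₂.φ_ne hQ₂ (le_max_left _ _) (le_max_right _ _) hx
  have D1 : s₁.D k ≠ 0 := f1 1 (by simp)
  have D2 : s₂.D k ≠ 0 := f2 1 (by simp)
  have huniq : ∀ x ∈ Set.Icc (0:ℝ) 1, UniqueDiffWithinAt ℝ (Set.Icc (0:ℝ) 1) x :=
    uniqueDiffOn_Icc zero_lt_one
  -- equality of derivatives of functions equal on `[0,1]`
  have hder : ∀ {f g f' g' : ℝ → ℂ}, (∀ x ∈ Set.Icc (0:ℝ) 1, f x = g x) →
      (∀ x ∈ Set.Icc (0:ℝ) 1, HasDerivAt f (f' x) x) →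
      (∀ x ∈ Set.Icc (0:ℝ) 1, HasDerivAt g (g' x) x) →
      ∀ x ∈ Set.Icc (0:ℝ) 1, f' x = g' x := by
    intro f g f' g' hfg hf hg x hx
    exact (huniq x hx).eq_deriv _ (hf x hx).hasDerivWithinAt
      ((hg x hx).hasDerivWithinAt.congr hfg (hfg x hx))
  have e1 : ∀ x ∈ Set.Icc (0:ℝ) 1, s₂.χ k x / s₂.φ k x / s₂.D k =
      s₁.χ k x / s₁.φ k x / s₁.D k := by
    intro x hx
    have := key x hx k D1 D2
    have g1 := f1 x hx
    have g2 := f2 x hx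
    field_simp
    field_simp at this
    linear_combination this
  have e2 := hder e1 (fun x hx => (((s₂.hχ k x hx).1.div (s₂.hφ k x hx).1 (f2 x hx)).div_const _))
    (fun x hx => (((s₁.hχ k x hx).1.div (s₁.hφ k x hx).1 (f1 x hx)).div_const _))
  have e3 : ∀ x ∈ Set.Icc (0:ℝ) 1, s₁.φ k x * s₁.φ k x = s₂.φ k x * s₂.φ k x := by
    intro x hx
    have h := e2 x hx
    have w1 := s₁.W k hx
    have w2 := s₂.W k hx
    have g1 := f1 x hx
    have g2 := f2 x hx
    have a2 : s₂.χ' k x * s₂.φ k x - s₂.χ k x * s₂.φ' k x = - s₂.D k := by linear_combination w2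
    have a1 : s₁.χ' k x * s₁.φ k x - s₁.χ k x * s₁.φ' k x = - s₁.D k := by linear_combination w1
    simp only [a1, a2] at h
    field_simp at h
    linear_combination -h
  have e4 := hder e3 (fun x hx => ((s₁.hφ k x hx).1.mul (s₁.hφ k x hx).1))
    (fun x hx => ((s₂.hφ k x hx).1.mul (s₂.hφ k x hx).1))
  have e5 := hder e4
    (fun x hx => (((s₁.hφ k x hx).2.mul (s₁.hφ k x hx).1).add
      ((s₁.hφ k x hx).1.mul (s₁.hφ k x hx).2)))
    (fun x hx => (((s₂.hφ k x hx).2.mul (s₂.hφ k x hx).1).add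
      ((s₂.hφ k x hx).1.mul (s₂.hφ k x hx).2)))
  intro x hx
  have h3 := e3 x hx
  have h4 := e4 x hx
  have h5 := e5 x hx
  have g1 := f1 x hx
  have g2 := f2 x hx
  have h4' : s₁.φ k x * s₁.φ' k x = s₂.φ k x * s₂.φ' k x := by linear_combination h4 / 2
  have h6 : s₁.φ' k x ^ 2 = s₂.φ' k x ^ 2 := by
    have : s₁.φ k x ^ 2 * (s₁.φ' k x ^ 2 - s₂.φ' k x ^ 2) = 0 := by
      linear_combination (s₁.φ k x * s₁.φ' k x + s₂.φ k x * s₂.φ' k x) * h4' - s₂.φ' k x ^ 2 * h3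
    rcases mul_eq_zero.1 this with h | h
    · exact absurd (pow_eq_zero_iff two_ne_zero |>.1 h) g1
    · linear_combination h
  have h7 : s₁.φ k x ^ 2 * (p₁ x - p₂ x) = 0 := by
    linear_combination (-1/2) * h5 + h6 - (k^2 + p₂ x) * h3
  rcases mul_eq_zero.1 h7 with h | h
  · exact absurd (pow_eq_zero_iff two_ne_zero |>.1 h) g1
  · linear_combination h

end DN

namespace DN

/-- reflected and shifted potential -/
noncomputable def pot (q : ℝ → ℝ) (c : ℝ) : ℝ → ℂ := fun x => ((q (1 - x) - c : ℝ) : ℂ)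

lemma pot_cont {q : ℝ → ℝ} (hq : ContinuousOn q (Set.Icc 0 1)) (c : ℝ) :
    ContinuousOn (pot q c) (Set.Icc 0 1) := by
  apply Complex.continuous_ofReal.comp_continuousOn
  exact (hq.comp (by fun_prop) (fun x hx => one_sub_mem hx)).sub continuousOn_const

lemma eig_eq {q : ℝ → ℝ} {c μ : ℝ} {ψ : ℝ → ℝ} (s : Sys (pot q c)) (h : IsDNEigenfun q μ ψ)
    {κ : ℂ} (hκ : κ ^ 2 = ((μ + c : ℝ) : ℂ)) :
    ∀ x ∈ Set.Icc (0:ℝ) 1, ((ψ (1 - x) : ℝ) : ℂ) = ((ψ 1 : ℝ) : ℂ) * s.φ κ x := by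
  obtain ⟨ψ', ψ'', h1, h2, -, h4, h5, h6, -⟩ := h
  have hsol : IsSol (fun x => pot q c (1 - x)) (κ^2) (fun x => ((ψ x : ℝ) : ℂ))
      (fun x => ((ψ' x : ℝ) : ℂ)) := by
    intro x hx
    refine ⟨(h1 x hx).ofReal_comp, (h2 x hx).ofReal_comp.congr_deriv ?_⟩
    have : ψ'' x = -((μ + q x) * ψ x) := by linarith [h4 x hx]
    rw [this, hκ]
    simp [pot]
  have := hsol.reflect
  refine Sys.unique this (s.hφ κ) _ s.hp ?_ ?_
  · simp [s.φ0]
  · simp [s.φ0', h6]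

lemma eig_data {q : ℝ → ℝ} {c μ : ℝ} {ψ : ℝ → ℝ} (s : Sys (pot q c)) (h : IsDNEigenfun q μ ψ)
    (hn : DNNormalized ψ) {κ : ℂ} (hκ : κ ^ 2 = ((μ + c : ℝ) : ℂ)) :
    ψ 1 ≠ 0 ∧ s.D κ = 0 ∧
      (((ψ 1) ^ 2 : ℝ) : ℂ) * (∫ t in (0:ℝ)..1, s.φ κ t * s.φ κ t) = 1 ∧
      (ψ 1) ^ 2 * (∫ t in (0:ℝ)..1, ‖s.φ κ t‖ ^ 2) = 1 := by
  have he := eig_eq s h hκ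
  have hn' : ∫ x in (0:ℝ)..1, (ψ (1 - x)) ^ 2 = 1 := by
    rw [intervalIntegral.integral_comp_sub_left (fun x => ψ x ^ 2) 1]
    have hn0 : ∫ z in (0:ℝ)..1, ψ z ^ 2 = 1 := hn
    simpa using hn0
  have h4 : (ψ 1) ^ 2 * (∫ t in (0:ℝ)..1, ‖s.φ κ t‖ ^ 2) = 1 := by
    rw [← intervalIntegral.integral_const_mul]
    refine Eq.trans ?_ hn'
    apply intervalIntegral.integral_congr
    intro x hx
    rw [Set.uIcc_of_le zero_le_one] at hx
    have := congrArg (fun z : ℂ => ‖z‖ ^ 2) (he x hx)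
    simp only [norm_mul, Complex.norm_real, Real.norm_eq_abs, mul_pow, sq_abs] at this
    exact this.symm
  have h3 : (((ψ 1) ^ 2 : ℝ) : ℂ) * (∫ t in (0:ℝ)..1, s.φ κ t * s.φ κ t) = 1 := by
    have : ((∫ x in (0:ℝ)..1, (ψ (1 - x)) ^ 2 : ℝ) : ℂ) = 1 := by rw [hn']; simp
    refine Eq.trans ?_ this
    rw [← intervalIntegral.integral_ofReal, ← intervalIntegral.integral_const_mul]
    apply intervalIntegral.integral_congr
    intro x hx
    rw [Set.uIcc_of_le zero_le_one] at hx
    have := he x hx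
    push_cast
    rw [this]; ring
  have h1 : ψ 1 ≠ 0 := by
    intro h0; rw [h0] at h4; simp at h4
  refine ⟨h1, ?_, h3, h4⟩
  have := he 1 (by simp)
  obtain ⟨-, -, -, -, -, -, h5, -, -⟩ := h
  rw [sub_self, h5] at this
  have h6 : ((ψ 1 : ℝ) : ℂ) ≠ 0 := by exact_mod_cast h1
  simpa [Sys.D, h1] using this.symm

lemma eig_conv {q : ℝ → ℝ} (hq : ContinuousOn q (Set.Icc 0 1)) {c : ℝ} (s : Sys (pot q c)) {κ : ℂ}
    (h : s.D κ = 0) : ∃ μ : ℝ, IsDNEigenvalue q μ ∧ κ ^ 2 = ((μ + c : ℝ) : ℂ) := by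
  have him := s.zero_real (q := fun x => q (1 - x) - c) (fun x _ => rfl) h
  have hre : κ ^ 2 = (((κ ^ 2).re : ℝ) : ℂ) := by
    apply Complex.ext <;> simp [him]
  refine ⟨(κ^2).re - c, ?_, by rw [sub_add_cancel]; exact hre⟩
  have hre' : ∀ x ∈ Set.Icc (0:ℝ) 1, HasDerivAt (fun x => (s.φ κ x).re) (s.φ' κ x).re x ∧
      HasDerivAt (fun x => (s.φ' κ x).re)
        (-(((κ^2).re - c + q (1 - x)) * (s.φ κ x).re)) x := by
    intro x hx
    obtain ⟨h1, h2⟩ := s.hφ κ x hx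
    constructor
    · exact Complex.reCLM.hasFDerivAt.comp_hasDerivAt x h1
    · have := Complex.reCLM.hasFDerivAt.comp_hasDerivAt x h2
      refine HasDerivAt.congr_deriv this ?_
      rw [hre, pot, ← Complex.ofReal_add]
      simp only [Complex.reCLM_apply, Complex.neg_re, Complex.re_ofReal_mul, Complex.ofReal_re]
      ring
  have hl : ∀ x : ℝ, HasDerivAt (fun x : ℝ => 1 - x) (-1) x := fun x => by
    simpa using (hasDerivAt_id x).const_sub 1
  have hψ : ∀ z ∈ Set.Icc (0:ℝ) 1,
      HasDerivAt (fun z => (s.φ κ (1 - z)).re) (-(s.φ' κ (1 - z)).re) z := by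
    intro z hz
    have := HasDerivAt.scomp z (hre' (1 - z) (one_sub_mem hz)).1 (hl z)
    exact this.congr_deriv (by simp)
  refine ⟨fun z => (s.φ κ (1 - z)).re, fun z => -(s.φ' κ (1 - z)).re,
    fun z => -(((κ^2).re - c + q z) * (s.φ κ (1 - z)).re), hψ, ?_, ?_, ?_, ?_, ?_, ?_⟩
  · intro z hz
    have := (HasDerivAt.scomp z (hre' (1 - z) (one_sub_mem hz)).2 (hl z)).neg
    exact this.congr_deriv (by simp)
  · have : ContinuousOn (fun z => (s.φ κ (1 - z)).re) (Set.Icc 0 1) := fun z hz =>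
      (hψ z hz).continuousAt.continuousWithinAt
    exact ((continuousOn_const.add hq).mul this).neg
  · intro z _; ring
  · have : s.φ κ 1 = 0 := h
    simp [this]
  · simp [s.φ0']
  · exact ⟨1, by simp, by simp [s.φ0]⟩

lemma cos_sq_int (t : ℝ) (ht : 1 ≤ t) : 1 / 4 ≤ ∫ x in (0:ℝ)..1, Real.cos (t * x) ^ 2 := by
  have hd : ∀ x ∈ Set.uIcc (0:ℝ) 1, HasDerivAt (fun x : ℝ => x / 2 + Real.sin (2 * t * x) / (4 * t))
      (Real.cos (t * x) ^ 2) x := by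
    intro x _
    have hl : HasDerivAt (fun x : ℝ => 2 * t * x) (2 * t) x := by
      simpa using (hasDerivAt_id x).const_mul (2 * t)
    refine (((hasDerivAt_id x).div_const 2).add (hl.sin.div_const (4 * t))).congr_deriv ?_
    rw [Real.cos_sq, show 2 * t * x = 2 * (t * x) by ring]
    field_simp
    ring
  rw [intervalIntegral.integral_eq_sub_of_hasDerivAt hd
    (by fun_prop : Continuous fun x : ℝ => Real.cos (t * x) ^ 2).continuousOn.intervalIntegrable]
  have h1 := Real.neg_one_le_sin (2 * t * 1)
  have : -(1/4) ≤ Real.sin (2 * t * 1) / (4 * t) := by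
    rw [le_div_iff₀ (by linarith)]; nlinarith
  simp only [mul_zero, Real.sin_zero, zero_div]
  linarith

lemma eig_bound {q : ℝ → ℝ} {c μ : ℝ} {ψ : ℝ → ℝ} (s : Sys (pot q c)) (h : IsDNEigenfun q μ ψ)
    (hn : DNNormalized ψ) {Q : ℝ} (hQ : ∀ x ∈ Set.Icc (0:ℝ) 1, ‖pot q c x‖ ≤ Q)
    {t : ℝ} (ht : 1 ≤ t) (htQ : 16 * Q ≤ t) (htμ : t ^ 2 = μ + c) : (ψ 1) ^ 2 ≤ 16 := by
  have hκ : (t : ℂ) ^ 2 = ((μ + c : ℝ) : ℂ) := by rw [← htμ]; push_cast; rfl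
  have h4 := (eig_data s h hn hκ).2.2.2
  have hnorm : ‖(t:ℂ)‖ = t := by rw [Complex.norm_real, Real.norm_of_nonneg (by linarith)]
  have hpt : ∀ x ∈ Set.Icc (0:ℝ) 1, 1 / 2 * Real.cos (t * x) ^ 2 - 1 / 64 ≤ ‖s.φ t x‖ ^ 2 := by
    intro x hx
    have h1 := (s.bφ hQ (k := (t:ℂ)) (by rw [hnorm]; exact ht) (by rw [hnorm]; exact htQ) x hx).2.2
    simp only [Complex.ofReal_im, abs_zero, zero_mul, Real.exp_zero] at h1
    have h2 : ‖Complex.cos ((t:ℂ) * x)‖ = |Real.cos (t * x)| := by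
      rw [← Complex.ofReal_mul, ← Complex.ofReal_cos, Complex.norm_real, Real.norm_eq_abs]
    have h3 := norm_sub_norm_le (Complex.cos ((t:ℂ) * x)) (s.φ t x)
    rw [norm_sub_rev, h2] at h3
    rw [← sq_abs (Real.cos (t * x))]
    have h5 := norm_nonneg (s.φ t x)
    have h6 := abs_nonneg (Real.cos (t * x))
    have h7 : |Real.cos (t * x)| ≤ ‖s.φ t x‖ + 1 / 8 := by linarith
    nlinarith [sq_nonneg (‖s.φ t x‖ - 1 / 8)]
  have hcont : ContinuousOn (fun x => ‖s.φ t x‖ ^ 2) (Set.uIcc 0 1) := by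
    rw [Set.uIcc_of_le zero_le_one]; exact (s.hφ t).cont.norm.pow 2
  have hIntLow : 1 / 16 ≤ ∫ x in (0:ℝ)..1, ‖s.φ t x‖ ^ 2 := by
    have hc2 : Continuous fun x : ℝ => 1 / 2 * Real.cos (t * x) ^ 2 - 1 / 64 := by fun_prop
    have := intervalIntegral.integral_mono_on (μ := volume) zero_le_one (hc2.intervalIntegrable 0 1)
      hcont.intervalIntegrable hpt
    have hc3 : Continuous fun x : ℝ => 1 / 2 * Real.cos (t * x) ^ 2 := by fun_prop
    have hi : IntervalIntegrable (fun x : ℝ => (1 / 64 : ℝ)) volume 0 1 := intervalIntegrable_const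
    rw [intervalIntegral.integral_sub (hc3.intervalIntegrable 0 1) hi, intervalIntegral.integral_const_mul] at this
    have h1 := cos_sq_int t ht
    simp at this
    linarith
  nlinarith [sq_nonneg (ψ 1)]

end DN

namespace DN

/-- locally uniform summability of the pole series -/
def Good (a : ℕ → ℂ) (μ : ℕ → ℝ) : Prop :=
  ∀ r : ℝ, ∃ N : ℕ, ∀ j ≥ N, ∀ s : ℂ, ‖s‖ < r →
    s + (μ j : ℂ) ≠ 0 ∧ ‖a j / (s + (μ j : ℂ))‖ ≤ 16 * (1 / ((j : ℝ) + 1) ^ 2)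

lemma summable_aux : Summable (fun j : ℕ => 16 * (1 / ((j : ℝ) + 1) ^ 2)) := by
  apply Summable.mul_left
  have := (summable_nat_add_iff (f := fun n : ℕ => 1 / (n : ℝ) ^ 2) 1).2
    (Real.summable_one_div_nat_pow.2 (by norm_num))
  simpa using this

lemma Good.summable {a : ℕ → ℂ} {μ : ℕ → ℝ} (h : Good a μ) (s : ℂ) :
    Summable (fun j => a j / (s + (μ j : ℂ))) := by
  obtain ⟨N, hN⟩ := h (‖s‖ + 1)
  refine Summable.of_norm_bounded_eventually_nat summable_aux ?_
  filter_upwards [Filter.eventually_ge_atTop N] with j hj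
  exact (hN j hj s (by linarith)).2

lemma Good.update {a : ℕ → ℂ} {μ : ℕ → ℝ} (h : Good a μ) (i : ℕ) :
    Good (Function.update a i 0) μ := by
  intro r
  obtain ⟨N, hN⟩ := h r
  refine ⟨N, fun j hj s hs => ⟨(hN j hj s hs).1, ?_⟩⟩
  by_cases hji : j = i
  · subst hji; simp; positivity
  · rw [Function.update_of_ne hji]; exact (hN j hj s hs).2

/-- the pole series -/
noncomputable def ser (a : ℕ → ℂ) (μ : ℕ → ℝ) (s : ℂ) : ℂ := ∑' j, a j / (s + (μ j : ℂ))

lemma Good.diff {a : ℕ → ℂ} {μ : ℕ → ℝ} (h : Good a μ) (s : ℂ)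
    (hs : ∀ j, a j = 0 ∨ s + (μ j : ℂ) ≠ 0) : DifferentiableAt ℂ (ser a μ) s := by
  obtain ⟨N, hN⟩ := h (‖s‖ + 1)
  have heq : ser a μ = fun w => ∑ i ∈ Finset.range N, a i / (w + (μ i : ℂ))
      + ∑' i, a (i + N) / (w + (μ (i + N) : ℂ)) := by
    funext w
    exact ((h.summable w).sum_add_tsum_nat_add N).symm
  rw [heq]
  apply DifferentiableAt.add
  · apply DifferentiableAt.fun_sum
    intro i _
    rcases hs i with h0 | h0
    · simp [h0]
    · exact (differentiableAt_const _).div (by fun_prop) h0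
  · have := Complex.differentiableOn_tsum_of_summable_norm
      (F := fun i w => a (i + N) / (w + (μ (i + N) : ℂ))) (U := Metric.ball 0 (‖s‖ + 1))
      ((summable_nat_add_iff N).2 summable_aux) ?_ Metric.isOpen_ball ?_
    · exact this.differentiableAt (Metric.isOpen_ball.mem_nhds (by simp))
    · intro i w hw
      rw [mem_ball_zero_iff] at hw
      have := (hN (i + N) (by omega) w hw).1
      have hd : DifferentiableAt ℂ (fun w : ℂ => a (i + N) / (w + (μ (i + N) : ℂ))) w :=
        (differentiableAt_const _).div (by fun_prop) this
      exact hd.differentiableWithinAt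
    · intro i w hw
      rw [mem_ball_zero_iff] at hw
      exact (hN (i + N) (by omega) w hw).2

lemma Good.isolated {a : ℕ → ℂ} {μ : ℕ → ℝ} (h : Good a μ) (p : ℂ) :
    ∀ᶠ s in nhdsWithin p {p}ᶜ, ∀ j, s + (μ j : ℂ) ≠ 0 := by
  obtain ⟨N, hN⟩ := h (‖p‖ + 1)
  have h1 : ∀ᶠ s in nhdsWithin p {p}ᶜ, s ∈ Metric.ball (0:ℂ) (‖p‖ + 1) :=
    mem_nhdsWithin_of_mem_nhds (Metric.isOpen_ball.mem_nhds (by simp))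
  have h2 : ∀ᶠ s in nhdsWithin p {p}ᶜ, ∀ j ∈ Finset.range N, s + (μ j : ℂ) ≠ 0 := by
    rw [Filter.eventually_all_finset]
    intro j _
    by_cases hp : p = -(μ j : ℂ)
    · filter_upwards [self_mem_nhdsWithin] with s hs h0
      exact hs (by rw [hp]; exact eq_neg_of_add_eq_zero_left h0)
    · apply mem_nhdsWithin_of_mem_nhds
      have : ContinuousAt (fun s : ℂ => s + (μ j : ℂ)) p := by fun_prop
      exact this.eventually_ne (fun h0 => hp (eq_neg_of_add_eq_zero_left h0))
  filter_upwards [h1, h2] with s hs1 hs2 j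
  by_cases hj : j < N
  · exact hs2 j (Finset.mem_range.2 hj)
  · exact (hN j (by omega) s (mem_ball_zero_iff.1 hs1)).1

lemma Good.lim_zero {a : ℕ → ℂ} {μ : ℕ → ℝ} (h : Good a μ) (p : ℂ)
    (hs : ∀ j, a j = 0 ∨ p + (μ j : ℂ) ≠ 0) :
    Filter.Tendsto (fun s => (s - p) * ser a μ s) (nhdsWithin p {p}ᶜ) (nhds 0) := by
  have h1 := (h.diff p hs).continuousAt
  have h2 : ContinuousAt (fun s => (s - p) * ser a μ s) p := by fun_prop
  have := h2.tendsto
  simp only [sub_self, zero_mul] at this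
  exact this.mono_left nhdsWithin_le_nhds

lemma Good.lim_pole {a : ℕ → ℂ} {μ : ℕ → ℝ} (h : Good a μ) (hμ : Function.Injective μ) (i : ℕ) :
    Filter.Tendsto (fun s => (s - (-(μ i : ℂ))) * ser a μ s)
      (nhdsWithin (-(μ i : ℂ)) {-(μ i : ℂ)}ᶜ) (nhds (a i)) := by
  have h0 := (h.update i).lim_zero (-(μ i : ℂ)) (by
    intro j
    by_cases hji : j = i
    · left; simp [hji]
    · right
      intro h1
      apply hji; apply hμ
      have : (μ j : ℂ) = μ i := by linear_combination h1
      exact_mod_cast this)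
  have h1 := h0.const_add (a i)
  rw [add_zero] at h1
  refine h1.congr' ?_
  filter_upwards [self_mem_nhdsWithin] with s hs
  have hne : s + (μ i : ℂ) ≠ 0 := fun h0 => hs (eq_neg_of_add_eq_zero_left h0)
  have h2 : ser a μ s = a i / (s + (μ i : ℂ)) + ser (Function.update a i 0) μ s := by
    unfold ser
    rw [(h.summable s).tsum_eq_add_tsum_ite i]
    congr 1
    apply tsum_congr
    intro j
    by_cases hji : j = i
    · simp [hji]
    · simp [hji]
  rw [h2, mul_add, sub_neg_eq_add]
  congr 1
  field_simp

lemma ser_unique {a b : ℕ → ℂ} {μ ν : ℕ → ℝ} (ha : Good a μ) (hb : Good b ν)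
    (ha0 : ∀ j, a j ≠ 0) (hb0 : ∀ j, b j ≠ 0) (hμ : StrictMono μ) (hν : StrictMono ν) (C : ℝ)
    (hμC : ∀ j, -C ≤ μ j) (hνC : ∀ j, -C ≤ ν j)
    (heq : ∀ s : ℝ, 0 < s → C < s → ser a μ s = ser b ν s) : μ = ν ∧ a = b := by
  set K : Set ℂ := Set.range (fun j => -(μ j : ℂ)) ∪ Set.range (fun j => -(ν j : ℂ)) with hK
  have hKc : K.Countable := (Set.countable_range _).union (Set.countable_range _)
  have hconn : IsPreconnected Kᶜ :=
    (hKc.isPathConnected_compl_of_one_lt_rank (by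
      rw [Complex.rank_real_complex]; norm_num)).isConnected.isPreconnected
  have hmem : ∀ s : ℂ, s ∈ Kᶜ ↔ (∀ j, s + (μ j : ℂ) ≠ 0) ∧ (∀ j, s + (ν j : ℂ) ≠ 0) := by
    intro s
    simp only [hK, Set.mem_compl_iff, Set.mem_union, Set.mem_range, not_or, not_exists]
    constructor
    · rintro ⟨h1, h2⟩
      exact ⟨fun j h => h1 j (eq_neg_of_add_eq_zero_left h).symm,
        fun j h => h2 j (eq_neg_of_add_eq_zero_left h).symm⟩
    · rintro ⟨h1, h2⟩
      exact ⟨fun j h => h1 j (by rw [← h]; simp), fun j h => h2 j (by rw [← h]; simp)⟩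
  have hev : ∀ p : ℂ, ∀ᶠ s in nhdsWithin p {p}ᶜ, s ∈ Kᶜ := by
    intro p
    filter_upwards [ha.isolated p, hb.isolated p] with s h1 h2
    exact (hmem s).2 ⟨h1, h2⟩
  have hopen : IsOpen Kᶜ := by
    rw [isOpen_iff_mem_nhds]
    intro p hp
    have := hev p
    rw [eventually_nhdsWithin_iff] at this
    filter_upwards [this] with s hs
    by_cases h : s = p
    · rw [h]; exact hp
    · exact hs h
  have hreal : ∀ s : ℝ, C < s → (s : ℂ) ∈ Kᶜ := by
    intro s hs
    rw [hmem]
    constructor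
    · intro j h
      have : s + μ j = 0 := by exact_mod_cast h
      linarith [hμC j]
    · intro j h
      have : s + ν j = 0 := by exact_mod_cast h
      linarith [hνC j]
  have hEq : Set.EqOn (ser a μ) (ser b ν) Kᶜ := by
    have hA : AnalyticOnNhd ℂ (ser a μ) Kᶜ := DifferentiableOn.analyticOnNhd (fun s hs =>
      (ha.diff s (fun j => Or.inr (((hmem s).1 hs).1 j))).differentiableWithinAt) hopen
    have hB : AnalyticOnNhd ℂ (ser b ν) Kᶜ := DifferentiableOn.analyticOnNhd (fun s hs =>
      (hb.diff s (fun j => Or.inr (((hmem s).1 hs).2 j))).differentiableWithinAt) hopen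
    have hC1 : C < |C| + 1 := by linarith [le_abs_self C]
    refine hA.eqOn_of_preconnected_of_frequently_eq hB hconn (hreal (|C| + 1) hC1) ?_
    have hto : Filter.Tendsto (fun s : ℝ => (s : ℂ)) (nhdsWithin (|C| + 1) (Set.Ioi (|C| + 1)))
        (nhdsWithin ((|C| + 1 : ℝ) : ℂ) {((|C| + 1 : ℝ) : ℂ)}ᶜ) := by
      apply tendsto_nhdsWithin_of_tendsto_nhds_of_eventually_within
      · exact (Complex.continuous_ofReal.tendsto _).mono_left nhdsWithin_le_nhds
      · filter_upwards [self_mem_nhdsWithin] with s hs h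
        have : s = |C| + 1 := Complex.ofReal_injective h
        exact absurd this (ne_of_gt hs)
    apply hto.frequently
    apply Filter.Eventually.frequently
    filter_upwards [self_mem_nhdsWithin] with s hs
    have hs' : |C| + 1 < s := hs
    exact heq s (by linarith [abs_nonneg C]) (by linarith)
  have hE : ∀ p : ℂ, (fun s => (s - p) * ser a μ s) =ᶠ[nhdsWithin p {p}ᶜ]
      (fun s => (s - p) * ser b ν s) := by
    intro p
    filter_upwards [hev p] with s hs
    rw [hEq hs]
  have h1 : ∀ i, ∃ j, ν j = μ i := by
    intro i
    by_contra! hne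
    have hl := (ha.lim_pole hμ.injective i).congr' (hE _)
    have hl2 := hb.lim_zero (-(μ i : ℂ)) (fun j => Or.inr (fun h => hne j (by
      have : (ν j : ℂ) = μ i := by linear_combination h
      exact_mod_cast this)))
    exact ha0 i (tendsto_nhds_unique hl hl2)
  have h2 : ∀ i, ∃ j, μ j = ν i := by
    intro i
    by_contra! hne
    have hl := (hb.lim_pole hν.injective i).congr' (hE _).symm
    have hl2 := ha.lim_zero (-(ν i : ℂ)) (fun j => Or.inr (fun h => hne j (by
      have : (μ j : ℂ) = ν i := by linear_combination h
      exact_mod_cast this)))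
    exact hb0 i (tendsto_nhds_unique hl hl2)
  have hμν : μ = ν := by
    rw [← hμ.range_inj hν]
    apply Set.Subset.antisymm
    · rintro _ ⟨i, rfl⟩; exact h1 i
    · rintro _ ⟨i, rfl⟩; exact h2 i
  refine ⟨hμν, ?_⟩
  subst hμν
  funext i
  exact tendsto_nhds_unique ((ha.lim_pole hμ.injective i).congr' (hE _)) (hb.lim_pole hμ.injective i)

lemma good_of_bound {a : ℕ → ℝ} {μ : ℕ → ℝ} {C T : ℝ}
    (hC : ∀ j : ℕ, |μ j - π ^ 2 * ((j : ℝ) + 1 / 2) ^ 2| ≤ C)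
    (ha0 : ∀ j, 0 ≤ a j) (ha : ∀ j, T ≤ μ j → a j ≤ 16) : Good (fun j => (a j : ℂ)) μ := by
  intro r
  obtain ⟨N, hN⟩ := exists_nat_ge (|r| + C + |T|)
  refine ⟨N + 1, fun j hj s hs => ?_⟩
  have hjN : (N : ℝ) + 1 ≤ j := by exact_mod_cast hj
  have hN0 : (0:ℝ) ≤ N := Nat.cast_nonneg N
  have hpi : 9 ≤ π ^ 2 := by nlinarith [Real.pi_gt_three]
  have hlow : ((j : ℝ) + 1) ^ 2 + (|r| + |T|) ≤ μ j := by
    have h1 := (abs_le.1 (hC j)).1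
    have h2 : 9 * ((j : ℝ) + 1 / 2) ^ 2 ≤ π ^ 2 * ((j : ℝ) + 1 / 2) ^ 2 := by gcongr
    nlinarith
  have hr := le_abs_self r
  have hT := le_abs_self T
  have hT0 := abs_nonneg T
  have hpos : (0:ℝ) < ((j:ℝ) + 1) ^ 2 := by positivity
  have ha16 := ha j (by linarith [abs_nonneg r])
  have hnorm : ((j : ℝ) + 1) ^ 2 ≤ ‖s + (μ j : ℂ)‖ := by
    have h1 := norm_sub_norm_le (μ j : ℂ) (-s)
    rw [sub_neg_eq_add, norm_neg, add_comm (μ j : ℂ) s, Complex.norm_real] at h1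
    have := le_abs_self (μ j)
    rw [Real.norm_eq_abs] at h1
    linarith
  refine ⟨fun h0 => ?_, ?_⟩
  · rw [h0, norm_zero] at hnorm; linarith
  · rw [norm_div, Complex.norm_real, Real.norm_of_nonneg (ha0 j), mul_one_div]
    gcongr

lemma good_eig {q : ℝ → ℝ} (hq : ContinuousOn q (Set.Icc (0:ℝ) 1)) {c : ℝ} (s : Sys (pot q c))
    {μ : ℕ → ℝ} {ψ : ℕ → ℝ → ℝ} {C : ℝ}
    (heig : ∀ j : ℕ, IsDNEigenfun q (μ j) (ψ j) ∧ DNNormalized (ψ j))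
    (hC : ∀ j : ℕ, |μ j - π ^ 2 * ((j : ℝ) + 1 / 2) ^ 2| ≤ C) :
    Good (fun j => (((ψ j 1) ^ 2 : ℝ) : ℂ)) μ := by
  obtain ⟨Q, hQ⟩ := isCompact_Icc.exists_bound_of_continuousOn (pot_cont hq c)
  refine good_of_bound (T := (1 + |16 * Q|) ^ 2 - c) hC (fun j => sq_nonneg _) (fun j hj => ?_)
  have h0 := abs_nonneg (16 * Q)
  have hsq : 1 + |16 * Q| ≤ √(μ j + c) := by
    apply Real.le_sqrt_of_sq_le; linarith
  have h1 := le_abs_self (16 * Q)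
  refine eig_bound s (heig j).1 (heig j).2 hQ (t := √(μ j + c)) (by linarith) (by linarith) ?_
  rw [Real.sq_sqrt]
  nlinarith [sq_nonneg (1 + |16 * Q|)]

end DN

/-- the data `G(λ) = ∑ⱼ ψⱼ(1)²/(λ² + μⱼ)`, known for all `λ > 0`,
uniquely determine the potential of the Dirichlet–Neumann problem. -/
theorem inverse_problem_uniqueness
    (q₁ q₂ : ℝ → ℝ)
    (hq₁ : ContinuousOn q₁ (Set.Icc (0:ℝ) 1))
    (hq₂ : ContinuousOn q₂ (Set.Icc (0:ℝ) 1))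
    (μ₁ μ₂ : ℕ → ℝ) (ψ₁ ψ₂ : ℕ → ℝ → ℝ)
    (hmono₁ : StrictMono μ₁) (hmono₂ : StrictMono μ₂)
    (heig₁ : ∀ j : ℕ, IsDNEigenfun q₁ (μ₁ j) (ψ₁ j) ∧ DNNormalized (ψ₁ j))
    (heig₂ : ∀ j : ℕ, IsDNEigenfun q₂ (μ₂ j) (ψ₂ j) ∧ DNNormalized (ψ₂ j))
    (hall₁ : ∀ μ : ℝ, IsDNEigenvalue q₁ μ → ∃ j : ℕ, μ₁ j = μ)
    (hall₂ : ∀ μ : ℝ, IsDNEigenvalue q₂ μ → ∃ j : ℕ, μ₂ j = μ)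
    (C : ℝ)
    (hC₁ : ∀ j : ℕ, |μ₁ j - π ^ 2 * ((j : ℝ) + 1 / 2) ^ 2| ≤ C)
    (hC₂ : ∀ j : ℕ, |μ₂ j - π ^ 2 * ((j : ℝ) + 1 / 2) ^ 2| ≤ C)
    (hdata : ∀ l : ℝ, 0 < l →
      (∀ j : ℕ, l ^ 2 + μ₁ j ≠ 0 ∧ l ^ 2 + μ₂ j ≠ 0) →
      ∑' j : ℕ, (ψ₁ j 1) ^ 2 / (l ^ 2 + μ₁ j)
        = ∑' j : ℕ, (ψ₂ j 1) ^ 2 / (l ^ 2 + μ₂ j)) :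
    ∀ z ∈ Set.Icc (0:ℝ) 1, q₁ z = q₂ z := by
  obtain ⟨s₁⟩ := DN.exists_sys (DN.pot q₁ (C + 1)) (DN.pot_cont hq₁ (C + 1))
  obtain ⟨s₂⟩ := DN.exists_sys (DN.pot q₂ (C + 1)) (DN.pot_cont hq₂ (C + 1))
  have hg₁ := DN.good_eig hq₁ s₁ heig₁ hC₁
  have hg₂ := DN.good_eig hq₂ s₂ heig₂ hC₂
  have hne : ∀ {q : ℝ → ℝ} {μ : ℝ} {ψ : ℝ → ℝ} (s : DN.Sys (DN.pot q (C + 1))),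
      -C ≤ μ → IsDNEigenfun q μ ψ → DNNormalized ψ → (((ψ 1) ^ 2 : ℝ) : ℂ) ≠ 0 := by
    intro q μ ψ s hμ h hn
    have hsq : ((√(μ + (C + 1)) : ℝ) : ℂ) ^ 2 = ((μ + (C + 1) : ℝ) : ℂ) := by
      rw [← Complex.ofReal_pow, Real.sq_sqrt (by linarith)]
    have := (DN.eig_data s h hn hsq).1
    exact_mod_cast pow_ne_zero 2 this
  have hlow : ∀ {μ : ℕ → ℝ}, (∀ j : ℕ, |μ j - π ^ 2 * ((j : ℝ) + 1 / 2) ^ 2| ≤ C) →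
      ∀ j, -C ≤ μ j := by
    intro μ hC j
    have h1 := (abs_le.1 (hC j)).1
    have h2 : 0 ≤ π ^ 2 * ((j : ℝ) + 1 / 2) ^ 2 := by positivity
    linarith
  obtain ⟨hμ, ha⟩ := DN.ser_unique hg₁ hg₂
    (fun j => hne s₁ (hlow hC₁ j) (heig₁ j).1 (heig₁ j).2)
    (fun j => hne s₂ (hlow hC₂ j) (heig₂ j).1 (heig₂ j).2) hmono₁ hmono₂ C (hlow hC₁) (hlow hC₂) (by
      intro s hs hsC
      have h := hdata (√s) (Real.sqrt_pos.2 hs) (fun j => by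
        rw [Real.sq_sqrt hs.le]
        constructor
        · have := hlow hC₁ j
          intro h0; linarith
        · have := hlow hC₂ j
          intro h0; linarith)
      rw [Real.sq_sqrt hs.le] at h
      have h' := congrArg (fun x : ℝ => (x : ℂ)) h
      simp only [Complex.ofReal_tsum] at h'
      unfold DN.ser
      push_cast at h' ⊢
      exact h')
  subst hμ
  have key : ∀ (κ : ℂ) (j : ℕ), κ ^ 2 = ((μ₁ j + (C + 1) : ℝ) : ℂ) →
      κ ≠ 0 ∧ s₁.D κ = 0 ∧ s₂.D κ = 0 ∧ ∃ α : ℂ, α ≠ 0 ∧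
        (∫ t in (0:ℝ)..1, s₁.φ κ t * s₁.φ κ t) = α ∧
        (∫ t in (0:ℝ)..1, s₂.φ κ t * s₂.φ κ t) = α := by
    intro κ j hκ
    obtain ⟨-, hD1, hI1, -⟩ := DN.eig_data s₁ (heig₁ j).1 (heig₁ j).2 hκ
    obtain ⟨-, hD2, hI2, -⟩ := DN.eig_data s₂ (heig₂ j).1 (heig₂ j).2 hκ
    have hj : (((ψ₁ j 1) ^ 2 : ℝ) : ℂ) = (((ψ₂ j 1) ^ 2 : ℝ) : ℂ) := congrFun ha j
    have h0 := hne s₁ (hlow hC₁ j) (heig₁ j).1 (heig₁ j).2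
    rw [← hj] at hI2
    refine ⟨?_, hD1, hD2, _, ?_, rfl, ?_⟩
    · rintro rfl
      have h1 : (0:ℝ) = μ₁ j + (C + 1) := by
        have : ((0:ℝ) : ℂ) = ((μ₁ j + (C + 1) : ℝ) : ℂ) := by rw [← hκ]; simp
        exact Complex.ofReal_injective this
      linarith [hlow hC₁ j]
    · intro hz
      rw [hz, mul_zero] at hI1
      exact zero_ne_one hI1
    · exact mul_left_cancel₀ h0 (hI2.trans hI1.symm)
  have hp := DN.main_sys s₁ s₂ (by
    intro κ hκ
    rcases hκ with h | h
    · obtain ⟨μ, hμ, hκ⟩ := DN.eig_conv hq₁ s₁ h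
      obtain ⟨j, rfl⟩ := hall₁ μ hμ
      exact key κ j hκ
    · obtain ⟨μ, hμ, hκ⟩ := DN.eig_conv hq₂ s₂ h
      obtain ⟨j, rfl⟩ := hall₂ μ hμ
      exact key κ j hκ)
  intro z hz
  have h := hp (1 - z) (DN.one_sub_mem hz)
  have h' : q₁ (1 - (1 - z)) - (C + 1) = q₂ (1 - (1 - z)) - (C + 1) := Complex.ofReal_injective h
  rw [sub_sub_cancel] at h'
  linarith
end

section
/- Let q₁, q₂ : [0,1] → ℝ be continuous. For i = 1,2 let μ⁽ⁱ⁾ : ℕ → ℝ be a strictly increasing sequence enumerating all eigenvalues of the Dirichlet–Neumann problem for qᵢ, and let ψ⁽ⁱ⁾ⱼ be a normalized eigenfunction for μ⁽ⁱ⁾ⱼ. If μ⁽¹⁾ⱼ = μ⁽²⁾ⱼ and ψ⁽¹⁾ⱼ(1)² = ψ⁽²⁾ⱼ(1)² for every j ∈ ℕ, then q₁(z) = q₂(z) for all z ∈ [0,1]. -/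
open MeasureTheory Real

def IsSol (q : ℝ → ℝ) (l : ℂ) (y p : ℝ → ℂ) : Prop :=
  ∀ z ∈ Set.Icc (0:ℝ) 1, HasDerivAt y (p z) z ∧ HasDerivAt p (-(l + (q z : ℂ)) * y z) z

abbrev XX := C(Set.Icc (0:ℝ) 1, ℂ)

noncomputable abbrev pr : ℝ → Set.Icc (0:ℝ) 1 := Set.projIcc (0:ℝ) 1 zero_le_one

lemma pr_coe (z : ℝ) (hz : z ∈ Set.Icc (0:ℝ) 1) : (pr z : ℝ) = z := by
  simp [pr, Set.projIcc_of_mem _ hz]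

lemma cont_pr : Continuous pr := continuous_projIcc

lemma cont_ext (y : XX) : Continuous (fun t => y (pr t)) := y.continuous.comp cont_pr

noncomputable def Jfun (y : XX) : XX :=
  ⟨fun z => ∫ t in (0:ℝ)..z, y (pr t), by
    have := intervalIntegral.continuous_primitive (μ := volume) (f := fun t => y (pr t))
      (fun a b => (cont_ext y).intervalIntegrable a b) 0
    exact this.comp continuous_subtype_val⟩

lemma Jfun_apply (y : XX) (z : Set.Icc (0:ℝ) 1) : Jfun y z = ∫ t in (0:ℝ)..z, y (pr t) := rfl

noncomputable def JJ : XX →L[ℂ] XX :=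
  LinearMap.mkContinuous
    { toFun := Jfun
      map_add' := by
        intro x y
        ext z
        simp only [Jfun_apply, ContinuousMap.add_apply]
        exact intervalIntegral.integral_add ((cont_ext x).intervalIntegrable _ _)
          ((cont_ext y).intervalIntegrable _ _)
      map_smul' := by
        intro c x
        ext z
        simp only [Jfun_apply, ContinuousMap.smul_apply, RingHom.id_apply]
        exact intervalIntegral.integral_smul c _ } 1 (by
    intro y
    rw [one_mul]
    refine (ContinuousMap.norm_le _ (norm_nonneg _)).2 fun z => ?_
    change ‖∫ t in (0:ℝ)..z, y (pr t)‖ ≤ _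
    refine (intervalIntegral.norm_integral_le_of_norm_le_const
      (C := ‖y‖) (fun t _ => y.norm_coe_le_norm _)).trans ?_
    have h1 := z.2.1
    have h2 := z.2.2
    rw [sub_zero, abs_of_nonneg h1]
    nlinarith [norm_nonneg y])

lemma JJ_apply (y : XX) (z : Set.Icc (0:ℝ) 1) : JJ y z = ∫ t in (0:ℝ)..z, y (pr t) := rfl

noncomputable def ee (L : ℝ) : XX := ⟨fun z => (Real.exp (L * z) : ℂ), by fun_prop⟩

lemma ee_mul (L : ℝ) : ee L * ee (-L) = 1 := by
  ext z
  simp only [ee, ContinuousMap.mul_apply, ContinuousMap.coe_mk, ContinuousMap.one_apply]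
  rw [← Complex.ofReal_mul, ← Real.exp_add]
  simp


lemma gen_unit {A : Type*} [NormedCommRing A] [NormedAlgebra ℂ A] [CompleteSpace A]
    (J : A →L[ℂ] A)
    (h : ∀ L : ℝ, 0 < L → ∃ e e' : A, e * e' = 1 ∧ ∀ y, ‖e' * J (e * y)‖ ≤ 1 / L * ‖y‖)
    (g : A) : IsUnit (1 + J * J * ContinuousLinearMap.mul ℂ A g) := by
  let MM : A → (A →L[ℂ] A) := fun g => ContinuousLinearMap.mul ℂ A g
  have MM_mul : ∀ g h : A, MM g * MM h = MM (g * h) := by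
    intro g h
    ext1 y
    simp [MM, mul_assoc]
  have MM_one : MM 1 = 1 := by
    ext1 y
    simp [MM]
  set L : ℝ := ‖MM g‖ + 1 with hLdef
  have hL : 1 ≤ L := by linarith [norm_nonneg (MM g)]
  have hL0 : 0 < L := by linarith
  obtain ⟨e, e', he, hKn⟩ := h L hL0
  set K := MM e' * J * MM e with hK
  have hE : MM e * MM e' = 1 := by rw [MM_mul, he, MM_one]
  have hE' : MM e' * MM e = 1 := by rw [MM_mul, mul_comm, he, MM_one]
  have hc : MM g * MM e' = MM e' * MM g := by rw [MM_mul, MM_mul, mul_comm]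
  have hn : ‖-(K * K * MM g)‖ < 1 := by
    rw [norm_neg]
    have hk : ‖K‖ ≤ 1 / L :=
      ContinuousLinearMap.opNorm_le_bound _ (by positivity) fun y => hKn y
    have hk1 : ‖K‖ ≤ 1 := hk.trans (by rw [div_le_one hL0]; exact hL)
    calc ‖K * K * MM g‖ ≤ ‖K * K‖ * ‖MM g‖ := norm_mul_le _ _
      _ ≤ (‖K‖ * ‖K‖) * ‖MM g‖ := by gcongr; exact norm_mul_le _ _
      _ ≤ (1 * (1 / L)) * ‖MM g‖ := by gcongr
      _ < 1 := by
        rw [one_mul, one_div, inv_mul_lt_iff₀ hL0]; linarith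
  have hu := isUnit_one_sub_of_norm_lt_one hn
  rw [sub_neg_eq_add] at hu
  have hEu : IsUnit (MM e) := ⟨⟨_, _, hE, hE'⟩, rfl⟩
  have hEu' : IsUnit (MM e') := ⟨⟨_, _, hE', hE⟩, rfl⟩
  have := (hEu.mul hu).mul hEu'
  have e : MM e * (1 + K * K * MM g) * MM e' = 1 + J * J * MM g := by
    have e1 : MM e * (K * K * MM g) * MM e'
        = (MM e * MM e') * J * (MM e * MM e') * J * (MM e * (MM g * MM e')) := by
      rw [hK]; simp only [mul_assoc]
    rw [mul_add, add_mul, mul_one, hE, e1, hE, hc, ← mul_assoc (MM e), hE]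
    simp
  rwa [e] at this

lemma gen_sol {A : Type*} [NormedCommRing A] [NormedAlgebra ℂ A] [CompleteSpace A]
    (J : A →L[ℂ] A)
    (h : ∀ L : ℝ, 0 < L → ∃ e e' : A, e * e' = 1 ∧ ∀ y, ‖e' * J (e * y)‖ ≤ 1 / L * ‖y‖)
    (Q f : A) : ∃ y : ℂ → A, Differentiable ℂ y ∧
      ∀ l, y l + J (J ((l • (1 : A) + Q) * y l)) = f := by
  let G : ℂ → A := fun l => l • (1 : A) + Q
  let T : ℂ → (A →L[ℂ] A) := fun l => 1 + J * J * ContinuousLinearMap.mul ℂ A (G l)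
  have hT : ∀ l, IsUnit (T l) := fun l => gen_unit J h (G l)
  have hG : Differentiable ℂ G := by
    intro l
    exact (differentiableAt_id.smul_const _).add_const _
  have hTG : Differentiable ℂ T := by
    intro l
    have h1 : DifferentiableAt ℂ (fun l => ContinuousLinearMap.mul ℂ A (G l)) l :=
      (ContinuousLinearMap.mul ℂ A).differentiableAt.comp l (hG l)
    exact (h1.const_mul (J * J)).const_add 1
  refine ⟨fun l => Ring.inverse (T l) f, ?_, ?_⟩
  · intro l
    have h1 : DifferentiableAt ℂ (fun l => Ring.inverse (T l)) l :=
      (differentiableAt_inverse (𝕜 := ℂ) (hT l)).comp l (hTG l)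
    exact h1.clm_apply (differentiableAt_const f)
  · intro l
    have := Ring.mul_inverse_cancel _ (hT l)
    exact congrArg (fun T : A →L[ℂ] A => T f) this

lemma KK_norm (L : ℝ) (hL : 0 < L) (y : XX) :
    ‖ee (-L) * JJ (ee L * y)‖ ≤ 1 / L * ‖y‖ := by
  refine (ContinuousMap.norm_le _ (by positivity)).2 fun z => ?_
  have e1 : (ee (-L) * JJ (ee L * y)) z
      = (Real.exp (-L * z) : ℂ) * ∫ t in (0:ℝ)..z, ee L (pr t) * y (pr t) := by
    simp [JJ_apply, ee]
  rw [e1, norm_mul, Complex.norm_real, Real.norm_eq_abs, abs_of_pos (Real.exp_pos _)]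
  have hz := z.2.1
  have e2 : ‖∫ t in (0:ℝ)..z, ee L (pr t) * y (pr t)‖ ≤ ∫ t in (0:ℝ)..z, Real.exp (L * t) * ‖y‖ := by
    refine intervalIntegral.norm_integral_le_of_norm_le hz ?_ ?_
    · refine Filter.Eventually.of_forall fun t ht => ?_
      have : (pr t : ℝ) = t := pr_coe t ⟨ht.1.le, ht.2.trans z.2.2⟩
      rw [norm_mul]
      simp only [ee, ContinuousMap.coe_mk, this]
      rw [Complex.norm_real, Real.norm_eq_abs, abs_of_pos (Real.exp_pos _)]
      gcongr
      exact y.norm_coe_le_norm _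
    · exact (by fun_prop : Continuous _).intervalIntegrable _ _
  have e3 : ∫ t in (0:ℝ)..z, Real.exp (L * t) * ‖y‖ = (Real.exp (L * z) - 1) / L * ‖y‖ := by
    rw [intervalIntegral.integral_mul_const, intervalIntegral.integral_comp_mul_left _ hL.ne']
    simp only [mul_zero, Real.exp_zero, integral_exp, smul_eq_mul]
    ring
  rw [e3] at e2
  refine (mul_le_mul_of_nonneg_left e2 (Real.exp_pos _).le).trans ?_
  have h : Real.exp (-L * z) * Real.exp (L * z) = 1 := by
    rw [← Real.exp_add]; simp
  calc Real.exp (-L * z) * ((Real.exp (L * z) - 1) / L * ‖y‖)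
      = (Real.exp (-L * z) * Real.exp (L * z) - Real.exp (-L*z)) * (1 / L * ‖y‖) := by ring
    _ ≤ 1 * (1 / L * ‖y‖) := by
      gcongr
      rw [h]; linarith [Real.exp_pos (-L*z)]
    _ = _ := one_mul _

theorem exists_sol (q : ℝ → ℝ) (hq : Continuous q) (a b : ℂ) :
    ∃ Y P : ℂ → ℝ → ℂ, (∀ l, IsSol q l (Y l) (P l)) ∧ (∀ l, Y l 0 = a) ∧ (∀ l, P l 0 = b) ∧
      (∀ z ∈ Set.Icc (0:ℝ) 1, Differentiable ℂ (fun l => Y l z)) ∧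
      Continuous (fun x : ℂ × ℝ => Y x.1 x.2) := by
  let qc : XX := ⟨fun z => (q z : ℂ), by fun_prop⟩
  let f : XX := ⟨fun z => a + b * (z : ℝ), by fun_prop⟩
  obtain ⟨y, hy, hTy⟩ := gen_sol JJ (fun L hL => ⟨ee L, ee (-L), ee_mul L, KK_norm L hL⟩) qc f
  let yt : ℂ → ℝ → ℂ := fun l z => y l (pr z)
  have hyt : Continuous (fun x : ℂ × ℝ => yt x.1 x.2) := by
    have h1 : Continuous (fun x : ℂ × ℝ => (y x.1, pr x.2)) :=
      (hy.continuous.comp continuous_fst).prodMk (cont_pr.comp continuous_snd)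
    exact ContinuousEval.continuous_eval.comp h1
  let g : ℂ → ℝ → ℂ := fun l z => (l + (q z : ℂ)) * yt l z
  have hg : Continuous (fun x : ℂ × ℝ => g x.1 x.2) := by
    refine Continuous.mul ?_ hyt
    fun_prop
  have hg1 : ∀ l, Continuous (g l) := fun l => hg.comp (Continuous.prodMk_right l)
  let P : ℂ → ℝ → ℂ := fun l z => b - ∫ t in (0:ℝ)..z, g l t
  have hP : Continuous (fun x : ℂ × ℝ => P x.1 x.2) := by
    refine continuous_const.sub ?_
    exact intervalIntegral.continuous_parametric_intervalIntegral_of_continuous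
      (f := fun (x : ℂ × ℝ) t => g x.1 t) (s := fun x => x.2) (by
        exact hg.comp ((continuous_fst.comp continuous_fst).prodMk continuous_snd)) continuous_snd
  have hP1 : ∀ l, Continuous (P l) := fun l => hP.comp (Continuous.prodMk_right l)
  let Y : ℂ → ℝ → ℂ := fun l z => a + ∫ t in (0:ℝ)..z, P l t
  have hY : Continuous (fun x : ℂ × ℝ => Y x.1 x.2) := by
    refine continuous_const.add ?_
    exact intervalIntegral.continuous_parametric_intervalIntegral_of_continuous
      (f := fun (x : ℂ × ℝ) t => P x.1 t) (s := fun x => x.2) (by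
        exact hP.comp ((continuous_fst.comp continuous_fst).prodMk continuous_snd)) continuous_snd
  have key : ∀ l, ∀ z ∈ Set.Icc (0:ℝ) 1, Y l z = yt l z := by
    intro l z hz
    have h1 := congrArg (fun u : XX => u (pr z)) (hTy l)
    have h2 : yt l z + ∫ t in (0:ℝ)..z, JJ ((l • (1 : XX) + qc) * y l) (pr t) = a + b * z := by
      simp only [ContinuousMap.add_apply] at h1
      rw [JJ_apply, pr_coe z hz] at h1
      refine h1.trans ?_
      simp only [f, ContinuousMap.coe_mk, pr_coe z hz]
    have h3 : ∫ t in (0:ℝ)..z, JJ ((l • (1 : XX) + qc) * y l) (pr t) = ∫ t in (0:ℝ)..z, (b - P l t) := by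
      refine intervalIntegral.integral_congr fun t ht => ?_
      rw [Set.uIcc_of_le hz.1] at ht
      have ht' : t ∈ Set.Icc (0:ℝ) 1 := ⟨ht.1, ht.2.trans hz.2⟩
      simp only [P, sub_sub_cancel]
      rw [JJ_apply, pr_coe t ht']
      refine intervalIntegral.integral_congr fun r hr => ?_
      rw [Set.uIcc_of_le ht.1] at hr
      have hr' : r ∈ Set.Icc (0:ℝ) 1 := ⟨hr.1, hr.2.trans ht'.2⟩
      simp [g, yt, qc, pr_coe r hr']
    rw [h3, intervalIntegral.integral_sub (continuous_const.intervalIntegrable _ _)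
      ((hP1 l).intervalIntegrable _ _)] at h2
    simp only [intervalIntegral.integral_const, sub_zero, Complex.real_smul] at h2
    simp only [Y]
    linear_combination -h2
  refine ⟨Y, P, ?_, ?_, ?_, ?_, hY⟩
  · intro l z hz
    constructor
    · exact ((hP1 l).integral_hasStrictDerivAt 0 z).hasDerivAt.const_add a
    · have := ((hg1 l).integral_hasStrictDerivAt 0 z).hasDerivAt.const_sub b
      rw [key l z hz, neg_mul]
      exact this
  · intro l; simp [Y]
  · intro l; simp [P]
  · intro z hz
    have : (fun l => Y l z) = fun l => y l (pr z) := funext fun l => key l z hz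
    rw [this]
    intro l
    exact (ContinuousMap.evalCLM ℂ (pr z)).differentiableAt.comp l (hy l)

lemma IsSol.reflect {q : ℝ → ℝ} {l : ℂ} {y p : ℝ → ℂ} (h : IsSol q l y p) :
    IsSol (fun z => q (1 - z)) l (fun z => y (1 - z)) (fun z => -p (1 - z)) := by
  intro z hz
  have hz' : 1 - z ∈ Set.Icc (0:ℝ) 1 := ⟨by linarith [hz.2], by linarith [hz.1]⟩
  obtain ⟨h1, h2⟩ := h _ hz'
  have hd : HasDerivAt (fun z : ℝ => 1 - z) (-1) z := (hasDerivAt_id z).const_sub 1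
  constructor
  · have := h1.scomp z hd
    exact this.congr_deriv (by simp)
  · have := (h2.scomp z hd).neg
    exact this.congr_deriv (by simp)

lemma IsSol.contY {q : ℝ → ℝ} {l : ℂ} {y p : ℝ → ℂ} (h : IsSol q l y p) :
    ContinuousOn y (Set.Icc 0 1) := fun z hz => (h z hz).1.continuousAt.continuousWithinAt

lemma IsSol.contP {q : ℝ → ℝ} {l : ℂ} {y p : ℝ → ℂ} (h : IsSol q l y p) :
    ContinuousOn p (Set.Icc 0 1) := fun z hz => (h z hz).2.continuousAt.continuousWithinAt

lemma IsSol.comb {q : ℝ → ℝ} {l : ℂ} {y p u w : ℝ → ℂ} (h : IsSol q l y p)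
    (h' : IsSol q l u w) (c : ℂ) :
    IsSol q l (fun z => y z - c * u z) (fun z => p z - c * w z) := by
  intro z hz
  refine ⟨(h z hz).1.sub ((h' z hz).1.const_mul c), ?_⟩
  have := (h z hz).2.sub ((h' z hz).2.const_mul c)
  exact this.congr_deriv (by ring)

lemma IsSol.zero_left {q : ℝ → ℝ} (hq : Continuous q) {l : ℂ} {y p : ℝ → ℂ} (h : IsSol q l y p)
    (h0 : y 0 = 0) (h1 : p 0 = 0) : ∀ z ∈ Set.Icc (0:ℝ) 1, y z = 0 := by
  obtain ⟨M, hM⟩ := (isCompact_Icc (a := (0:ℝ)) (b := 1)).exists_bound_of_continuousOn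
    (f := fun z => l + (q z : ℂ)) (by fun_prop)
  have hM0 : 0 ≤ M := (norm_nonneg _).trans (hM 0 (by simp))
  let v : ℝ → ℂ × ℂ → ℂ × ℂ := fun t x => (x.2, -(l + (q t : ℂ)) * x.1)
  have hv : ∀ t ∈ Set.Ico (0:ℝ) 1, LipschitzOnWith (Real.toNNReal (M + 1)) (v t) Set.univ := by
    intro t ht
    refine LipschitzOnWith.of_dist_le_mul fun x _ x' _ => ?_
    rw [Real.coe_toNNReal _ (by linarith), dist_eq_norm, dist_eq_norm]
    have e : v t x - v t x' = ((x - x').2, -(l + (q t : ℂ)) * (x - x').1) := by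
      simp only [v, Prod.mk_sub_mk, Prod.snd_sub, Prod.fst_sub]
      congr 1
      ring
    rw [e, Prod.norm_mk]
    refine max_le ?_ ?_
    · calc ‖(x - x').2‖ ≤ ‖x - x'‖ := norm_snd_le _
        _ ≤ _ := by nlinarith [norm_nonneg (x - x')]
    · rw [norm_mul, norm_neg]
      have := hM t ⟨ht.1, ht.2.le⟩
      have h3 := norm_fst_le (x - x')
      have h4 := norm_nonneg (x - x').1
      calc _ ≤ M * ‖x - x'‖ := by gcongr
        _ ≤ _ := by nlinarith [norm_nonneg (x - x')]
  have := ODE_solution_unique_of_mem_Icc_right (f := fun t => (y t, p t)) (g := fun _ => (0, 0)) hv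
    (h.contY.prodMk h.contP)
    (fun t ht => by
      have ht' : t ∈ Set.Icc (0:ℝ) 1 := ⟨ht.1, ht.2.le⟩
      exact ((h t ht').1.prodMk (h t ht').2).hasDerivWithinAt)
    (fun _ _ => trivial) continuousOn_const
    (fun t _ => by
      have := (hasDerivAt_const t ((0:ℂ),(0:ℂ))).hasDerivWithinAt (s := Set.Ici t)
      convert this using 1
      simp [v]) (fun _ _ => trivial) (by simp [h0, h1])
  intro z hz
  exact congrArg Prod.fst (this hz)

lemma IsSol.zero_right {q : ℝ → ℝ} (hq : Continuous q) {l : ℂ} {y p : ℝ → ℂ} (h : IsSol q l y p)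
    (h0 : y 1 = 0) (h1 : p 1 = 0) : ∀ z ∈ Set.Icc (0:ℝ) 1, y z = 0 := by
  intro z hz
  have := h.reflect.zero_left (by fun_prop) (by simpa using h0) (by simpa using h1) (1 - z)
    ⟨by linarith [hz.2], by linarith [hz.1]⟩
  simpa using this

lemma IsSol.wronskian {q : ℝ → ℝ} {l m : ℂ} {y p u w : ℝ → ℂ} (h : IsSol q l y p)
    (h' : IsSol q m u w) {a b : ℝ} (ha : 0 ≤ a) (hab : a ≤ b) (hb : b ≤ 1) :
    (y b * w b - p b * u b) - (y a * w a - p a * u a) = (l - m) * ∫ z in a..b, y z * u z := by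
  have hsub : Set.Icc a b ⊆ Set.Icc 0 1 := Set.Icc_subset_Icc ha hb
  rw [← intervalIntegral.integral_const_mul]
  symm
  refine intervalIntegral.integral_eq_sub_of_hasDerivAt (f := fun z => y z * w z - p z * u z) ?_ ?_
  · intro z hz
    rw [Set.uIcc_of_le hab] at hz
    obtain ⟨h1, h2⟩ := h z (hsub hz)
    obtain ⟨h3, h4⟩ := h' z (hsub hz)
    have := (h1.mul h4).sub (h2.mul h3)
    exact this.congr_deriv (by ring)
  · refine ContinuousOn.intervalIntegrable ?_
    rw [Set.uIcc_of_le hab]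
    exact continuousOn_const.mul ((h.contY.mono hsub).mul (h'.contY.mono hsub))

lemma IsSol.conj {q : ℝ → ℝ} {l : ℂ} {y p : ℝ → ℂ} (h : IsSol q l y p) :
    IsSol q (starRingEnd ℂ l) (fun z => starRingEnd ℂ (y z)) (fun z => starRingEnd ℂ (p z)) := by
  intro z hz
  obtain ⟨h1, h2⟩ := h z hz
  refine ⟨?_, ?_⟩
  · exact (Complex.conjCLE.toContinuousLinearMap.hasFDerivAt.comp_hasDerivAt z h1)
  · have := (Complex.conjCLE.toContinuousLinearMap.hasFDerivAt.comp_hasDerivAt z h2)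
    exact this.congr_deriv (by simp)

/-- a solution with Neumann condition at `1` and nonreal spectral parameter never vanishes -/
lemma IsSol.ne_zero {q : ℝ → ℝ} {l : ℂ} {y p : ℝ → ℂ} (h : IsSol q l y p)
    (hl : l.im ≠ 0) (h0 : y 1 = 1) (h1 : p 1 = 0) : ∀ z ∈ Set.Icc (0:ℝ) 1, y z ≠ 0 := by
  intro z hz hzero
  have hz1 : z < 1 := lt_of_le_of_ne hz.2 (by rintro rfl; rw [h0] at hzero; exact one_ne_zero hzero)
  have hw := h.wronskian h.conj hz.1 hz.2 le_rfl
  simp only [h1, hzero, map_zero, mul_zero, zero_mul, sub_zero] at hw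
  have hne : l - starRingEnd ℂ l ≠ 0 := by
    intro hh
    apply hl
    have := congrArg Complex.im hh
    simp at this
    linarith
  have hinteg := (mul_eq_zero.1 hw.symm).resolve_left hne
  have e : ∀ t, y t * starRingEnd ℂ (y t) = ((Complex.normSq (y t) : ℝ) : ℂ) :=
    fun t => Complex.mul_conj _
  simp only [e] at hinteg
  rw [intervalIntegral.integral_ofReal] at hinteg
  have hinteg2 : ∫ t in z..1, Complex.normSq (y t) = 0 := by exact_mod_cast hinteg
  have hpos : 0 < ∫ t in z..1, Complex.normSq (y t) := by
    refine intervalIntegral.integral_pos hz1 ?_ (fun _ _ => Complex.normSq_nonneg _)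
      ⟨1, ⟨hz.2, le_rfl⟩, by simp [h0]⟩
    exact Complex.continuous_normSq.comp_continuousOn
      (h.contY.mono (Set.Icc_subset_Icc hz.1 le_rfl))
  linarith

lemma norm_exp_le (w : ℂ) : ‖Complex.exp (w * Complex.I)‖ ≤ Real.exp |w.im| := by
  rw [Complex.norm_exp]
  apply Real.exp_le_exp.2
  simp
  exact neg_le_abs _

lemma norm_exp_le' (w : ℂ) : ‖Complex.exp (-w * Complex.I)‖ ≤ Real.exp |w.im| := by
  have := norm_exp_le (-w)
  simpa using this

lemma norm_cos_le_exp (w : ℂ) : ‖Complex.cos w‖ ≤ Real.exp |w.im| := by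
  rw [Complex.cos, norm_div]
  have := norm_add_le (Complex.exp (w * Complex.I)) (Complex.exp (-w * Complex.I))
  have := norm_exp_le w
  have := norm_exp_le' w
  rw [Complex.norm_ofNat]
  linarith

lemma norm_sin_le_exp (w : ℂ) : ‖Complex.sin w‖ ≤ Real.exp |w.im| := by
  rw [Complex.sin, norm_div, norm_mul, Complex.norm_I]
  have := norm_sub_le (Complex.exp (-w * Complex.I)) (Complex.exp (w * Complex.I))
  have := norm_exp_le w
  have := norm_exp_le' w
  rw [Complex.norm_ofNat]
  linarith

lemma IsSol.integral_eq {q : ℝ → ℝ} (hq : Continuous q) {k : ℂ} (hk : k ≠ 0) {y p : ℝ → ℂ}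
    (h : IsSol q (k ^ 2) y p) {z : ℝ} (hz : z ∈ Set.Icc (0:ℝ) 1) :
    y z = (Complex.cos (k * z) * y 0 + Complex.sin (k * z) / k * p 0)
      - ∫ t in (0:ℝ)..z, Complex.sin (k * (z - t)) / k * (q t * y t) := by
  have hsub : Set.Icc 0 z ⊆ Set.Icc (0:ℝ) 1 := Set.Icc_subset_Icc le_rfl hz.2
  have := intervalIntegral.integral_eq_sub_of_hasDerivAt (a := 0) (b := z)
    (f := fun t : ℝ => Complex.cos (k * (z - t)) * y t + Complex.sin (k * (z - t)) / k * p t)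
    (f' := fun t : ℝ => -(Complex.sin (k * (z - t)) / k * (q t * y t))) ?_ ?_
  · rw [intervalIntegral.integral_neg] at this
    simp at this
    linear_combination -this
  · intro t ht
    rw [Set.uIcc_of_le hz.1] at ht
    obtain ⟨h1, h2⟩ := h t (hsub ht)
    have hd : HasDerivAt (fun t : ℝ => k * ((z:ℂ) - t)) (-k) t := by
      have := ((Complex.ofRealCLM.hasDerivAt (x := t)).const_sub (z:ℂ)).const_mul k
      simpa using this
    have hc := (Complex.hasDerivAt_cos (k * ((z:ℂ) - t))).comp t hd
    have hs := (Complex.hasDerivAt_sin (k * ((z:ℂ) - t))).comp t hd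
    have := (hc.mul h1).add ((hs.div_const k).mul h2)
    refine this.congr_deriv ?_
    simp only [Function.comp_apply]
    field_simp
    ring
  · refine ContinuousOn.intervalIntegrable ?_
    rw [Set.uIcc_of_le hz.1]
    have := h.contY.mono hsub
    fun_prop

lemma IsSol.diff_bound {q : ℝ → ℝ} (hq : Continuous q) {M : ℝ}
    (hM : ∀ z ∈ Set.Icc (0:ℝ) 1, |q z| ≤ M) {k : ℂ} (hk : k ≠ 0) {y p : ℝ → ℂ}
    (h : IsSol q (k ^ 2) y p) {U : ℝ}
    (hU : ∀ z ∈ Set.Icc (0:ℝ) 1, ‖y z‖ ≤ U * Real.exp (|k.im| * z)) {z : ℝ}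
    (hz : z ∈ Set.Icc (0:ℝ) 1) :
    ‖y z - (Complex.cos (k * z) * y 0 + Complex.sin (k * z) / k * p 0)‖
      ≤ M * U / ‖k‖ * Real.exp (|k.im| * z) := by
  have hk0 : 0 < ‖k‖ := norm_pos_iff.2 hk
  have hM0 : 0 ≤ M := (abs_nonneg _).trans (hM z hz)
  have hU0 : 0 ≤ U := by
    have := (norm_nonneg _).trans (hU 0 (by simp))
    simpa using this
  rw [h.integral_eq hq hk hz, sub_sub_cancel_left, norm_neg]
  have := intervalIntegral.norm_integral_le_of_norm_le_const (a := 0) (b := z)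
    (f := fun t : ℝ => Complex.sin (k * (z - t)) / k * (q t * y t))
    (C := M * U / ‖k‖ * Real.exp (|k.im| * z)) ?_
  · refine this.trans ?_
    rw [sub_zero, abs_of_nonneg hz.1]
    exact mul_le_of_le_one_right (by positivity) hz.2
  · intro t ht
    rw [Set.uIoc_of_le hz.1] at ht
    have ht' : t ∈ Set.Icc (0:ℝ) 1 := ⟨ht.1.le, ht.2.trans hz.2⟩
    have h1 : ‖Complex.sin (k * (z - t))‖ ≤ Real.exp (|k.im| * (z - t)) := by
      have := norm_sin_le_exp (k * (z - t))
      have e : (k * ((z:ℂ) - t)).im = k.im * (z - t) := by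
        rw [← Complex.ofReal_sub, Complex.im_mul_ofReal]
      rwa [e, abs_mul, abs_of_nonneg (sub_nonneg.2 ht.2)] at this
    rw [norm_mul, norm_div, norm_mul, Complex.norm_real, Real.norm_eq_abs]
    have e : Real.exp (|k.im| * z) = Real.exp (|k.im| * (z - t)) * Real.exp (|k.im| * t) := by
      rw [← Real.exp_add]; ring_nf
    calc _ ≤ Real.exp (|k.im| * (z - t)) / ‖k‖ * (M * (U * Real.exp (|k.im| * t))) := by
          gcongr
          · exact hM t ht'
          · exact hU t ht'
      _ = _ := by rw [e]; ring

lemma IsSol.bound {q : ℝ → ℝ} (hq : Continuous q) {M : ℝ}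
    (hM : ∀ z ∈ Set.Icc (0:ℝ) 1, |q z| ≤ M) {k : ℂ} (hk : k ≠ 0) (hkM : 2 * M ≤ ‖k‖) {y p : ℝ → ℂ}
    (h : IsSol q (k ^ 2) y p) {A : ℝ}
    (hA : ∀ z ∈ Set.Icc (0:ℝ) 1, ‖Complex.cos (k * z) * y 0 + Complex.sin (k * z) / k * p 0‖
      ≤ A * Real.exp (|k.im| * z)) :
    ∀ z ∈ Set.Icc (0:ℝ) 1, ‖y z‖ ≤ 2 * A * Real.exp (|k.im| * z) := by
  have hk0 : 0 < ‖k‖ := norm_pos_iff.2 hk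
  obtain ⟨x, hx, hmax⟩ := (isCompact_Icc (a := (0:ℝ)) (b := 1)).exists_isMaxOn
    (f := fun z => ‖y z‖ * Real.exp (-(|k.im| * z))) ⟨0, by simp⟩ (by
      have := h.contY
      fun_prop)
  set U := ‖y x‖ * Real.exp (-(|k.im| * x)) with hUd
  have hex : ∀ z : ℝ, Real.exp (-(|k.im| * z)) * Real.exp (|k.im| * z) = 1 := by
    intro z; rw [← Real.exp_add]; simp
  have hU : ∀ z ∈ Set.Icc (0:ℝ) 1, ‖y z‖ ≤ U * Real.exp (|k.im| * z) := by
    intro z hz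
    have h1 : ‖y z‖ * Real.exp (-(|k.im| * z)) ≤ U := hmax hz
    calc ‖y z‖ = ‖y z‖ * Real.exp (-(|k.im| * z)) * Real.exp (|k.im| * z) := by
          rw [mul_assoc, hex, mul_one]
      _ ≤ _ := by gcongr
  have hU0 : 0 ≤ U := by positivity
  have hUA : U ≤ 2 * A := by
    have h1 := h.diff_bound hq hM hk hU hx
    have h2 := hA x hx
    have h3 : ‖y x‖ ≤ (A + M * U / ‖k‖) * Real.exp (|k.im| * x) := by
      have := norm_sub_norm_le (y x) (Complex.cos (k * x) * y 0 + Complex.sin (k * x) / k * p 0)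
      linarith
    have h4 : U ≤ A + M * U / ‖k‖ := by
      calc U ≤ (A + M * U / ‖k‖) * Real.exp (|k.im| * x) * Real.exp (-(|k.im| * x)) := by
            rw [hUd]; gcongr
        _ = _ := by rw [mul_assoc, mul_comm (Real.exp _), hex, mul_one]
    have h5 : M * U / ‖k‖ ≤ U / 2 := by
      rw [div_le_iff₀ hk0]
      nlinarith
    linarith
  intro z hz
  exact (hU z hz).trans (by gcongr)

structure SolData (q : ℝ → ℝ) where
  φ : ℂ → ℝ → ℂ
  φ' : ℂ → ℝ → ℂ
  s : ℂ → ℝ → ℂ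
  s' : ℂ → ℝ → ℂ
  M : ℝ
  solφ : ∀ l, IsSol q l (φ l) (φ' l)
  sols : ∀ l, IsSol q l (s l) (s' l)
  φ1 : ∀ l, φ l 1 = 1
  dphi1 : ∀ l, φ' l 1 = 0
  s0 : ∀ l, s l 0 = 0
  ds0 : ∀ l, s' l 0 = 1
  diffφ : ∀ z ∈ Set.Icc (0:ℝ) 1, Differentiable ℂ (fun l => φ l z)
  diffs : ∀ z ∈ Set.Icc (0:ℝ) 1, Differentiable ℂ (fun l => s l z)
  contφ : Continuous (fun x : ℂ × ℝ => φ x.1 x.2)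
  hM : 0 ≤ M
  estφ : ∀ k : ℂ, k ≠ 0 → 2 * M ≤ ‖k‖ → ∀ z ∈ Set.Icc (0:ℝ) 1,
    ‖φ (k ^ 2) z‖ ≤ 2 * Real.exp (|k.im| * (1 - z))
  ests : ∀ k : ℂ, k ≠ 0 → 2 * M ≤ ‖k‖ → ∀ z ∈ Set.Icc (0:ℝ) 1,
    ‖s (k ^ 2) z‖ ≤ 2 * (1 / ‖k‖) * Real.exp (|k.im| * z)
  estΔ : ∀ k : ℂ, k ≠ 0 → 2 * M ≤ ‖k‖ →
    ‖φ (k ^ 2) 0 - Complex.cos k‖ ≤ M * 2 / ‖k‖ * Real.exp |k.im|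

lemma im_mul_aux (k : ℂ) {z : ℝ} (hz : 0 ≤ z) : |(k * (z:ℂ)).im| = |k.im| * z := by
  rw [Complex.im_mul_ofReal, abs_mul, abs_of_nonneg hz]

lemma exists_data (q : ℝ → ℝ) (hq : Continuous q) : Nonempty (SolData q) := by
  obtain ⟨M, hM⟩ := (isCompact_Icc (a := (0:ℝ)) (b := 1)).exists_bound_of_continuousOn
    (f := q) hq.continuousOn
  have hM0 : 0 ≤ M := (norm_nonneg _).trans (hM 0 (by simp))
  have hq' : Continuous (fun z => q (1 - z)) := by fun_prop
  have href : ∀ z ∈ Set.Icc (0:ℝ) 1, 1 - z ∈ Set.Icc (0:ℝ) 1 := fun z hz =>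
    ⟨by linarith [hz.2], by linarith [hz.1]⟩
  have hM' : ∀ z ∈ Set.Icc (0:ℝ) 1, |q (1 - z)| ≤ M := fun z hz => hM _ (href z hz)
  obtain ⟨s, s', hs1, hs2, hs3, hs4, hs5⟩ := exists_sol q hq 0 1
  obtain ⟨c, c', hc1, hc2, hc3, hc4, hc5⟩ := exists_sol _ hq' 1 0
  have hcb : ∀ k : ℂ, k ≠ 0 → 2 * M ≤ ‖k‖ → ∀ z ∈ Set.Icc (0:ℝ) 1,
      ‖c (k ^ 2) z‖ ≤ 2 * Real.exp (|k.im| * z) := by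
    intro k hk hkM z hz
    have := (hc1 (k ^ 2)).bound hq' hM' hk hkM (A := 1) (by
      intro z hz
      rw [hc2, hc3, mul_one, mul_zero, add_zero, one_mul]
      have := norm_cos_le_exp (k * z)
      rwa [im_mul_aux k hz.1] at this) z hz
    simpa using this
  refine ⟨⟨fun l z => c l (1 - z), fun l z => -c' l (1 - z), s, s', M, ?_, hs1, ?_, ?_, hs2, hs3,
    ?_, hs4, ?_, hM0, ?_, ?_, ?_⟩⟩
  · intro l
    have := (hc1 l).reflect
    simpa using this
  · intro l; simp [hc2]
  · intro l; simp [hc3]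
  · intro z hz; exact hc4 _ (href z hz)
  · exact hc5.comp (continuous_fst.prodMk (continuous_const.sub continuous_snd))
  · intro k hk hkM z hz
    exact hcb k hk hkM _ (href z hz)
  · intro k hk hkM z hz
    refine (hs1 (k ^ 2)).bound hq hM hk hkM (A := 1 / ‖k‖) ?_ z hz
    intro z hz
    rw [hs2, hs3, mul_one, mul_zero, zero_add, norm_div, div_mul_eq_mul_div, one_mul]
    have := norm_sin_le_exp (k * z)
    rw [im_mul_aux k hz.1] at this
    gcongr
  · intro k hk hkM
    have := (hc1 (k ^ 2)).diff_bound hq' hM' hk (hcb k hk hkM) (z := 1) (by simp)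
    simpa [hc2, hc3] using this

lemma cos_lower (n : ℕ) (hn : 1 ≤ n) (k : ℂ)
    (h : |k.im| = π * n ∨ |k.re| = π * n) : Real.exp |k.im| / 4 ≤ ‖Complex.cos k‖ := by
  rcases h with h | h
  · have hpi : 1 ≤ |k.im| := by
      rw [h]
      have : (1:ℝ) ≤ n := by exact_mod_cast hn
      nlinarith [Real.pi_gt_three]
    have h1 : ‖Complex.exp (k * Complex.I)‖ = Real.exp (-k.im) := by
      rw [Complex.norm_exp]; simp
    have h2 : ‖Complex.exp (-k * Complex.I)‖ = Real.exp (k.im) := by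
      rw [Complex.norm_exp]; simp
    have h3 : |Real.exp (-k.im) - Real.exp k.im| / 2 ≤ ‖Complex.cos k‖ := by
      rw [Complex.cos, norm_div, Complex.norm_ofNat]
      have := abs_norm_sub_norm_le (Complex.exp (k * Complex.I)) (-Complex.exp (-k * Complex.I))
      rw [norm_neg, h1, h2, sub_neg_eq_add] at this
      linarith
    have h4 : Real.exp |k.im| - Real.exp (-|k.im|) ≤ |Real.exp (-k.im) - Real.exp k.im| := by
      rcases abs_cases k.im with ⟨e, _⟩ | ⟨e, _⟩
      · rw [e, abs_sub_comm]; exact le_abs_self _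
      · rw [e, neg_neg]; exact le_abs_self _
    have h5 : Real.exp (-|k.im|) ≤ 1 := Real.exp_le_one_iff.2 (by linarith)
    have h6 := Real.add_one_le_exp |k.im|
    linarith
  · have hs : Real.sin k.re = 0 := by
      rcases abs_cases k.re with ⟨e, _⟩ | ⟨e, _⟩
      · rw [e] at h; rw [h, mul_comm, Real.sin_nat_mul_pi]
      · rw [e] at h
        have : k.re = -(n * π) := by linarith
        rw [this, Real.sin_neg, Real.sin_nat_mul_pi, neg_zero]
    have hc : |Real.cos k.re| = 1 := by
      have := Real.sin_sq_add_cos_sq k.re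
      rw [hs] at this
      have h2 : Real.cos k.re ^ 2 = 1 := by linarith
      rcases (sq_eq_sq_iff_eq_or_eq_neg.1 (h2.trans (one_pow 2).symm)) with h | h <;> simp [h]
    have e : Complex.cos k = ((Real.cos k.re * Real.cosh k.im : ℝ) : ℂ) := by
      rw [Complex.cos_eq k, ← Complex.ofReal_sin, hs]
      push_cast
      ring
    rw [e, Complex.norm_real, Real.norm_eq_abs, abs_mul, hc, one_mul,
      abs_of_pos (Real.cosh_pos _), ← Real.cosh_abs, Real.cosh_eq]
    have := Real.exp_pos (-|k.im|)
    have := Real.exp_pos (|k.im|)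
    linarith

lemma entire_zero (G : ℂ → ℂ) (hG : Differentiable ℂ G) (N : ℕ)
    (h : ∀ n : ℕ, N ≤ n → 1 ≤ n → ∀ k : ℂ, (|k.im| = π * n ∨ |k.re| = π * n) →
      ‖G (k ^ 2)‖ ≤ 64 / n) : ∀ l, G l = 0 := by
  have key : ∀ k : ℂ, G (k ^ 2) = 0 := by
    intro k
    have hev : ∀ᶠ n : ℕ in Filter.atTop, ‖G (k ^ 2)‖ ≤ 64 / n := by
      obtain ⟨m, hm⟩ := exists_nat_ge (max |k.re| |k.im|)
      filter_upwards [Filter.eventually_ge_atTop N, Filter.eventually_ge_atTop 1,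
        Filter.eventually_ge_atTop m] with n h1 h2 h3
      have hR : max |k.re| |k.im| < π * n := by
        have h3' : (m:ℝ) ≤ n := by exact_mod_cast h3
        have h2' : (1:ℝ) ≤ n := by exact_mod_cast h2
        nlinarith [Real.pi_gt_three]
      have hRpos : -(π * n) < π * n := by
        have := (abs_nonneg _).trans_lt ((le_max_left _ _).trans_lt hR)
        linarith
      have hR0 : 0 ≤ π * n := by linarith
      have hk1 := abs_lt.1 ((le_max_left _ _).trans_lt hR)
      have hk2 := abs_lt.1 ((le_max_right _ _).trans_lt hR)
      refine Complex.norm_le_of_forall_mem_frontier_norm_le (f := fun k => G (k ^ 2))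
        (U := Set.Ioo (-(π * n)) (π * n) ×ℂ Set.Ioo (-(π * n)) (π * n))
        ((Metric.isBounded_Ioo _ _).reProdIm (Metric.isBounded_Ioo _ _))
        (hG.comp (differentiable_pow 2)).diffContOnCl ?_ (subset_closure ⟨hk1, hk2⟩)
      intro w hw
      refine h n h1 h2 w ?_
      rw [Complex.frontier_reProdIm, frontier_Ioo hRpos] at hw
      rcases hw with hw | hw
      · left
        rcases hw.2 with hw | hw
        · have hw : w.im = _ := hw
          rw [hw, abs_neg, abs_of_nonneg hR0]
        · have hw : w.im = _ := hw
          rw [hw, abs_of_nonneg hR0]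
      · right
        rcases hw.1 with hw | hw
        · have hw : w.re = _ := hw
          rw [hw, abs_neg, abs_of_nonneg hR0]
        · have hw : w.re = _ := hw
          rw [hw, abs_of_nonneg hR0]
    have := ge_of_tendsto (tendsto_const_div_atTop_nhds_zero_nat (64:ℝ)) hev
    exact norm_le_zero_iff.1 this
  intro l
  obtain ⟨k, hk⟩ := IsSquare.exists_sq l (IsAlgClosed.exists_pow_nat_eq l (n := 2) (by norm_num) |>.elim fun k hk => ⟨k, by rw [← hk, sq]⟩)
  rw [hk]; exact key k

/-- removable singularities at a discrete closed set -/
lemma removable (F : ℂ → ℂ) (S : Set ℂ) (hS : IsClosed S) (hF : ∀ c ∉ S, DifferentiableAt ℂ F c)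
    (hiso : ∀ c ∈ S, ∀ᶠ z in nhdsWithin c {c}ᶜ, z ∉ S)
    (hlim : ∀ c ∈ S, Filter.Tendsto (fun z => (z - c) * F z) (nhdsWithin c {c}ᶜ) (nhds 0)) :
    ∃ G : ℂ → ℂ, Differentiable ℂ G ∧ ∀ c ∉ S, G c = F c := by
  classical
  refine ⟨fun c => if c ∈ S then (nhdsWithin c {c}ᶜ).limUnder F else F c, ?_, fun c hc => if_neg hc⟩
  intro c
  by_cases hc : c ∈ S
  · have h1 := hiso c hc
    rw [eventually_nhdsWithin_iff] at h1
    set s := {z : ℂ | z ∈ ({c}ᶜ : Set ℂ) → z ∉ S} with hs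
    have hsn : s ∈ nhds c := h1
    have hd : DifferentiableOn ℂ F (s \ {c}) := fun z hz =>
      (hF z (hz.1 hz.2)).differentiableWithinAt
    have ho : (fun z => F z - F c) =o[nhdsWithin c {c}ᶜ] fun z => (z - c)⁻¹ := by
      rw [Asymptotics.isLittleO_iff_tendsto']
      · have h2 : Filter.Tendsto (fun z => (z - c) * F z - (z - c) * F c) (nhdsWithin c {c}ᶜ)
            (nhds (0 - (c - c) * F c)) := by
          refine (hlim c hc).sub ?_
          have : Continuous (fun z => (z - c) * F c) := by fun_prop
          exact (this.tendsto c).mono_left nhdsWithin_le_nhds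
        rw [sub_self, zero_mul, sub_zero] at h2
        refine h2.congr fun z => ?_
        rw [div_inv_eq_mul]; ring
      · filter_upwards [self_mem_nhdsWithin] with z hz h0
        exact absurd (sub_eq_zero.1 (inv_eq_zero.1 h0)) hz
    have hu := (Complex.differentiableOn_update_limUnder_of_isLittleO hsn hd ho).differentiableAt hsn
    refine hu.congr_of_eventuallyEq ?_
    filter_upwards [hsn] with z hz
    by_cases hzc : z = c
    · subst hzc; simp [hc]
    · rw [Function.update_of_ne hzc, if_neg (hz hzc)]
  · refine (hF c hc).congr_of_eventuallyEq ?_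
    filter_upwards [hS.isOpen_compl.mem_nhds hc] with z hz
    exact if_neg hz

lemma SolData.near {q : ℝ → ℝ} (hq : Continuous q) (D : SolData q) {c : ℂ} (hc : D.φ c 0 = 0)
    {α : ℂ} (hα : ∫ z in (0:ℝ)..1, D.φ c z * D.φ c z = α) (hα0 : α ≠ 0) :
    (∀ᶠ l in nhdsWithin c {c}ᶜ, D.φ l 0 ≠ 0) ∧ ∀ z ∈ Set.Icc (0:ℝ) 1,
      Filter.Tendsto (fun l => (l - c) * (D.s l z / D.φ l 0)) (nhdsWithin c {c}ᶜ)
        (nhds (-D.φ c z / α)) := by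
  let I : ℂ → ℂ := fun l => ∫ z in (0:ℝ)..1, D.φ l z * D.φ c z
  have hI : Continuous I := by
    refine intervalIntegral.continuous_parametric_intervalIntegral_of_continuous
      (f := fun l z => D.φ l z * D.φ c z) (s := fun _ => 1) ?_ continuous_const
    exact D.contφ.mul (D.contφ.comp (continuous_const.prodMk continuous_snd))
  have hIc : I c ≠ 0 := by rw [← hα] at hα0; exact hα0
  have hw : ∀ l, -(D.φ l 0 * D.φ' c 0) = (l - c) * I l := by
    intro l
    have := (D.solφ l).wronskian (D.solφ c) le_rfl zero_le_one le_rfl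
    rw [D.dphi1, D.dphi1, hc] at this
    rw [← this]; ring
  have hev : ∀ᶠ l in nhdsWithin c {c}ᶜ, l ≠ c ∧ I l ≠ 0 := by
    filter_upwards [self_mem_nhdsWithin,
      nhdsWithin_le_nhds (hI.continuousAt.eventually_ne hIc)] with l h1 h2
    exact ⟨h1, h2⟩
  have hne : ∀ l, l ≠ c ∧ I l ≠ 0 → D.φ l 0 ≠ 0 := by
    rintro l ⟨h1, h2⟩ h3
    have := hw l
    rw [h3, zero_mul, neg_zero] at this
    exact mul_ne_zero (sub_ne_zero.2 h1) h2 this.symm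
  refine ⟨hev.mono hne, fun z hz => ?_⟩
  have hps : D.φ c z = D.φ' c 0 * D.s c z := by
    have := ((D.solφ c).comb (D.sols c) (D.φ' c 0)).zero_left hq (by simp [hc, D.s0])
      (by simp [D.ds0]) z hz
    exact sub_eq_zero.1 this
  have hlim : Filter.Tendsto (fun l => -(D.φ' c 0 * D.s l z) / I l) (nhdsWithin c {c}ᶜ)
      (nhds (-(D.φ' c 0 * D.s c z) / I c)) := by
    refine Filter.Tendsto.mono_left ?_ nhdsWithin_le_nhds
    have h1 := (D.diffs z hz).continuous
    have h2 : Continuous (fun l => -(D.φ' c 0 * D.s l z)) := by fun_prop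
    exact (h2.tendsto c).div (hI.tendsto c) hIc
  rw [← hps, show I c = α from hα] at hlim
  refine hlim.congr' ?_
  filter_upwards [hev] with l hl
  have h1 := hne l hl
  have h2 := hl.2
  have h3 := hw l
  field_simp
  linear_combination D.s l z * h3

lemma SolData.quot {q q' : ℝ → ℝ} (D : SolData q) (D' : SolData q') {z : ℝ}
    (hz : z ∈ Set.Icc (0:ℝ) 1)
    (n : ℕ) (hn : 1 ≤ n) (h2 : 16 * D.M ≤ n) (h3 : 16 * D'.M ≤ n) (k : ℂ)
    (h : |k.im| = π * n ∨ |k.re| = π * n) :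
    D.φ (k ^ 2) 0 ≠ 0 ∧ ‖D'.φ (k ^ 2) z * (D.s (k ^ 2) z / D.φ (k ^ 2) 0)‖ ≤ 32 / n := by
  have hn' : (1:ℝ) ≤ n := by exact_mod_cast hn
  have hkn : (n:ℝ) ≤ ‖k‖ := by
    have : π * n ≤ ‖k‖ := by
      rcases h with h | h
      · rw [← h]; exact Complex.abs_im_le_norm k
      · rw [← h]; exact Complex.abs_re_le_norm k
    nlinarith [Real.pi_gt_three]
  have hk0 : 0 < ‖k‖ := by linarith
  have hk : k ≠ 0 := norm_pos_iff.1 hk0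
  have hM := D.hM
  have hM' := D'.hM
  have hcos := cos_lower n hn k h
  have hΔ := D.estΔ k hk (by linarith)
  have hs := D.ests k hk (by linarith) z hz
  have hφ := D'.estφ k hk (by linarith) z hz
  have hE := Real.exp_pos |k.im|
  have hΔ2 : Real.exp |k.im| / 8 ≤ ‖D.φ (k ^ 2) 0‖ := by
    have h4 : D.M * 2 / ‖k‖ ≤ 1 / 8 := by
      rw [div_le_iff₀ hk0]; linarith
    have h5 : D.M * 2 / ‖k‖ * Real.exp |k.im| ≤ 1 / 8 * Real.exp |k.im| := by gcongr
    have h6 := norm_sub_norm_le (Complex.cos k) (D.φ (k ^ 2) 0)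
    rw [norm_sub_rev] at h6
    linarith
  have hpos : 0 < ‖D.φ (k ^ 2) 0‖ := lt_of_lt_of_le (by positivity) hΔ2
  refine ⟨norm_pos_iff.1 hpos, ?_⟩
  rw [norm_mul, norm_div]
  have e : Real.exp (|k.im| * (1 - z)) * Real.exp (|k.im| * z) = Real.exp |k.im| := by
    rw [← Real.exp_add]; ring_nf
  calc _ ≤ 2 * Real.exp (|k.im| * (1 - z)) *
        ((2 * (1 / ‖k‖) * Real.exp (|k.im| * z)) / (Real.exp |k.im| / 8)) := by gcongr
    _ = (Real.exp (|k.im| * (1 - z)) * Real.exp (|k.im| * z)) * (32 / ‖k‖) / Real.exp |k.im| := by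
        field_simp; norm_num
    _ = 32 / ‖k‖ := by rw [e]; field_simp
    _ ≤ 32 / n := by gcongr

lemma core_identity {q₁ q₂ : ℝ → ℝ} (hq₁ : Continuous q₁) (hq₂ : Continuous q₂) (D₁ : SolData q₁)
    (D₂ : SolData q₂) (hz : ∀ l, D₁.φ l 0 = 0 ↔ D₂.φ l 0 = 0)
    (hα : ∀ l, D₁.φ l 0 = 0 → ∃ α : ℂ, α ≠ 0 ∧ ∫ z in (0:ℝ)..1, D₁.φ l z * D₁.φ l z = α ∧
      ∫ z in (0:ℝ)..1, D₂.φ l z * D₂.φ l z = α) {z : ℝ} (hzI : z ∈ Set.Icc (0:ℝ) 1) (l : ℂ)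
    (hl : D₁.φ l 0 ≠ 0) :
    D₁.φ l z * (D₂.s l z / D₂.φ l 0) = D₂.φ l z * (D₁.s l z / D₁.φ l 0) := by
  have h0 : (0:ℝ) ∈ Set.Icc (0:ℝ) 1 := by simp
  let F : ℂ → ℂ := fun l =>
    D₁.φ l z * (D₂.s l z / D₂.φ l 0) - D₂.φ l z * (D₁.s l z / D₁.φ l 0)
  obtain ⟨G, hG, hGF⟩ := removable F {l | D₁.φ l 0 = 0}
    (isClosed_eq (D₁.diffφ 0 h0).continuous continuous_const) (by
      intro c hc
      have hc2 : D₂.φ c 0 ≠ 0 := fun h => hc ((hz c).2 h)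
      exact ((D₁.diffφ z hzI c).mul ((D₂.diffs z hzI c).div (D₂.diffφ 0 h0 c) hc2)).sub
        ((D₂.diffφ z hzI c).mul ((D₁.diffs z hzI c).div (D₁.diffφ 0 h0 c) hc))) (by
      intro c hc
      obtain ⟨α, hα0, hα1, hα2⟩ := hα c hc
      exact (D₁.near hq₁ hc hα1 hα0).1) (by
      intro c hc
      obtain ⟨α, hα0, hα1, hα2⟩ := hα c hc
      have t1 := (D₁.near hq₁ hc hα1 hα0).2 z hzI
      have t2 := (D₂.near hq₂ ((hz c).1 hc) hα2 hα0).2 z hzI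
      have t3 := ((D₁.diffφ z hzI).continuous.tendsto c).mono_left
        (nhdsWithin_le_nhds (s := {c}ᶜ))
      have t4 := ((D₂.diffφ z hzI).continuous.tendsto c).mono_left
        (nhdsWithin_le_nhds (s := {c}ᶜ))
      have := (t3.mul t2).sub (t4.mul t1)
      have e : D₁.φ c z * (-D₂.φ c z / α) - D₂.φ c z * (-D₁.φ c z / α) = 0 := by ring
      rw [e] at this
      refine this.congr fun l => ?_
      simp only [F]
      ring)
  obtain ⟨N, hN⟩ := exists_nat_ge (max (16 * D₁.M) (16 * D₂.M))
  have hzero := entire_zero G hG N (by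
    intro n hn hn1 k hk
    have hn' : (N:ℝ) ≤ n := by exact_mod_cast hn
    have hM1 : 16 * D₁.M ≤ n := (le_max_left _ _).trans (hN.trans hn')
    have hM2 : 16 * D₂.M ≤ n := (le_max_right _ _).trans (hN.trans hn')
    obtain ⟨a1, b1⟩ := D₁.quot D₂ hzI n hn1 hM1 hM2 k hk
    obtain ⟨a2, b2⟩ := D₂.quot D₁ hzI n hn1 hM2 hM1 k hk
    rw [hGF _ a1]
    refine (norm_sub_le _ _).trans ((add_le_add b2 b1).trans (le_of_eq ?_))
    ring) l
  rw [hGF l hl] at hzero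
  exact sub_eq_zero.1 hzero

lemma potentials_eq {q₁ q₂ : ℝ → ℝ} (hq₁ : Continuous q₁) (hq₂ : Continuous q₂) (D₁ : SolData q₁)
    (D₂ : SolData q₂) (hz : ∀ l, D₁.φ l 0 = 0 ↔ D₂.φ l 0 = 0)
    (hα : ∀ l, D₁.φ l 0 = 0 → ∃ α : ℂ, α ≠ 0 ∧ ∫ z in (0:ℝ)..1, D₁.φ l z * D₁.φ l z = α ∧
      ∫ z in (0:ℝ)..1, D₂.φ l z * D₂.φ l z = α) : ∀ z ∈ Set.Icc (0:ℝ) 1, q₁ z = q₂ z := by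
  have h0 : (0:ℝ) ∈ Set.Icc (0:ℝ) 1 := by simp
  have hI : Complex.I.im ≠ 0 := by simp
  have hn1 := (D₁.solφ Complex.I).ne_zero hI (D₁.φ1 _) (D₁.dphi1 _)
  have hn2 := (D₂.solφ Complex.I).ne_zero hI (D₂.φ1 _) (D₂.dphi1 _)
  have hder : ∀ (q : ℝ → ℝ) (D : SolData q), D.φ Complex.I 0 ≠ 0 → ∀ z ∈ Set.Icc (0:ℝ) 1,
      D.φ Complex.I z ≠ 0 →
      HasDerivAt (fun z => D.s Complex.I z / D.φ Complex.I 0 / D.φ Complex.I z)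
        (1 / (D.φ Complex.I z * D.φ Complex.I z)) z := by
    intro q D hD0 z hz hDz
    have h1 := (D.solφ Complex.I z hz).1
    have h2 := (D.sols Complex.I z hz).1
    have hw := (D.solφ Complex.I).wronskian (D.sols Complex.I) le_rfl hz.1 hz.2
    rw [D.s0, D.ds0, sub_self, zero_mul, mul_one, mul_zero, sub_zero] at hw
    refine ((h2.div_const (D.φ Complex.I 0)).div h1 hDz).congr_deriv ?_
    field_simp
    linear_combination hw
  have hev : ∀ z ∈ Set.Ioo (0:ℝ) 1, ∀ᶠ t in nhds z, t ∈ Set.Ioo (0:ℝ) 1 :=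
    fun z hz => isOpen_Ioo.mem_nhds hz
  have hsub : ∀ z ∈ Set.Ioo (0:ℝ) 1, z ∈ Set.Icc (0:ℝ) 1 := fun z hz => Set.Ioo_subset_Icc_self hz
  have e0 : ∀ z ∈ Set.Ioo (0:ℝ) 1, D₁.s Complex.I z / D₁.φ Complex.I 0 / D₁.φ Complex.I z
      = D₂.s Complex.I z / D₂.φ Complex.I 0 / D₂.φ Complex.I z := by
    intro z hzz
    have := core_identity hq₁ hq₂ D₁ D₂ hz hα (hsub z hzz) Complex.I (hn1 0 h0)
    rw [div_eq_div_iff (hn1 z (hsub z hzz)) (hn2 z (hsub z hzz))]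
    linear_combination -this
  have e1 : ∀ z ∈ Set.Ioo (0:ℝ) 1, D₁.φ Complex.I z * D₁.φ Complex.I z
      = D₂.φ Complex.I z * D₂.φ Complex.I z := by
    intro z hzz
    have d1 := hder q₁ D₁ (hn1 0 h0) z (hsub z hzz) (hn1 z (hsub z hzz))
    have d2 := hder q₂ D₂ (hn2 0 h0) z (hsub z hzz) (hn2 z (hsub z hzz))
    have d3 := d2.congr_of_eventuallyEq ((hev z hzz).mono e0)
    have := d1.unique d3
    rw [one_div, one_div] at this
    exact inv_injective this
  have e2 : ∀ z ∈ Set.Ioo (0:ℝ) 1, D₁.φ' Complex.I z * D₁.φ Complex.I z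
      = D₂.φ' Complex.I z * D₂.φ Complex.I z := by
    intro z hzz
    have d1 := (D₁.solφ Complex.I z (hsub z hzz)).1
    have d2 := (D₂.solφ Complex.I z (hsub z hzz)).1
    have d3 := (d2.mul d2).congr_of_eventuallyEq (f₁ := D₁.φ Complex.I * D₁.φ Complex.I)
      ((hev z hzz).mono e1)
    have := (d1.mul d1).unique d3
    linear_combination this / 2
  have e3 : ∀ z ∈ Set.Ioo (0:ℝ) 1, q₁ z = q₂ z := by
    intro z hzz
    have d1 := D₁.solφ Complex.I z (hsub z hzz)
    have d2 := D₂.solφ Complex.I z (hsub z hzz)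
    have d3 := (d2.2.mul d2.1).congr_of_eventuallyEq (f₁ := D₁.φ' Complex.I * D₁.φ Complex.I)
      ((hev z hzz).mono e2)
    have h3 := (d1.2.mul d1.1).unique d3
    have h1 := e1 z hzz
    have h2 := e2 z hzz
    have n1 := hn1 z (hsub z hzz)
    have n2 := hn2 z (hsub z hzz)
    have h4 : D₁.φ' Complex.I z * D₁.φ' Complex.I z = D₂.φ' Complex.I z * D₂.φ' Complex.I z := by
      have : (D₁.φ Complex.I z * D₁.φ Complex.I z) * (D₁.φ' Complex.I z * D₁.φ' Complex.I z)
         = (D₁.φ Complex.I z * D₁.φ Complex.I z) * (D₂.φ' Complex.I z * D₂.φ' Complex.I z) := by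
        conv_rhs => rw [h1]
        linear_combination (D₁.φ' Complex.I z * D₁.φ Complex.I z
          + D₂.φ' Complex.I z * D₂.φ Complex.I z) * h2
      exact mul_left_cancel₀ (mul_ne_zero n1 n1) this
    have h5 : (D₁.φ Complex.I z * D₁.φ Complex.I z) * (q₁ z : ℂ)
        = (D₁.φ Complex.I z * D₁.φ Complex.I z) * (q₂ z : ℂ) := by
      linear_combination -h3 + h4 - (Complex.I + q₂ z) * h1
    exact_mod_cast mul_left_cancel₀ (mul_ne_zero n1 n1) h5
  have := Set.EqOn.closure (s := Set.Ioo (0:ℝ) 1) (f := q₁) (g := q₂) e3 hq₁ hq₂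
  rw [closure_Ioo (by norm_num)] at this
  exact this

lemma eig_data {q Q : ℝ → ℝ} (hQ : Continuous Q) (hqQ : ∀ z ∈ Set.Icc (0:ℝ) 1, Q z = q z)
    (D : SolData Q) {μ : ℝ} {ψ : ℝ → ℝ} (h : IsDNEigenfun q μ ψ) (hn : DNNormalized ψ) :
    D.φ μ 0 = 0 ∧ ((ψ 1 : ℂ)) ^ 2 * (∫ z in (0:ℝ)..1, D.φ μ z * D.φ μ z) = 1 := by
  obtain ⟨ψ', ψ'', h1, h2, -, h4, h5, h6, -⟩ := h
  have hsol : IsSol Q μ (fun z => (ψ z : ℂ)) (fun z => (ψ' z : ℂ)) := by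
    intro z hz
    refine ⟨(h1 z hz).ofReal_comp, (h2 z hz).ofReal_comp.congr_deriv ?_⟩
    have := h4 z hz
    rw [hqQ z hz]
    have e : ψ'' z = -(μ + q z) * ψ z := by linarith
    rw [e]; push_cast; ring
  have heq : ∀ z ∈ Set.Icc (0:ℝ) 1, (ψ z : ℂ) = ψ 1 * D.φ μ z := by
    intro z hz
    have := (hsol.comb (D.solφ μ) (ψ 1)).zero_right hQ (by simp [D.φ1]) (by simp [D.dphi1, h6]) z hz
    exact sub_eq_zero.1 this
  have hinteg : ((ψ 1 : ℂ)) ^ 2 * (∫ z in (0:ℝ)..1, D.φ μ z * D.φ μ z) = 1 := by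
    have e : ((∫ z in (0:ℝ)..1, (ψ z) ^ 2 : ℝ) : ℂ) = 1 := by
      rw [show (∫ z in (0:ℝ)..1, (ψ z) ^ 2) = 1 from hn]; simp
    rw [← intervalIntegral.integral_ofReal] at e
    rw [← intervalIntegral.integral_const_mul, ← e]
    refine intervalIntegral.integral_congr fun z hz => ?_
    rw [Set.uIcc_of_le zero_le_one] at hz
    push_cast
    rw [heq z hz]; ring
  refine ⟨?_, hinteg⟩
  have h0 := heq 0 (by simp)
  rw [h5] at h0
  have hne : (ψ 1 : ℂ) ≠ 0 := by
    intro hh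
    rw [hh] at hinteg
    simp at hinteg
  exact (mul_eq_zero.1 (by simpa using h0.symm)).resolve_left hne

lemma zero_eig {q Q : ℝ → ℝ} (hQ : Continuous Q) (hqQ : ∀ z ∈ Set.Icc (0:ℝ) 1, Q z = q z)
    (D : SolData Q) {l : ℂ} (h : D.φ l 0 = 0) : ∃ μ : ℝ, l = μ ∧ IsDNEigenvalue q μ := by
  have him : l.im = 0 := by
    by_contra hne
    exact (D.solφ l).ne_zero hne (D.φ1 l) (D.dphi1 l) 0 (by simp) h
  refine ⟨l.re, Complex.ext (by simp) (by simp [him]), fun z => (D.φ l z).re,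
    fun z => (D.φ' l z).re, fun z => -(l.re + Q z) * (D.φ l z).re, ?_, ?_, ?_, ?_, ?_, ?_, ?_⟩
  · intro z hz
    exact (Complex.reCLM.hasFDerivAt.comp_hasDerivAt z (D.solφ l z hz).1)
  · intro z hz
    refine (Complex.reCLM.hasFDerivAt.comp_hasDerivAt z (D.solφ l z hz).2).congr_deriv ?_
    simp [him]
  · have := (D.solφ l).contY
    have h2 := Complex.continuous_re.comp_continuousOn this
    exact ContinuousOn.mul (by fun_prop) h2
  · intro z hz
    simp only [hqQ z hz]; ring
  · simp [h]
  · simp [D.dphi1]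
  · exact ⟨1, by simp, by simp [D.φ1]⟩

/-- the spectral data `{μⱼ, ψⱼ(1)²}` (eigenvalues together with the squared
endpoint values of the normalized eigenfunctions) determine the potential uniquely. -/
theorem spectral_data_uniqueness
    (q₁ q₂ : ℝ → ℝ)
    (hq₁ : ContinuousOn q₁ (Set.Icc (0:ℝ) 1))
    (hq₂ : ContinuousOn q₂ (Set.Icc (0:ℝ) 1))
    (μ₁ μ₂ : ℕ → ℝ) (ψ₁ ψ₂ : ℕ → ℝ → ℝ)
    (hmono₁ : StrictMono μ₁) (hmono₂ : StrictMono μ₂)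
    (heig₁ : ∀ j : ℕ, IsDNEigenfun q₁ (μ₁ j) (ψ₁ j) ∧ DNNormalized (ψ₁ j))
    (heig₂ : ∀ j : ℕ, IsDNEigenfun q₂ (μ₂ j) (ψ₂ j) ∧ DNNormalized (ψ₂ j))
    (hall₁ : ∀ μ : ℝ, IsDNEigenvalue q₁ μ → ∃ j : ℕ, μ₁ j = μ)
    (hall₂ : ∀ μ : ℝ, IsDNEigenvalue q₂ μ → ∃ j : ℕ, μ₂ j = μ)
    (heq : ∀ j : ℕ, μ₁ j = μ₂ j ∧ (ψ₁ j 1) ^ 2 = (ψ₂ j 1) ^ 2) :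
    ∀ z ∈ Set.Icc (0:ℝ) 1, q₁ z = q₂ z := by
  have hext : ∀ q : ℝ → ℝ, ContinuousOn q (Set.Icc (0:ℝ) 1) → ∃ Q : ℝ → ℝ, Continuous Q ∧
      ∀ z ∈ Set.Icc (0:ℝ) 1, Q z = q z := by
    intro q hq
    refine ⟨fun z => q (pr z), ?_, fun z hz => by simp only [pr_coe z hz]⟩
    exact hq.comp_continuous (continuous_subtype_val.comp cont_pr) (fun z => (pr z).2)
  obtain ⟨Q₁, hQ₁, e₁⟩ := hext q₁ hq₁
  obtain ⟨Q₂, hQ₂, e₂⟩ := hext q₂ hq₂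
  obtain ⟨D₁⟩ := exists_data Q₁ hQ₁
  obtain ⟨D₂⟩ := exists_data Q₂ hQ₂
  have d1 : ∀ j, _ := fun j => eig_data hQ₁ e₁ D₁ (heig₁ j).1 (heig₁ j).2
  have d2 : ∀ j, _ := fun j => eig_data hQ₂ e₂ D₂ (heig₂ j).1 (heig₂ j).2
  have z1 : ∀ l, D₁.φ l 0 = 0 → ∃ j, l = μ₁ j := by
    intro l hl
    obtain ⟨μ, rfl, hμ⟩ := zero_eig hQ₁ e₁ D₁ hl
    obtain ⟨j, hj⟩ := hall₁ μ hμ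
    exact ⟨j, by rw [hj]⟩
  have z2 : ∀ l, D₂.φ l 0 = 0 → ∃ j, l = μ₂ j := by
    intro l hl
    obtain ⟨μ, rfl, hμ⟩ := zero_eig hQ₂ e₂ D₂ hl
    obtain ⟨j, hj⟩ := hall₂ μ hμ
    exact ⟨j, by rw [hj]⟩
  intro z hz
  rw [← e₁ z hz, ← e₂ z hz]
  refine potentials_eq hQ₁ hQ₂ D₁ D₂ (fun l => ⟨fun hl => ?_, fun hl => ?_⟩) (fun l hl => ?_) z hz
  · obtain ⟨j, rfl⟩ := z1 l hl
    rw [(heq j).1]; exact (d2 j).1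
  · obtain ⟨j, rfl⟩ := z2 l hl
    rw [← (heq j).1]; exact (d1 j).1
  · obtain ⟨j, rfl⟩ := z1 l hl
    have h1 := (d1 j).2
    have h2 := (d2 j).2
    have h3 : ((ψ₁ j 1 : ℂ)) ^ 2 = ((ψ₂ j 1 : ℂ)) ^ 2 := by exact_mod_cast (heq j).2
    rw [← (heq j).1, ← h3] at h2
    have hne : ((ψ₁ j 1 : ℂ)) ^ 2 ≠ 0 := by
      intro h0
      rw [h0, zero_mul] at h1
      exact zero_ne_one h1
    refine ⟨_, ?_, rfl, ?_⟩
    · intro h0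
      rw [h0, mul_zero] at h1
      exact zero_ne_one h1
    · exact mul_left_cancel₀ hne (h2.trans h1.symm)
end

section
/- Let μ, μ' : ℕ → ℝ be strictly increasing sequences and C > 0 a constant with |μⱼ − π²(j + 1/2)²| ≤ C and |μ'ⱼ − π²(j + 1/2)²| ≤ C for all j ∈ ℕ, and let c, c' : ℕ → ℝ be bounded sequences with cⱼ > 0 and c'ⱼ > 0 for all j. If ∑_{j=0}^∞ cⱼ/(λ² + μⱼ) = ∑_{j=0}^∞ c'ⱼ/(λ² + μ'ⱼ) for every real λ > 0 such that λ² + μⱼ ≠ 0 and λ² + μ'ⱼ ≠ 0 for all j, then μⱼ = μ'ⱼ and cⱼ = c'ⱼ for all j ∈ ℕ. -/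
open Real

lemma aux_summable (μ : ℕ → ℝ) (C : ℝ) (hC : 0 < C)
    (hasymp : ∀ j : ℕ, |μ j - π ^ 2 * ((j : ℝ) + 1 / 2) ^ 2| ≤ C) (a : ℝ) :
    Summable (fun j : ℕ => 1 / (1 + |μ j - a|)) := by
  have h2 : Summable (fun j : ℕ => (1 + |a| + C) * (1 / ((j + 1 : ℕ) : ℝ) ^ 2)) :=
    ((summable_nat_add_iff 1).2 (Real.summable_one_div_nat_pow.2 one_lt_two)).mul_left _
  refine Summable.of_nonneg_of_le (fun j => by positivity) (fun j => ?_) h2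
  have hpi : (4 : ℝ) ≤ π ^ 2 := by nlinarith [Real.pi_gt_three]
  have hj : (0 : ℝ) ≤ j := Nat.cast_nonneg j
  have h3 := (abs_le.1 (hasymp j)).1
  have h4 : 4 * ((j : ℝ) + 1 / 2) ^ 2 ≤ π ^ 2 * ((j : ℝ) + 1 / 2) ^ 2 :=
    mul_le_mul_of_nonneg_right hpi (sq_nonneg _)
  have h5 := le_abs_self (μ j - a)
  have h6 := le_abs_self a
  have h7 := abs_nonneg (μ j - a)
  have h8 := abs_nonneg a
  rw [mul_one_div, div_le_div_iff₀ (by positivity) (by positivity)]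
  push_cast
  nlinarith [mul_nonneg h7 h8, mul_nonneg hC.le h7]

lemma aux_residue (μ : ℕ → ℝ) (C : ℝ) (hC : 0 < C)
    (hasymp : ∀ j : ℕ, |μ j - π ^ 2 * ((j : ℝ) + 1 / 2) ^ 2| ≤ C)
    (c : ℕ → ℝ) (M : ℝ) (hM : ∀ j : ℕ, |c j| ≤ M) (a : ℝ) :
    Filter.Tendsto (fun t : ℝ => (Complex.I * t) * ∑' j : ℕ, (c j : ℂ) / (-a + Complex.I * t + μ j))
      (nhdsWithin 0 (Set.Ioi 0)) (nhds (∑' j : ℕ, if μ j = a then (c j : ℂ) else 0)) := by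
  simp_rw [← tsum_mul_left]
  refine tendsto_tsum_of_dominated_convergence (bound := fun j => (2 * M) * (1 / (1 + |μ j - a|)))
    ((aux_summable μ C hC hasymp a).mul_left _) ?_ ?_
  · intro j
    split_ifs with h
    · refine Filter.Tendsto.congr' ?_ tendsto_const_nhds
      filter_upwards [self_mem_nhdsWithin] with t ht
      have ht' : (t : ℂ) ≠ 0 := by exact_mod_cast (ne_of_gt ht)
      have : (-a + Complex.I * t + μ j : ℂ) = Complex.I * t := by rw [h]; ring
      rw [this]
      field_simp [Complex.I_ne_zero]
    · have hne : (-a + Complex.I * (0 : ℝ) + μ j : ℂ) ≠ 0 := by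
        intro h0
        apply h
        have := congrArg Complex.re h0
        simp at this
        linarith
      have hc : ContinuousAt (fun t : ℝ => (Complex.I * t) * ((c j : ℂ) / (-a + Complex.I * t + μ j))) 0 := by
        refine ContinuousAt.mul (by fun_prop) (ContinuousAt.div (by fun_prop) (by fun_prop) hne)
      have := hc.tendsto
      simp only [Complex.ofReal_zero, mul_zero, zero_mul] at this
      exact this.mono_left nhdsWithin_le_nhds
  · have h1 : ∀ᶠ t : ℝ in nhdsWithin 0 (Set.Ioi 0), t < 1 :=
      nhdsWithin_le_nhds (Iio_mem_nhds one_pos)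
    filter_upwards [self_mem_nhdsWithin, h1] with t ht ht1 j
    have ht : 0 < t := ht
    have hre := Complex.abs_re_le_norm (-a + Complex.I * t + μ j : ℂ)
    have him := Complex.abs_im_le_norm (-a + Complex.I * t + μ j : ℂ)
    simp at hre him
    rw [abs_of_pos ht] at him
    rw [show -a + μ j = μ j - a by ring] at hre
    set N := ‖(-a + Complex.I * t + μ j : ℂ)‖ with hN
    have hNpos : 0 < N := lt_of_lt_of_le ht him
    rw [norm_mul, norm_mul, norm_div, Complex.norm_I, Complex.norm_real, Complex.norm_real, ← hN,
      Real.norm_eq_abs, Real.norm_eq_abs, abs_of_pos ht, one_mul, mul_one_div, ← mul_div_assoc,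
      div_le_div_iff₀ hNpos (by positivity)]
    have hd := abs_nonneg (μ j - a)
    have hcj := abs_nonneg (c j)
    have h3 : t * (1 + |μ j - a|) ≤ 2 * N := by nlinarith
    calc t * |c j| * (1 + |μ j - a|) = |c j| * (t * (1 + |μ j - a|)) := by ring
      _ ≤ M * (2 * N) := mul_le_mul (hM j) h3 (by positivity) (hcj.trans (hM j))
      _ = 2 * M * N := by ring

lemma aux_analytic (μ : ℕ → ℝ) (C : ℝ) (hC : 0 < C)
    (hasymp : ∀ j : ℕ, |μ j - π ^ 2 * ((j : ℝ) + 1 / 2) ^ 2| ≤ C)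
    (c : ℕ → ℝ) (M : ℝ) (hM : ∀ j : ℕ, |c j| ≤ M) (B s : ℝ) (hs : 0 < s)
    (hB : ∀ j, 1 ≤ μ j + B) (U : Set ℂ) (hU : IsOpen U)
    (hUs : ∀ z ∈ U, 0 < z.im + s * (z.re - B)) :
    AnalyticOnNhd ℂ (fun z : ℂ => ∑' j : ℕ, (c j : ℂ) / (z + μ j)) U := by
  have key : ∀ j, ∀ z ∈ U, s * (μ j + B) ≤ (1 + s) * ‖z + (μ j : ℂ)‖ := by
    intro j z hz
    have hre := (le_abs_self _).trans (Complex.abs_re_le_norm (z + (μ j : ℂ)))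
    have him := (le_abs_self _).trans (Complex.abs_im_le_norm (z + (μ j : ℂ)))
    simp at hre him
    have := hUs z hz
    nlinarith
  have kpos : ∀ j, ∀ z ∈ U, 0 < ‖z + (μ j : ℂ)‖ := by
    intro j z hz
    have := key j z hz
    have h1 : 0 < s * (μ j + B) := mul_pos hs (by linarith [hB j])
    by_contra h
    nlinarith
  refine DifferentiableOn.analyticOnNhd ?_ hU
  refine Complex.differentiableOn_tsum_of_summable_norm
    (u := fun j => (2 * M * (1 + s) / s) * (1 / (1 + |μ j - (-B)|)))
    ((aux_summable μ C hC hasymp (-B)).mul_left _) ?_ hU ?_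
  · intro j z hz
    refine DifferentiableAt.differentiableWithinAt ?_
    exact DifferentiableAt.div (by fun_prop) (by fun_prop) (norm_pos_iff.1 (kpos j z hz))
  · intro j z hz
    have hb := hB j
    rw [norm_div, Complex.norm_real, Real.norm_eq_abs, mul_one_div, div_div, sub_neg_eq_add,
      abs_of_pos (by linarith : 0 < μ j + B), div_le_div_iff₀ (kpos j z hz) (by positivity)]
    have hcj := abs_nonneg (c j)
    have h3 : s * (1 + (μ j + B)) ≤ 2 * ((1 + s) * ‖z + (μ j : ℂ)‖) := by
      have := key j z hz
      nlinarith
    calc |c j| * (s * (1 + (μ j + B))) ≤ M * (2 * ((1 + s) * ‖z + (μ j : ℂ)‖)) :=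
          mul_le_mul (hM j) h3 (by positivity) (hcj.trans (hM j))
      _ = _ := by ring


/-- the function `G(λ) = ∑ⱼ cⱼ/(λ² + μⱼ)`, known for all `λ > 0`,
uniquely determines the (strictly increasing) poles data `μⱼ` and the positive
bounded coefficients `cⱼ`. -/
theorem poles_and_residues_unique
    (μ μ' : ℕ → ℝ) (C : ℝ) (hC : 0 < C)
    (hmono : StrictMono μ) (hmono' : StrictMono μ')
    (hasymp : ∀ j : ℕ, |μ j - π ^ 2 * ((j : ℝ) + 1 / 2) ^ 2| ≤ C)
    (hasymp' : ∀ j : ℕ, |μ' j - π ^ 2 * ((j : ℝ) + 1 / 2) ^ 2| ≤ C)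
    (c c' : ℕ → ℝ)
    (hbdd : ∃ M : ℝ, ∀ j : ℕ, |c j| ≤ M)
    (hbdd' : ∃ M : ℝ, ∀ j : ℕ, |c' j| ≤ M)
    (hpos : ∀ j : ℕ, 0 < c j) (hpos' : ∀ j : ℕ, 0 < c' j)
    (hdata : ∀ l : ℝ, 0 < l →
      (∀ j : ℕ, l ^ 2 + μ j ≠ 0 ∧ l ^ 2 + μ' j ≠ 0) →
      ∑' j : ℕ, c j / (l ^ 2 + μ j) = ∑' j : ℕ, c' j / (l ^ 2 + μ' j)) :
    ∀ j : ℕ, μ j = μ' j ∧ c j = c' j := by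
  obtain ⟨M, hM⟩ := hbdd
  obtain ⟨M', hM'⟩ := hbdd'
  set B : ℝ := max 0 (max (1 - μ 0) (1 - μ' 0)) with hBdef
  have hB0 : 0 ≤ B := le_max_left _ _
  have hB : ∀ j, 1 ≤ μ j + B := fun j => by
    have h1 : 1 - μ 0 ≤ B := (le_max_left _ _).trans (le_max_right _ _)
    have h2 := hmono.monotone (Nat.zero_le j)
    linarith
  have hB' : ∀ j, 1 ≤ μ' j + B := fun j => by
    have h1 : 1 - μ' 0 ≤ B := (le_max_right _ _).trans (le_max_right _ _)
    have h2 := hmono'.monotone (Nat.zero_le j)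
    linarith
  have hreal : ∀ x : ℝ, B < x →
      ∑' j : ℕ, (c j : ℂ) / ((x : ℂ) + μ j) = ∑' j : ℕ, (c' j : ℂ) / ((x : ℂ) + μ' j) := by
    intro x hx
    have h := hdata (√x) (Real.sqrt_pos.2 (by linarith)) (fun j => by
      rw [Real.sq_sqrt (by linarith)]
      constructor
      · have := hB j
        linarith
      · have := hB' j
        linarith)
    rw [Real.sq_sqrt (by linarith)] at h
    exact_mod_cast congrArg (fun y : ℝ => (y : ℂ)) h
  have hline : ∀ a : ℝ, 1 ≤ a + B → ∀ t : ℝ, 0 < t →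
      ∑' j : ℕ, (c j : ℂ) / (-a + Complex.I * t + μ j)
        = ∑' j : ℕ, (c' j : ℂ) / (-a + Complex.I * t + μ' j) := by
    intro a ha t ht
    set s : ℝ := t / (2 * (a + B)) with hsdef
    have hs : 0 < s := by positivity
    set U : Set ℂ := {z : ℂ | 0 < z.im + s * (z.re - B)} with hUdef
    have hU : IsOpen U := isOpen_lt continuous_const (by fun_prop)
    have hUc : Convex ℝ U := by
      intro z hz w hw p q hp hq hpq
      simp only [hUdef, Set.mem_setOf_eq] at hz hw ⊢
      simp only [Complex.add_im, Complex.add_re, Complex.real_smul, Complex.re_ofReal_mul,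
        Complex.im_ofReal_mul]
      have e : p * z.im + q * w.im + s * (p * z.re + q * w.re - B)
          = p * (z.im + s * (z.re - B)) + q * (w.im + s * (w.re - B)) := by
        have : q = 1 - p := by linarith
        subst this
        ring
      rw [e]
      rcases hp.lt_or_eq with h | h
      · have := mul_pos h hz
        have := mul_nonneg hq hw.le
        linarith
      · have : q = 1 := by linarith
        rw [← h, this]
        linarith
    have hF := aux_analytic μ C hC hasymp c M hM B s hs hB U hU (fun z hz => hz)
    have hG := aux_analytic μ' C hC hasymp' c' M' hM' B s hs hB' U hU (fun z hz => hz)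
    have h0 : (((B + 1 : ℝ)) : ℂ) ∈ U := by
      simp only [hUdef, Set.mem_setOf_eq, Complex.ofReal_im, Complex.ofReal_re]
      linarith
    have hz : (-a + Complex.I * t : ℂ) ∈ U := by
      have h1 : s * (a + B) = t / 2 := by
        have : a + B ≠ 0 := by linarith
        rw [hsdef]
        field_simp
      simp [hUdef]
      linarith
    refine hF.eqOn_of_preconnected_of_frequently_eq hG hUc.isPreconnected h0 ?_ hz
    have hT : Filter.Tendsto (fun x : ℝ => (x : ℂ)) (nhdsWithin (B + 1) {B + 1}ᶜ)
        (nhdsWithin ((B + 1 : ℝ) : ℂ) {((B + 1 : ℝ) : ℂ)}ᶜ) := by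
      refine Complex.continuous_ofReal.continuousAt.continuousWithinAt.tendsto_nhdsWithin ?_
      intro x hx hx'
      exact hx (Complex.ofReal_injective hx')
    refine hT.frequently (Filter.Eventually.frequently ?_)
    have : ∀ᶠ x : ℝ in nhdsWithin (B + 1) {B + 1}ᶜ, B < x :=
      nhdsWithin_le_nhds (Ioi_mem_nhds (by linarith))
    filter_upwards [this] with x hx
    exact hreal x hx
  have hres : ∀ a : ℝ, 1 ≤ a + B → (∑' j : ℕ, if μ j = a then (c j : ℂ) else 0)
      = ∑' j : ℕ, if μ' j = a then (c' j : ℂ) else 0 := by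
    intro a ha
    refine tendsto_nhds_unique (aux_residue μ C hC hasymp c M hM a)
      ((aux_residue μ' C hC hasymp' c' M' hM' a).congr' ?_)
    filter_upwards [self_mem_nhdsWithin] with t ht
    rw [hline a ha t ht]
  have hval : ∀ (ν : ℕ → ℝ) (d : ℕ → ℝ), StrictMono ν → ∀ k,
      (∑' j : ℕ, if ν j = ν k then (d j : ℂ) else 0) = d k := by
    intro ν d hν k
    rw [tsum_eq_single k]
    · simp
    · intro j hj
      rw [if_neg (fun h => hj (hν.injective h))]
  have hzero : ∀ (ν : ℕ → ℝ) (d : ℕ → ℝ) (a : ℝ), a ∉ Set.range ν →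
      (∑' j : ℕ, if ν j = a then (d j : ℂ) else 0) = 0 := by
    intro ν d a h
    have : ∀ j, ν j ≠ a := fun j hj => h ⟨j, hj⟩
    simp [this]
  have hrange : Set.range μ = Set.range μ' := by
    apply Set.Subset.antisymm
    · rintro _ ⟨k, rfl⟩
      by_contra h
      have := hres (μ k) (hB k)
      rw [hval μ c hmono, hzero μ' c' _ h] at this
      exact (hpos k).ne' (by exact_mod_cast this)
    · rintro _ ⟨k, rfl⟩
      by_contra h
      have := hres (μ' k) (hB' k)
      rw [hval μ' c' hmono', hzero μ c _ h] at this
      exact (hpos' k).ne (by exact_mod_cast this)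
  have hμ : μ = μ' := (StrictMono.range_inj hmono hmono').1 hrange
  subst hμ
  intro j
  refine ⟨rfl, ?_⟩
  have := hres (μ j) (hB j)
  rw [hval μ c hmono, hval μ c' hmono] at this
  exact_mod_cast this
end

section
/- Let μ : ℕ → ℝ be a sequence of pairwise distinct reals and C > 0 a constant with |μⱼ − π²(j + 1/2)²| ≤ C for all j ∈ ℕ, and let c : ℕ → ℂ be a bounded sequence. Fix k ∈ ℕ with μₖ > 0 and set λₖ := √μₖ. Then (λ − iλₖ)·∑_{j=0}^∞ cⱼ/(λ² + μⱼ) converges to cₖ/(2iλₖ) as λ → iλₖ along points λ ∈ ℂ with λ² + μⱼ ≠ 0 for all j. -/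
open Real Complex Filter

/-- residue computation: with `λₖ = √μₖ`, the function
`(λ − iλₖ)·G(λ)` tends to `cₖ/(2iλₖ)` as `λ → iλₖ` through points away from
the poles of `G`. -/
theorem residue_at_pole
    (μ : ℕ → ℝ) (hinj : Function.Injective μ)
    (C : ℝ) (hC : 0 < C)
    (hasymp : ∀ j : ℕ, |μ j - π ^ 2 * ((j : ℝ) + 1 / 2) ^ 2| ≤ C)
    (c : ℕ → ℂ) (hbdd : ∃ M : ℝ, ∀ j : ℕ, ‖c j‖ ≤ M)
    (k : ℕ) (hk : 0 < μ k) :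
    Tendsto
      (fun l : ℂ => (l - Complex.I * (Real.sqrt (μ k) : ℂ)) *
        ∑' j : ℕ, c j / (l ^ 2 + (μ j : ℂ)))
      (nhdsWithin (Complex.I * (Real.sqrt (μ k) : ℂ))
        {l : ℂ | ∀ j : ℕ, l ^ 2 + (μ j : ℂ) ≠ 0})
      (nhds (c k / (2 * Complex.I * (Real.sqrt (μ k) : ℂ)))) := by
  obtain ⟨M, hM⟩ := hbdd
  have hM0 : 0 ≤ M := (norm_nonneg _).trans (hM 0)
  set p : ℂ := Complex.I * (Real.sqrt (μ k) : ℂ) with hp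
  have hs : 0 < Real.sqrt (μ k) := Real.sqrt_pos.mpr hk
  have hp0 : p ≠ 0 := by
    rw [hp]
    exact mul_ne_zero Complex.I_ne_zero (by exact_mod_cast hs.ne')
  have hp2 : p ^ 2 = -(μ k : ℂ) := by
    rw [hp, mul_pow, Complex.I_sq, ← Complex.ofReal_pow, Real.sq_sqrt hk.le]
    ring
  set S : Set ℂ := {l : ℂ | ∀ j : ℕ, l ^ 2 + (μ j : ℂ) ≠ 0} with hS
  let g : ℕ → ℂ := fun j => if j = k then c k / (2 * p) else 0
  have hterm : ∀ j, Tendsto (fun l : ℂ => (l - p) * (c j / (l ^ 2 + (μ j : ℂ))))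
      (nhdsWithin p S) (nhds (g j)) := by
    intro j
    by_cases hj : j = k
    · subst hj
      have h1 : Tendsto (fun l : ℂ => c j / (l + p)) (nhdsWithin p S) (nhds (c j / (2 * p))) := by
        have : ContinuousAt (fun l : ℂ => c j / (l + p)) p := by
          apply ContinuousAt.div continuousAt_const (by fun_prop)
          rw [← two_mul]
          exact mul_ne_zero two_ne_zero hp0
        have h := this.tendsto.mono_left (nhdsWithin_le_nhds (s := S))
        rwa [← two_mul] at h
      simp only [g, if_true]
      refine h1.congr' ?_
      filter_upwards [self_mem_nhdsWithin] with l hl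
      have h2 : l ^ 2 + (μ j : ℂ) = (l - p) * (l + p) := by
        linear_combination hp2
      have h3 := hl j
      rw [h2] at h3 ⊢
      have h4 := left_ne_zero_of_mul h3
      have h5 := right_ne_zero_of_mul h3
      field_simp
    · simp only [g, if_neg hj]
      have : ContinuousAt (fun l : ℂ => (l - p) * (c j / (l ^ 2 + (μ j : ℂ)))) p := by
        apply ContinuousAt.mul (by fun_prop)
        apply ContinuousAt.div continuousAt_const (by fun_prop)
        rw [hp2]
        intro h
        apply hj
        apply hinj
        have : (μ j : ℂ) = μ k := by linear_combination h
        exact_mod_cast this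
      have h := this.tendsto.mono_left (nhdsWithin_le_nhds (s := S))
      simpa using h
  obtain ⟨N, hN⟩ := exists_nat_ge (C + (‖p‖ + 1) ^ 2)
  let bound : ℕ → ℝ := fun j => (if j < N then ‖g j‖ + 1 else 0) + M * (1 / ((j : ℝ) + 1) ^ 2)
  have hbs : Summable bound := by
    apply Summable.add
    · apply summable_of_ne_finset_zero (s := Finset.range N)
      intro j hj
      rw [if_neg (by simpa using hj)]
    · apply Summable.mul_left
      have := (summable_nat_add_iff 1).mpr (Real.summable_one_div_nat_pow.mpr (one_lt_two))
      simpa using this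
  have hfin : ∀ᶠ l in nhdsWithin p S, ∀ j ∈ Finset.range N,
      ‖(l - p) * (c j / (l ^ 2 + (μ j : ℂ)))‖ ≤ ‖g j‖ + 1 := by
    rw [Filter.eventually_all_finset]
    intro j _
    exact ((hterm j).norm.eventually_lt_const (lt_add_one _)).mono fun _ h => h.le
  have hball : ∀ᶠ l in nhdsWithin p S, ‖l - p‖ < 1 := by
    apply eventually_nhdsWithin_of_eventually_nhds
    filter_upwards [Metric.ball_mem_nhds p one_pos] with l hl
    simpa [dist_eq_norm] using hl
  have hdom : ∀ᶠ l in nhdsWithin p S, ∀ j,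
      ‖(l - p) * (c j / (l ^ 2 + (μ j : ℂ)))‖ ≤ bound j := by
    filter_upwards [hfin, hball] with l h1 h2 j
    by_cases hj : j < N
    · simp only [bound, if_pos hj]
      have := h1 j (by simpa using hj)
      have : 0 ≤ M * (1 / ((j : ℝ) + 1) ^ 2) := by positivity
      linarith
    · simp only [bound, if_neg hj, zero_add]
      have hjN : (N : ℝ) ≤ j := by exact_mod_cast not_lt.mp hj
      have hj0 : (0 : ℝ) ≤ j := Nat.cast_nonneg j
      have hl : ‖l‖ ≤ ‖p‖ + 1 := by
        have := norm_add_le (l - p) p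
        rw [sub_add_cancel] at this
        linarith
      have hl2 : ‖l‖ ^ 2 ≤ (‖p‖ + 1) ^ 2 := by gcongr
      have ha := (abs_le.mp (hasymp j)).1
      have hpi : 9 * ((j : ℝ) + 1 / 2) ^ 2 ≤ π ^ 2 * ((j : ℝ) + 1 / 2) ^ 2 := by
        gcongr
        nlinarith [Real.pi_gt_three]
      have hden : ((j : ℝ) + 1) ^ 2 ≤ ‖l ^ 2 + (μ j : ℂ)‖ := by
        have h3 : ‖(μ j : ℂ)‖ ≤ ‖l ^ 2 + (μ j : ℂ)‖ + ‖l‖ ^ 2 := by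
          have := norm_sub_le (l ^ 2 + (μ j : ℂ)) (l ^ 2)
          rwa [add_sub_cancel_left, norm_pow] at this
        have h4 : μ j ≤ ‖(μ j : ℂ)‖ := by
          rw [Complex.norm_real]
          exact le_abs_self _
        nlinarith
      rw [norm_mul, norm_div]
      calc ‖l - p‖ * (‖c j‖ / ‖l ^ 2 + (μ j : ℂ)‖)
          ≤ 1 * (M / ((j : ℝ) + 1) ^ 2) := by
            gcongr
            exact hM j
        _ = M * (1 / ((j : ℝ) + 1) ^ 2) := by ring
  have hmain := tendsto_tsum_of_dominated_convergence hbs hterm hdom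
  have hg : ∑' j, g j = c k / (2 * Complex.I * (Real.sqrt (μ k) : ℂ)) := by
    rw [mul_assoc, ← hp]
    exact tsum_ite_eq k (fun _ => c k / (2 * p))
  rw [hg] at hmain
  simpa only [tsum_mul_left] using hmain
end

section
/- Let μ : ℕ → ℝ be a sequence with μⱼ > 0 for all j and |μⱼ − π²(j + 1/2)²| ≤ C for all j ∈ ℕ and some constant C > 0, and write νⱼ := π²(j + 1/2)². Then the quotient ∏_{j=0}^∞ (1 + y²/μⱼ) / ∏_{j=0}^∞ (1 + y²/νⱼ) tends to ∏_{j=0}^∞ νⱼ/μⱼ as y → +∞ (all three infinite products being convergent). -/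
open Real Filter

theorem gamma_aux (μ ν : ℕ → ℝ) (hpos : ∀ j, 0 < μ j) (hν : ∀ j, 0 < ν j)
    (hs : Summable (fun j => 1 / ν j)) (C : ℝ) (hC : 0 < C)
    (hasymp : ∀ j, |μ j - ν j| ≤ C) :
    (∀ y : ℝ, Multipliable (fun j : ℕ => 1 + y ^ 2 / μ j)) ∧
    (∀ y : ℝ, Multipliable (fun j : ℕ => 1 + y ^ 2 / ν j)) ∧
    Multipliable (fun j : ℕ => ν j / μ j) ∧
    Tendsto (fun y : ℝ => (∏' j : ℕ, (1 + y ^ 2 / μ j)) / ∏' j : ℕ, (1 + y ^ 2 / ν j))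
      atTop (nhds (∏' j : ℕ, ν j / μ j)) := by
  have hsμ : Summable (fun j => 1 / μ j) := by
    refine Summable.of_norm_bounded_eventually_nat (hs.mul_left 2) ?_
    have h0 := hs.tendsto_atTop_zero.eventually_lt_const
      (show (0 : ℝ) < 1 / (2 * C) by positivity)
    filter_upwards [h0] with j hj
    have h1 : 2 * C < ν j := (one_div_lt_one_div (hν j) (by positivity)).1 hj
    have h2 := (abs_le.1 (hasymp j)).1
    have h3 := hpos j
    have h4 := hν j
    rw [Real.norm_of_nonneg (by positivity), mul_one_div, div_le_div_iff₀ h3 h4]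
    linarith
  have mk : ∀ κ : ℕ → ℝ, Summable (fun j => 1 / κ j) → ∀ y : ℝ,
      Summable (fun j => y ^ 2 / κ j) := by
    intro κ hκ y
    exact (hκ.mul_left (y ^ 2)).congr fun j => by rw [mul_one_div]
  have hm1 : ∀ y : ℝ, Multipliable (fun j : ℕ => 1 + y ^ 2 / μ j) := fun y =>
    Real.multipliable_one_add_of_summable (mk μ hsμ y)
  have hm2 : ∀ y : ℝ, Multipliable (fun j : ℕ => 1 + y ^ 2 / ν j) := fun y =>
    Real.multipliable_one_add_of_summable (mk ν hs y)
  have hlim : ∀ j, ν j / μ j = 1 + (ν j - μ j) / μ j := fun j => by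
    have := (hpos j).ne'
    field_simp
    ring
  have hb : Summable (fun j => C * (1 / μ j)) := hsμ.mul_left C
  have hab : ∀ j, |ν j - μ j| ≤ C := fun j => by rw [abs_sub_comm]; exact hasymp j
  refine ⟨hm1, hm2, ?_, ?_⟩
  · simp only [hlim]
    refine Real.multipliable_one_add_of_summable (hb.of_norm_bounded fun j => ?_)
    rw [Real.norm_eq_abs, abs_div, abs_of_pos (hpos j), mul_one_div]
    exact div_le_div_of_nonneg_right (hab j) (hpos j).le
  · have hq : ∀ y : ℝ, (∏' j : ℕ, (1 + y ^ 2 / μ j)) / ∏' j : ℕ, (1 + y ^ 2 / ν j) =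
        ∏' j : ℕ, (1 + (ν j - μ j) / μ j * (y ^ 2 / (ν j + y ^ 2))) := by
      intro y
      rw [← Multipliable.tprod_div₀ (hm1 y) (hm2 y)]
      · refine tprod_congr fun j => ?_
        have h3 := hpos j
        have h4 := hν j
        have h5 : 0 < ν j + y ^ 2 := by positivity
        have h6 : 0 < 1 + y ^ 2 / ν j := by positivity
        field_simp
        ring
      · refine tprod_one_add_ne_zero_of_summable (fun j => ?_) (mk ν hs y).norm
        have h4 := hν j
        positivity
    simp only [hq, hlim]
    refine tendsto_tprod_one_add_of_dominated_convergence hb (fun j => ?_)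
      (Eventually.of_forall fun y j => ?_)
    · have h4 := hν j
      have ht : Tendsto (fun y : ℝ => ν j + y ^ 2) atTop atTop :=
        tendsto_atTop_add_const_left _ _ (tendsto_pow_atTop two_ne_zero)
      have h1 : Tendsto (fun y : ℝ => 1 - ν j / (ν j + y ^ 2)) atTop (nhds (1 - 0)) :=
        tendsto_const_nhds.sub (ht.const_div_atTop (ν j))
      have h2 := h1.const_mul ((ν j - μ j) / μ j)
      rw [sub_zero, mul_one] at h2
      refine h2.congr fun y => ?_
      have h5 : 0 < ν j + y ^ 2 := by positivity
      congr 1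
      field_simp
      ring
    · have h4 := hν j
      have h5 : 0 < ν j + y ^ 2 := by positivity
      have h6 : y ^ 2 / (ν j + y ^ 2) ≤ 1 := by
        rw [div_le_one h5]; linarith
      have h7 : 0 ≤ y ^ 2 / (ν j + y ^ 2) := by positivity
      rw [Real.norm_eq_abs, abs_mul, abs_of_nonneg h7, abs_div, abs_of_pos (hpos j), mul_one_div]
      have h8 := div_le_div_of_nonneg_right (hab j) (hpos j).le
      have h9 : 0 ≤ |ν j - μ j| / μ j := div_nonneg (abs_nonneg _) (hpos j).le
      nlinarith

/-- with `νⱼ = π²(j + 1/2)²`, the quotient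
`∏ⱼ(1 + y²/μⱼ) / ∏ⱼ(1 + y²/νⱼ)` tends to `∏ⱼ νⱼ/μⱼ` as `y → +∞`,
all three infinite products being convergent. -/
theorem gamma_identification_limit
    (μ : ℕ → ℝ) (hpos : ∀ j : ℕ, 0 < μ j)
    (C : ℝ) (hC : 0 < C)
    (hasymp : ∀ j : ℕ, |μ j - π ^ 2 * ((j : ℝ) + 1 / 2) ^ 2| ≤ C) :
    (∀ y : ℝ, Multipliable (fun j : ℕ => 1 + y ^ 2 / μ j)) ∧
    (∀ y : ℝ, Multipliable (fun j : ℕ => 1 + y ^ 2 / (π ^ 2 * ((j : ℝ) + 1 / 2) ^ 2))) ∧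
    Multipliable (fun j : ℕ => (π ^ 2 * ((j : ℝ) + 1 / 2) ^ 2) / μ j) ∧
    Tendsto
      (fun y : ℝ =>
        (∏' j : ℕ, (1 + y ^ 2 / μ j)) /
          ∏' j : ℕ, (1 + y ^ 2 / (π ^ 2 * ((j : ℝ) + 1 / 2) ^ 2)))
      atTop (nhds (∏' j : ℕ, (π ^ 2 * ((j : ℝ) + 1 / 2) ^ 2) / μ j)) := by
  refine gamma_aux μ (fun j => π ^ 2 * ((j : ℝ) + 1 / 2) ^ 2) hpos (fun j => by positivity) ?_
    C hC hasymp
  have h := ((Real.summable_one_div_nat_add_rpow (1 / 2) 2).2 (by norm_num)).mul_left (1 / π ^ 2)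
  refine h.congr fun j => ?_
  have hj : (0 : ℝ) < (j : ℝ) + 1 / 2 := by positivity
  rw [abs_of_pos hj, Real.rpow_two, one_div_mul_one_div]
end
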